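/- There exists a constant c₀ > 0, depending only on n and (u,v) but not on x₀ or R, such that for every ε > 0 there is R₀ > 0 with the following property: for every R ≥ R₀ and every x₀ ∈ {u = v}, there exists a vector e ∈ ℝⁿ with |e| ≥ c₀ such that ∫_{B₁} |∇u_κ − ∇v_κ − e|² dx ≤ ε². -/

import Mathlib

/-!
The proof replaces averages over balls by averages against the standard Gaussian measure `γ`: with
`f(x) = u(z + r x)`, `g(x) = v(z + r x)`, all quantities at centre `z` and scale `r` are integrals
against `γ`, and integration by parts has no boundary terms.

**Monotonicity.** The height `H = ∫ f² + g²`, the energy `E = ∫ |∇f|² + |∇g|² + r² f² g²` and the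
interaction `Φ = r² ∫ f² g²` satisfy Almgren's monotonicity of the frequency `E/H`, which linear
growth forces to be at most `1` (`EE_le_HH`), and a Weiss-type identity (`om_hasDerivAt`): the deficit
`(H - E)/r²` is nonnegative and decreases at the rate given by the defect of one-homogeneity
`r⁻² ∫ |x·∇f - f|² + |x·∇g - g|²` and by `Φ/r²`.

**Nondegeneracy.** A Bernstein estimate at the intrinsic scale of a point gives
`|∇u|² + |∇v|² ≤ C (u + v)⁴` (`grad_bound`). It permits truncating `u` and `v` to functions with
disjoint supports at a cost controlled by `Φ`, and it yields that `u` and `v` have comparable means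
around a point of `{u = v}` (`comp_gamma`). For disjointly supported functions the Gaussian
Friedland–Hayman inequality holds: the two Rayleigh quotients add up to at least `2` (`fh`). It is
derived from a second-order Poincaré inequality, proved with the Mehler semigroup, and from an explicit
inequality for affine functions. The resulting almost monotonicity of Alt–Caffarelli–Friedman type
shows that `∫ f²` and `∫ g²` are both comparable to `r²` beyond some scale; comparing large scales at
different centres makes the constants uniform over `{u = v}` (`uniform_bounds`).

**Flatness.** The upper bound on `H/r²` forces the deficit to tend to zero uniformly over `{u = v}`,
so each range `[R, 2R]` with `R` large contains a scale `r` at which both the homogeneity defect and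
`Φ/r²` are small (`good_scale`). At such a scale let `F`, `G` be the truncations of `f`, `g`, scaled by
`r⁻¹` and normalised to have mean one. Then `F - G` has mean zero and its Dirichlet energy almost equals
its variance, so the Poincaré inequality makes `∇F - ∇G` close to a constant vector `k`
(`near_gradient`). What remains is that the two normalising means agree. This follows from the
divergence-free stress–energy tensor: pairing it with the constant field `k` balances the squared means
of the two components (`near_stress`, `near_flat`). Hence `∇f - ∇g` is close to a multiple of `k`, with
length bounded below. Since the Gaussian density is bounded below on balls, this gives the estimate at
scale `R`.
-/

open MeasureTheory Metric Set
open scoped RealInnerProductSpace ENNReal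

/-- Euclidean space `ℝⁿ`. -/
abbrev Euc (n : ℕ) := EuclideanSpace ℝ (Fin n)

/-- The Laplacian `Δu` of a function `u : ℝⁿ → ℝ`. -/
noncomputable def lap {n : ℕ} (u : Euc n → ℝ) (x : Euc n) : ℝ :=
  ∑ i : Fin n,
    fderiv ℝ (fun y => fderiv ℝ u y (EuclideanSpace.single i 1)) x (EuclideanSpace.single i 1)

/-- The divergence `div Y = Σ_α ∂Y^α/∂x_α` of a vector field `Y`. -/
noncomputable def vdiv {n : ℕ} (Y : Euc n → Euc n) (x : Euc n) : ℝ :=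
  ∑ i : Fin n, fderiv ℝ Y x (EuclideanSpace.single i 1) i

/-- `DY(p,q)(x) = Σ_{α,β} (∂Y^α/∂x_β)(x) p_α q_β`. -/
noncomputable def DYbil {n : ℕ} (Y : Euc n → Euc n) (p q x : Euc n) : ℝ :=
  ∑ α : Fin n, ∑ β : Fin n,
    fderiv ℝ Y x (EuclideanSpace.single β 1) α * p α * q β

/-- The rescaled function `u_κ(x) = R⁻¹ u(x₀ + R x)` (with `κ = R⁴`). -/
noncomputable def resc {n : ℕ} (u : Euc n → ℝ) (x₀ : Euc n) (R : ℝ) (x : Euc n) : ℝ :=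
  R⁻¹ * u (x₀ + R • x)

/-! ### Functions of polynomial growth -/

/-- Continuous functions of at most polynomial growth. -/
@[fun_prop]
def PG {n : ℕ} (F : Euc n → ℝ) : Prop :=
  Continuous F ∧ ∃ C : ℝ, ∃ m : ℕ, ∀ x, |F x| ≤ C * (1 + ‖x‖) ^ m

namespace PG

variable {n : ℕ} {f g : Euc n → ℝ}

lemma continuous (hf : PG f) : Continuous f := hf.1

lemma exists_bound (hf : PG f) : ∃ C : ℝ, 0 ≤ C ∧ ∃ m : ℕ, ∀ x, |f x| ≤ C * (1 + ‖x‖) ^ m := by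
  obtain ⟨C, m, h⟩ := hf.2
  exact ⟨|C|, abs_nonneg _, m, fun x => (h x).trans (by gcongr; exact le_abs_self C)⟩

lemma of_le (hf : Continuous f) (hg : PG g) (h : ∀ x, |f x| ≤ g x) : PG f := by
  obtain ⟨C, m, hC⟩ := hg.2
  exact ⟨hf, C, m, fun x => (h x).trans ((le_abs_self _).trans (hC x))⟩

@[fun_prop] lemma const (c : ℝ) : PG (fun _ : Euc n => c) :=
  ⟨continuous_const, |c|, 0, fun x => by simp⟩

@[fun_prop] lemma norm : PG (fun x : Euc n => ‖x‖) :=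
  ⟨continuous_norm, 1, 1, fun x => by simp⟩

@[fun_prop] lemma mul (hf : PG f) (hg : PG g) : PG (fun x => f x * g x) := by
  obtain ⟨C, hC, m, h⟩ := hf.exists_bound
  obtain ⟨C', hC', m', h'⟩ := hg.exists_bound
  refine ⟨hf.1.mul hg.1, C * C', m + m', fun x => ?_⟩
  rw [abs_mul]
  calc |f x| * |g x| ≤ (C * (1 + ‖x‖) ^ m) * (C' * (1 + ‖x‖) ^ m') := by
        gcongr
        · exact h x
        · exact h' x
    _ = _ := by ring

@[fun_prop] lemma add (hf : PG f) (hg : PG g) : PG (fun x => f x + g x) := by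
  obtain ⟨C, hC, m, h⟩ := hf.exists_bound
  obtain ⟨C', hC', m', h'⟩ := hg.exists_bound
  refine ⟨hf.1.add hg.1, C + C', m + m', fun x => (abs_add_le _ _).trans ?_⟩
  have h1 : (1 : ℝ) ≤ 1 + ‖x‖ := by linarith [norm_nonneg x]
  calc |f x| + |g x| ≤ C * (1 + ‖x‖) ^ m + C' * (1 + ‖x‖) ^ m' := add_le_add (h x) (h' x)
    _ ≤ C * (1 + ‖x‖) ^ (m + m') + C' * (1 + ‖x‖) ^ (m + m') := by
        gcongr <;> first | exact h1 | omega
    _ = _ := by ring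

@[fun_prop] lemma neg (hf : PG f) : PG (fun x => - f x) := by
  simpa using (PG.const (-1)).mul hf

@[fun_prop] lemma sub (hf : PG f) (hg : PG g) : PG (fun x => f x - g x) := by
  simpa [sub_eq_add_neg] using hf.add hg.neg

@[fun_prop] lemma div_const (hf : PG f) (c : ℝ) : PG (fun x => f x / c) := by
  simpa [div_eq_mul_inv] using hf.mul (PG.const c⁻¹)

@[fun_prop] lemma pow (hf : PG f) (k : ℕ) : PG (fun x => f x ^ k) := by
  induction k with
  | zero => simpa using PG.const 1
  | succ k ih => simpa [pow_succ] using ih.mul hf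

@[fun_prop] lemma sum {ι : Type*} {s : Finset ι} {f : ι → Euc n → ℝ} (hf : ∀ i, PG (f i)) :
    PG (fun x => ∑ i ∈ s, f i x) := by
  classical
  induction s using Finset.induction_on with
  | empty => simpa using PG.const 0
  | insert a s ha ih => simpa [Finset.sum_insert ha] using (hf a).add ih

@[fun_prop] lemma abs (hf : PG f) : PG (fun x => |f x|) :=
  ⟨hf.1.abs, by simpa using hf.2⟩

@[fun_prop] lemma max (hf : PG f) (hg : PG g) : PG (fun x => max (f x) (g x)) :=
  of_le (hf.1.max hg.1) (hf.abs.add hg.abs) fun x => abs_max_le_max_abs_abs.trans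
    (max_le (by linarith [abs_nonneg (g x)]) (by linarith [abs_nonneg (f x)]))

@[fun_prop] lemma coord (i : Fin n) : PG (fun x : Euc n => x i) :=
  of_le (by fun_prop) PG.norm fun x => by simpa using PiLp.norm_apply_le x i

lemma comp_affine (hf : PG f) (z : Euc n) (r : ℝ) : PG (fun x => f (z + r • x)) := by
  obtain ⟨C, hC, m, h⟩ := hf.exists_bound
  have hf' := hf.1
  refine of_le (g := fun x => C * (1 + ‖z‖ + |r| * ‖x‖) ^ m) (by fun_prop) (by fun_prop) fun x => ?_
  refine (h _).trans ?_
  have : ‖z + r • x‖ ≤ ‖z‖ + |r| * ‖x‖ := by simpa [norm_smul] using norm_add_le z (r • x)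
  exact mul_le_mul_of_nonneg_left (pow_le_pow_left₀ (by positivity) (by linarith) m) hC

end PG

/-! ### The Gaussian measure -/

/-- The standard Gaussian density on `ℝⁿ`. -/
noncomputable def gd {n : ℕ} (x : Euc n) : ℝ :=
  (∫ y : Euc n, Real.exp (-(1 / 2) * ‖y‖ ^ 2))⁻¹ * Real.exp (-(1 / 2) * ‖x‖ ^ 2)

/-- The standard Gaussian measure on `ℝⁿ`, defined through its density. -/
noncomputable def gam (n : ℕ) : Measure (Euc n) :=
  volume.withDensity fun x => ENNReal.ofReal (gd x)

/-- Gaussian expectation. -/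
noncomputable def Ex {n : ℕ} (F : Euc n → ℝ) : ℝ := ∫ x, F x ∂gam n

section gauss

variable {n : ℕ}

lemma gauss_integral_pos {b : ℝ} (hb : 0 < b) : 0 < ∫ y : Euc n, Real.exp (-b * ‖y‖ ^ 2) := by
  rw [GaussianFourier.integral_rexp_neg_mul_sq_norm hb]
  positivity

lemma gauss_integrable {b : ℝ} (hb : 0 < b) :
    Integrable fun y : Euc n => Real.exp (-b * ‖y‖ ^ 2) :=
  .of_integral_ne_zero (gauss_integral_pos hb).ne'

lemma gd_pos (x : Euc n) : 0 < gd x :=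
  mul_pos (inv_pos.2 (gauss_integral_pos (by norm_num))) (Real.exp_pos _)

lemma gd_continuous : Continuous (gd : Euc n → ℝ) := by unfold gd; fun_prop

lemma integrable_gam_iff {F : Euc n → ℝ} :
    Integrable F (gam n) ↔ Integrable fun x => F x * gd x := by
  rw [gam, integrable_withDensity_iff gd_continuous.measurable.ennreal_ofReal (by simp)]
  simp [ENNReal.toReal_ofReal (gd_pos _).le]

lemma Ex_eq (F : Euc n → ℝ) : Ex F = ∫ x, F x * gd x := by
  have := integral_withDensity_eq_integral_smul (μ := (volume : Measure (Euc n)))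
    (f := fun x => (gd x).toNNReal) gd_continuous.measurable.real_toNNReal F
  rw [Ex, gam]
  refine this.trans (integral_congr_ae (.of_forall fun x => ?_))
  simp [NNReal.smul_def, (gd_pos x).le, mul_comm]

instance : IsProbabilityMeasure (gam n) := by
  refine ⟨?_⟩
  rw [gam, withDensity_apply _ .univ, Measure.restrict_univ, ← ofReal_integral_eq_lintegral_ofReal]
  · unfold gd
    rw [integral_const_mul, inv_mul_cancel₀ (gauss_integral_pos (by norm_num)).ne']
    simp
  · exact (gauss_integrable (by norm_num)).const_mul _
  · exact .of_forall fun x => (gd_pos x).le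

/-- Functions growing slower than `exp (c‖x‖²)`, `c < 1/2`, are integrable. -/
lemma integrable_exp {c : ℝ} (hc : c < 1 / 2) :
    Integrable (fun x : Euc n => Real.exp (c * ‖x‖ ^ 2)) (gam n) := by
  rw [integrable_gam_iff]
  have := (gauss_integrable (n := n) (b := 1 / 2 - c) (by linarith)).const_mul
    (∫ y : Euc n, Real.exp (-(1 / 2) * ‖y‖ ^ 2))⁻¹
  refine this.congr (.of_forall fun x => ?_)
  simp only [gd]
  rw [mul_left_comm, ← Real.exp_add]
  ring_nf

lemma poly_le_exp (m : ℕ) {c : ℝ} (hc : 0 < c) :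
    ∃ C : ℝ, 0 < C ∧ ∀ t : ℝ, 0 ≤ t → (1 + t) ^ m ≤ C * Real.exp (c * t ^ 2) := by
  refine ⟨m.factorial * Real.exp (1 + 1 / (4 * c)), by positivity, fun t ht => ?_⟩
  have h1 := Real.pow_div_factorial_le_exp (1 + t) (by positivity) m
  rw [div_le_iff₀ (by positivity)] at h1
  refine h1.trans ?_
  rw [mul_comm, mul_assoc, ← Real.exp_add]
  have : 0 ≤ (2 * c * t - 1) ^ 2 / (4 * c) := by positivity
  have h2 : (2 * c * t - 1) ^ 2 / (4 * c) = c * t ^ 2 - t + 1 / (4 * c) := by field_simp; ring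
  exact mul_le_mul_of_nonneg_left (Real.exp_le_exp.2 (by linarith)) (by positivity)

lemma PG.integrable {F : Euc n → ℝ} (hF : PG F) : Integrable F (gam n) := by
  obtain ⟨C, hC, m, h⟩ := hF.exists_bound
  obtain ⟨C', hC', h'⟩ := poly_le_exp m (c := 1 / 4) (by norm_num)
  refine ((integrable_exp (n := n) (c := 1 / 4) (by norm_num)).const_mul (C * C')).mono'
    hF.1.aestronglyMeasurable (.of_forall fun x => (h x).trans ?_)
  rw [mul_assoc]
  gcongr
  exact h' _ (norm_nonneg _)

lemma Ex_add {f g : Euc n → ℝ} (hf : PG f) (hg : PG g) :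
    Ex (fun x => f x + g x) = Ex f + Ex g := integral_add hf.integrable hg.integrable

lemma Ex_sub {f g : Euc n → ℝ} (hf : PG f) (hg : PG g) :
    Ex (fun x => f x - g x) = Ex f - Ex g := integral_sub hf.integrable hg.integrable

lemma Ex_const_mul (c : ℝ) (f : Euc n → ℝ) : Ex (fun x => c * f x) = c * Ex f :=
  integral_const_mul _ _

lemma Ex_neg (f : Euc n → ℝ) : Ex (fun x => - f x) = - Ex f := integral_neg _

lemma Ex_const (c : ℝ) : Ex (fun _ : Euc n => c) = c := by simp [Ex]

lemma Ex_sum {ι : Type*} {s : Finset ι} {f : ι → Euc n → ℝ} (hf : ∀ i, PG (f i)) :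
    Ex (fun x => ∑ i ∈ s, f i x) = ∑ i ∈ s, Ex (f i) :=
  integral_finsetSum _ fun i _ => (hf i).integrable

lemma Ex_mono {f g : Euc n → ℝ} (hf : PG f) (hg : PG g) (h : ∀ x, f x ≤ g x) : Ex f ≤ Ex g :=
  integral_mono hf.integrable hg.integrable h

lemma Ex_nonneg {f : Euc n → ℝ} (h : ∀ x, 0 ≤ f x) : 0 ≤ Ex f := integral_nonneg h

lemma Ex_pos {f : Euc n → ℝ} (hf : PG f) (h : ∀ x, 0 < f x) : 0 < Ex f := by
  refine (integral_pos_iff_support_of_nonneg (fun x => (h x).le) hf.integrable).2 ?_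
  have : Function.support f = univ := by ext x; simp [(h x).ne']
  rw [this]; simp

lemma Ex_abs_le {f g : Euc n → ℝ} (hf : PG f) (hg : PG g) (h : ∀ x, |f x| ≤ g x) :
    |Ex f| ≤ Ex g :=
  (abs_integral_le_integral_abs).trans (Ex_mono hf.abs hg h)

/-- Cauchy–Schwarz inequality. -/
lemma Ex_cs {f g : Euc n → ℝ} (hf : PG f) (hg : PG g) :
    (Ex fun x => f x * g x) ^ 2 ≤ (Ex fun x => f x ^ 2) * Ex fun x => g x ^ 2 := by
  have key : ∀ t : ℝ, 0 ≤ (Ex fun x => g x ^ 2) * (t * t) + (-2 * Ex fun x => f x * g x) * t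
      + Ex fun x => f x ^ 2 := by
    intro t
    have h0 : 0 ≤ Ex fun x => (f x - t * g x) ^ 2 := Ex_nonneg fun x => sq_nonneg _
    have : (Ex fun x => (f x - t * g x) ^ 2)
        = Ex (fun x => (t * t) * g x ^ 2 + (-2 * t) * (f x * g x) + f x ^ 2) := by
      congr 1; ext x; ring
    rw [this, Ex_add (by fun_prop) (by fun_prop), Ex_add (by fun_prop) (by fun_prop),
      Ex_const_mul, Ex_const_mul] at h0
    linarith
  have := discrim_le_zero key
  unfold discrim at this
  nlinarith

lemma Ex_sq_le {f : Euc n → ℝ} (hf : PG f) : (Ex f) ^ 2 ≤ Ex fun x => f x ^ 2 := by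
  have := Ex_cs hf (PG.const 1)
  simpa [Ex_const] using this

lemma Ex_abs_mul_le {f g : Euc n → ℝ} (hf : PG f) (hg : PG g) :
    |Ex fun x => f x * g x| ≤ √(Ex fun x => f x ^ 2) * √(Ex fun x => g x ^ 2) := by
  rw [← Real.sqrt_mul (Ex_nonneg fun x => sq_nonneg _)]
  exact Real.abs_le_sqrt (Ex_cs hf hg)

end gauss

/-! ### Partial derivatives and Gaussian integration by parts -/

/-- The partial derivative `∂ᵢ f`. -/
noncomputable def D {n : ℕ} (i : Fin n) (f : Euc n → ℝ) (x : Euc n) : ℝ :=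
  fderiv ℝ f x (EuclideanSpace.single i 1)

/-- Smooth real functions on `ℝⁿ`. -/
abbrev Sm {n : ℕ} (f : Euc n → ℝ) : Prop := ContDiff ℝ (⊤ : ℕ∞) f

section calculus

variable {n : ℕ} {f g : Euc n → ℝ} {i : Fin n}

lemma lap_eq (f : Euc n → ℝ) (x : Euc n) : lap f x = ∑ i, D i (D i f) x := rfl

lemma D_smooth (hf : Sm f) (i : Fin n) : Sm (D i f) :=
  (hf.fderiv_right (m := (⊤ : ℕ∞)) (by norm_cast)).clm_apply contDiff_const

lemma D_continuous (hf : ContDiff ℝ 1 f) (i : Fin n) : Continuous (D i f) :=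
  (hf.continuous_fderiv (by norm_num)).clm_apply continuous_const

lemma Sm.diff (hf : Sm f) : Differentiable ℝ f := hf.differentiable (by simp)

lemma Sm.one (hf : Sm f) : ContDiff ℝ 1 f := hf.of_le (by norm_cast)

lemma D_add (hf : Differentiable ℝ f) (hg : Differentiable ℝ g) :
    D i (fun x => f x + g x) = fun x => D i f x + D i g x := by
  ext x; simp [D, fderiv_fun_add (hf x) (hg x)]

lemma D_sub (hf : Differentiable ℝ f) (hg : Differentiable ℝ g) :
    D i (fun x => f x - g x) = fun x => D i f x - D i g x := by
  ext x; simp [D, fderiv_fun_sub (hf x) (hg x)]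

lemma D_mul (hf : Differentiable ℝ f) (hg : Differentiable ℝ g) :
    D i (fun x => f x * g x) = fun x => D i f x * g x + f x * D i g x := by
  ext x; simp [D, fderiv_fun_mul (hf x) (hg x)]; ring

lemma D_const_mul (c : ℝ) (hf : Differentiable ℝ f) :
    D i (fun x => c * f x) = fun x => c * D i f x := by
  ext x; simp [D, fderiv_const_mul (hf x)]

lemma D_const (c : ℝ) : D i (fun _ : Euc n => c) = fun _ => 0 := by ext x; simp [D]

lemma D_sq (hf : Differentiable ℝ f) : D i (fun x => f x ^ 2) = fun x => 2 * (f x * D i f x) := by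
  simp only [pow_two, D_mul hf hf]; ext x; ring

lemma D_sum {ι : Type*} {s : Finset ι} {f : ι → Euc n → ℝ} (hf : ∀ j, Differentiable ℝ (f j)) :
    D i (fun x => ∑ j ∈ s, f j x) = fun x => ∑ j ∈ s, D i (f j) x := by
  ext x; simp [D, fderiv_fun_sum fun j _ => hf j x]

lemma D_coord (j : Fin n) : D i (fun x : Euc n => x j) = fun _ => if j = i then 1 else 0 := by
  ext x
  have : (fun x : Euc n => x j) = EuclideanSpace.proj (𝕜 := ℝ) j := rfl
  rw [D, this, ContinuousLinearMap.fderiv]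
  simp

lemma D_comp {φ : ℝ → ℝ} (hφ : Differentiable ℝ φ) (hf : Differentiable ℝ f) :
    D i (fun x => φ (f x)) = fun x => deriv φ (f x) * D i f x := by
  ext x
  have := ((hφ (f x)).hasDerivAt.comp_hasFDerivAt x (hf x).hasFDerivAt).fderiv
  simp only [Function.comp_def] at this
  simp [D, this]

lemma hasFDerivAt_affine (z : Euc n) (r : ℝ) (x : Euc n) :
    HasFDerivAt (fun x : Euc n => z + r • x) (r • ContinuousLinearMap.id ℝ (Euc n)) x :=
  ((hasFDerivAt_id x).const_smul r).const_add z

lemma D_affine (z : Euc n) (r : ℝ) (hf : Differentiable ℝ f) :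
    D i (fun x => f (z + r • x)) = fun x => r * D i f (z + r • x) := by
  ext x
  have := ((hf (z + r • x)).hasFDerivAt.comp x (hasFDerivAt_affine z r x)).fderiv
  simp only [Function.comp_def] at this
  simp [D, this]

lemma fderiv_eq_sum (f : Euc n → ℝ) (x w : Euc n) : fderiv ℝ f x w = ∑ i, w i * D i f x := by
  conv_lhs => rw [← (EuclideanSpace.basisFun (Fin n) ℝ).sum_repr w]
  simp [D]

lemma norm_sq_eq (x : Euc n) : ‖x‖ ^ 2 = ∑ i, x i ^ 2 := by
  simp [EuclideanSpace.norm_sq_eq]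

lemma norm_sq_diff : Differentiable ℝ fun x : Euc n => ‖x‖ ^ 2 :=
  (contDiff_norm_sq ℝ (n := 1)).differentiable (by norm_num)

lemma D_norm_sq : D i (fun x : Euc n => ‖x‖ ^ 2) = fun x => 2 * x i := by
  simp only [norm_sq_eq]
  rw [D_sum (fun j => by fun_prop)]
  ext x
  have : ∀ j : Fin n, D i (fun x : Euc n => x j ^ 2) = fun x => 2 * (x j * if j = i then 1 else 0) := by
    intro j
    rw [D_sq (by fun_prop), D_coord]
  simp [this]

lemma D_gd : D i (gd : Euc n → ℝ) = fun x => - (x i * gd x) := by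
  ext x
  unfold gd
  have h := norm_sq_diff (n := n)
  rw [D_const_mul _ (h.const_mul _).exp, D_comp (φ := Real.exp) (by fun_prop) (h.const_mul _),
    D_const_mul _ h, D_norm_sq]
  simp only [Real.deriv_exp]
  ring

lemma gd_diff : Differentiable ℝ (gd : Euc n → ℝ) := by
  unfold gd; exact (norm_sq_diff.const_mul _).exp.const_mul _

lemma ibp_compact (hf : ContDiff ℝ 1 f) (hc : HasCompactSupport f) (i : Fin n) :
    Ex (D i f) = Ex fun x => x i * f x := by
  have hd : HasCompactSupport (D i f) := hc.fderiv_apply ℝ _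
  have hD := D_continuous hf i
  have hf' := hf.continuous
  have hg := gd_continuous (n := n)
  have hgd : ∀ x : Euc n, fderiv ℝ gd x (EuclideanSpace.single i 1) = - (x i * gd x) :=
    fun x => congrFun (D_gd (i := i)) x
  have := integral_mul_fderiv_eq_neg_fderiv_mul_of_integrable
    (μ := (volume : Measure (Euc n))) (f := f) (g := gd)
    (v := EuclideanSpace.single i 1)
    ((hD.mul hg).integrable_of_hasCompactSupport hd.mul_right)
    (by
      simp only [hgd]
      exact Continuous.integrable_of_hasCompactSupport (by fun_prop) hc.mul_right)
    ((hf'.mul hg).integrable_of_hasCompactSupport hc.mul_right)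
    (fun x _ => hf.differentiable (by norm_num) x) (fun x _ => gd_diff x)
  simp only [hgd] at this
  rw [Ex_eq, Ex_eq]
  simp only [mul_neg, integral_neg] at this
  rw [neg_inj] at this
  rw [show (fun x => D i f x * gd x) = fun x => fderiv ℝ f x (EuclideanSpace.single i 1) * gd x
    from rfl, ← this]
  congr 1; ext x; ring

/-- A sequence of smooth compactly supported cutoffs increasing to `1` with gradients `O(1/k)`. -/
lemma exists_cutoff (n : ℕ) : ∃ χ : ℕ → Euc n → ℝ, ∃ M : ℝ, 0 ≤ M ∧
    (∀ k, Sm (χ k)) ∧ (∀ k, HasCompactSupport (χ k)) ∧ (∀ k x, 0 ≤ χ k x ∧ χ k x ≤ 1) ∧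
    (∀ k i x, |D i (χ k) x| ≤ M / (k + 1)) ∧
    (∀ x, Filter.Tendsto (fun k => χ k x) Filter.atTop (nhds 1)) := by
  let b : ContDiffBump (0 : Euc n) := ⟨1, 2, one_pos, one_lt_two⟩
  have hb : Sm (b : Euc n → ℝ) := b.contDiff
  have hbd : ∀ i : Fin n, ∃ M, ∀ x, ‖D i b x‖ ≤ M := fun i =>
    (D_continuous hb.one i).bounded_above_of_compact_support (b.hasCompactSupport.fderiv_apply ℝ _)
  choose M hM using hbd
  have hM0 : ∀ i, 0 ≤ M i := fun i => (norm_nonneg _).trans (hM i 0)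
  have hD : ∀ (k : ℕ) (i : Fin n), D i (fun x => b ((0 : Euc n) + ((k : ℝ) + 1)⁻¹ • x)) =
      fun x => ((k : ℝ) + 1)⁻¹ * D i b ((0 : Euc n) + ((k : ℝ) + 1)⁻¹ • x) :=
    fun k i => D_affine 0 _ hb.diff
  refine ⟨fun k x => b ((0 : Euc n) + ((k : ℝ) + 1)⁻¹ • x), ∑ i, M i, Finset.sum_nonneg fun i _ => hM0 i, ?_, ?_, ?_, ?_, ?_⟩
  · intro k; exact hb.comp (by fun_prop)
  · intro k
    simp only [zero_add]
    exact b.hasCompactSupport.comp_smul (by positivity)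
  · exact fun k x => ⟨b.nonneg, b.le_one⟩
  · intro k i x
    rw [hD k i]
    simp only [abs_mul]
    rw [abs_of_pos (by positivity), div_eq_inv_mul]
    gcongr
    exact (hM i _).trans (Finset.single_le_sum (fun j _ => hM0 j) (Finset.mem_univ i))
  · intro x
    have h0 : Filter.Tendsto (fun k : ℕ => (0 : Euc n) + ((k : ℝ) + 1)⁻¹ • x) Filter.atTop
        (nhds (0 : Euc n)) := by
      have : Filter.Tendsto (fun k : ℕ => ((k : ℝ) + 1)⁻¹) Filter.atTop (nhds 0) := by
        simpa using tendsto_one_div_add_atTop_nhds_zero_nat (𝕜 := ℝ)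
      simpa using this.smul_const x
    have := (hb.continuous.tendsto 0).comp h0
    rwa [b.one_of_mem_closedBall (by simp [b])] at this

/-- Divergence theorem for the Gaussian measure: only the total divergence of the field, not its
individual derivatives, has to be controlled at infinity. -/
lemma ibp_div {h : Fin n → Euc n → ℝ} (hs : ∀ i, ContDiff ℝ 1 (h i)) (hp : ∀ i, PG (h i))
    (hd : PG fun x => ∑ i, D i (h i) x) :
    (Ex fun x => ∑ i, D i (h i) x) = Ex fun x => ∑ i, x i * h i x := by
  obtain ⟨χ, M, hM, hχ, hχc, hχ1, hχd, hχl⟩ := exists_cutoff n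
  have hid : ∀ k, (Ex fun x => χ k x * ∑ i, D i (h i) x) + (Ex fun x => ∑ i, D i (χ k) x * h i x)
      = Ex fun x => χ k x * ∑ i, x i * h i x := by
    intro k
    have hPχ : PG (χ k) := PG.of_le (hχ k).continuous (PG.const 1)
      fun x => by rw [abs_of_nonneg (hχ1 k x).1]; exact (hχ1 k x).2
    have hPd : ∀ i, PG (D i (χ k)) := fun i => PG.of_le (D_continuous (hχ k).one i)
      (PG.const (M / (k + 1))) (hχd k i)
    have h1 : ∀ i, D i (fun x => χ k x * h i x) = fun x => D i (χ k) x * h i x + χ k x * D i (h i) x :=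
      fun i => D_mul (hχ k).diff ((hs i).differentiable (by norm_num))
    have hcs : ∀ i, HasCompactSupport fun x => χ k x * h i x := fun i => (hχc k).mul_right
    have hcd : ∀ i, ContDiff ℝ 1 fun x => χ k x * h i x := fun i => (hχ k).one.mul (hs i)
    have hPD : ∀ i, PG (D i (fun x => χ k x * h i x)) := fun i => by
      obtain ⟨B, hB⟩ := (D_continuous (hcd i) i).bounded_above_of_compact_support
        ((hcs i).fderiv_apply ℝ _)
      exact PG.of_le (D_continuous (hcd i) i) (PG.const B) hB
    rw [← Ex_add (by fun_prop) (by fun_prop)]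
    trans Ex fun x => ∑ i, D i (fun x => χ k x * h i x) x
    · congr 1; ext x
      simp only [h1, Finset.sum_add_distrib, Finset.mul_sum]
      ring
    · rw [Ex_sum hPD]
      simp_rw [fun i => ibp_compact (hcd i) (hcs i) i]
      rw [← Ex_sum (f := fun i x => x i * (χ k x * h i x)) (by intro i; fun_prop)]
      congr 1; ext x
      simp only [Finset.mul_sum]
      exact Finset.sum_congr rfl fun i _ => by ring
  have hPs : PG fun x => ∑ i, x i * h i x := by fun_prop
  have lim : ∀ F : Euc n → ℝ, PG F → Filter.Tendsto (fun k => Ex fun x => χ k x * F x)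
      Filter.atTop (nhds (Ex F)) := by
    intro F hF
    refine tendsto_integral_of_dominated_convergence (fun x => |F x|)
      (fun k => ((hχ k).continuous.mul hF.1).aestronglyMeasurable) hF.abs.integrable
      (fun k => .of_forall fun x => ?_) (.of_forall fun x => ?_)
    · simp only [norm_mul, Real.norm_eq_abs]
      rw [abs_of_nonneg (hχ1 k x).1]
      exact mul_le_of_le_one_left (abs_nonneg _) (hχ1 k x).2
    · simpa using (hχl x).mul_const (F x)
  have lim0 : Filter.Tendsto (fun k => Ex fun x => ∑ i, D i (χ k) x * h i x)
      Filter.atTop (nhds 0) := by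
    have hb : PG fun x => ∑ i, |h i x| := by fun_prop
    refine squeeze_zero_norm (a := fun k : ℕ => M * (1 / ((k : ℝ) + 1)) * Ex fun x => ∑ i, |h i x|)
      (fun k => ?_) ?_
    · have hPd : ∀ i, PG (D i (χ k)) := fun i => PG.of_le (D_continuous (hχ k).one i)
        (PG.const (M / (k + 1))) (hχd k i)
      rw [← Ex_const_mul]
      refine Ex_abs_le (by fun_prop) (by fun_prop) fun x => ?_
      rw [Finset.mul_sum]
      refine (Finset.abs_sum_le_sum_abs _ _).trans (Finset.sum_le_sum fun i _ => ?_)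
      rw [abs_mul, mul_one_div]
      gcongr
      exact hχd k i x
    · simpa using (tendsto_one_div_add_atTop_nhds_zero_nat (𝕜 := ℝ)).const_mul M |>.mul_const
        (Ex fun x => ∑ i, |h i x|)
  have := (lim _ hd).add lim0
  simp only [hid, add_zero] at this
  exact tendsto_nhds_unique this (lim _ hPs)

/-- Gaussian integration by parts `∫ ∂ᵢf dγ = ∫ xᵢ f dγ`. -/
lemma ibp (hf : ContDiff ℝ 1 f) (hp : PG f) (i : Fin n) (hd : PG (D i f)) :
    Ex (D i f) = Ex fun x => x i * f x := by
  have h0 : ∀ j, D j (if j = i then f else fun _ => 0) = fun x => if j = i then D i f x else 0 := by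
    intro j; split_ifs with h
    · subst h; rfl
    · simp [D_const]
  have := ibp_div (n := n) (h := fun j => if j = i then f else fun _ => 0)
    (fun j => by split_ifs <;> fun_prop) (fun j => by split_ifs <;> fun_prop)
    (by simp only [h0]; simpa using hd)
  simp only [h0] at this
  simp only [Finset.sum_ite_eq', Finset.mem_univ, if_true] at this
  rw [show D i f = fun x => D i f x from rfl, this]
  congr 1; ext x
  rw [Finset.sum_eq_single i] <;> simp +contextual

end calculus

/-! ### Gaussian averages at varying centre and scale -/

/-- The Gaussian average of `F` with centre `z` and scale `r`. -/
noncomputable def Mn {n : ℕ} (F : Euc n → ℝ) (z : Euc n) (r : ℝ) : ℝ := Ex fun x => F (z + r • x)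

section averages

variable {n : ℕ}

/-- Differentiation under the Gaussian expectation, with a dominating function of polynomial growth. -/
lemma hasDerivAt_Ex {G G' : ℝ → Euc n → ℝ} {t₀ ε : ℝ} (hε : 0 < ε) {B : Euc n → ℝ} (hB : PG B)
    (hG : ∀ t, PG (G t)) (hG' : Continuous (G' t₀))
    (hb : ∀ t, |t - t₀| < ε → ∀ x, |G' t x| ≤ B x)
    (hd : ∀ t, |t - t₀| < ε → ∀ x, HasDerivAt (fun s => G s x) (G' t x) t) :
    HasDerivAt (fun t => Ex (G t)) (Ex (G' t₀)) t₀ :=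
  (hasDerivAt_integral_of_dominated_loc_of_deriv_le (μ := gam n) (bound := B)
    (ball_mem_nhds t₀ hε)
    (.of_forall fun t => (hG t).1.aestronglyMeasurable) (hG t₀).integrable
    hG'.aestronglyMeasurable
    (.of_forall fun x t ht => hb t (by simpa [Real.dist_eq] using ht) x) hB.integrable
    (.of_forall fun x t ht => hd t (by simpa [Real.dist_eq] using ht) x)).2

lemma hasDerivAt_line {F : Euc n → ℝ} (hF : Differentiable ℝ F) (z x : Euc n) (t : ℝ) :
    HasDerivAt (fun s : ℝ => F (z + s • x)) (∑ i, x i * D i F (z + t • x)) t := by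
  rw [← fderiv_eq_sum]
  have h1 : HasDerivAt (fun s : ℝ => z + s • x) x t := by
    simpa using ((hasDerivAt_id t).smul_const x).const_add z
  exact (hF _).hasFDerivAt.comp_hasDerivAt t h1

lemma Mn_hasDerivAt' {F : Euc n → ℝ} (hF : ContDiff ℝ 1 F) (hp : PG F) (hd : ∀ i, PG (D i F))
    (z : Euc n) (r : ℝ) :
    HasDerivAt (Mn F z) (Ex fun x => ∑ i, x i * D i F (z + r • x)) r := by
  choose C hC m hCm using fun i => (hd i).exists_bound
  refine hasDerivAt_Ex (G := fun t x => F (z + t • x))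
    (G' := fun t x => ∑ i, x i * D i F (z + t • x)) one_pos
    (B := fun x => ∑ i, ‖x‖ * (C i * (1 + ‖z‖ + (|r| + 1) * ‖x‖) ^ m i))
    (by fun_prop) (fun t => hp.comp_affine z t) ?_ ?_ ?_
  · have : ∀ i, Continuous (D i F) := fun i => (hd i).1
    fun_prop
  · intro t ht x
    refine (Finset.abs_sum_le_sum_abs _ _).trans (Finset.sum_le_sum fun i _ => ?_)
    rw [abs_mul]
    have h1 : |x i| ≤ ‖x‖ := by simpa using PiLp.norm_apply_le x i
    have h2 : |t| ≤ |r| + 1 := by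
      have := abs_sub_abs_le_abs_sub t r; linarith
    have h3 : ‖z + t • x‖ ≤ ‖z‖ + (|r| + 1) * ‖x‖ := by
      refine (norm_add_le z (t • x)).trans ?_
      rw [norm_smul, Real.norm_eq_abs]; gcongr
    refine mul_le_mul h1 ((hCm i _).trans ?_) (abs_nonneg _) (norm_nonneg _)
    exact mul_le_mul_of_nonneg_left (pow_le_pow_left₀ (by positivity) (by linarith) _) (hC i)
  · exact fun t _ x => hasDerivAt_line (hF.differentiable (by norm_num)) z x t

lemma Sm.affine {F : Euc n → ℝ} (hF : Sm F) (z : Euc n) (r : ℝ) : Sm fun x => F (z + r • x) :=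
  hF.comp (by fun_prop)

/-- The Gaussian averages satisfy the heat equation in the variable `r²/2`. -/
lemma Mn_hasDerivAt {F : Euc n → ℝ} (hF : Sm F) (hp : PG F) (hd : ∀ i, PG (D i F))
    (hl : PG (lap F)) (z : Euc n) (r : ℝ) :
    HasDerivAt (Mn F z) (r * Mn (lap F) z r) r := by
  convert Mn_hasDerivAt' hF.one hp hd z r using 1
  have hD : ∀ i : Fin n, D i (fun x => D i F (z + r • x)) = fun x => r * D i (D i F) (z + r • x) :=
    fun i => D_affine z r (D_smooth hF i).diff
  have hs : (fun x => ∑ i, D i (fun x => D i F (z + r • x)) x) = fun x => r * lap F (z + r • x) := by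
    ext x; simp only [hD, lap_eq, Finset.mul_sum]
  have := ibp_div (h := fun i x => D i F (z + r • x)) (fun i => ((D_smooth hF i).affine z r).one)
    (fun i => (hd i).comp_affine z r) (by rw [hs]; exact (PG.const r).mul (hl.comp_affine z r))
  rw [hs] at this
  rw [← this, Ex_const_mul, Mn]

lemma Mn_zero (F : Euc n → ℝ) (z : Euc n) : Mn F z 0 = F z := by simp [Mn, Ex_const]

lemma Mn_mono {F : Euc n → ℝ} (hF : Sm F) (hp : PG F) (hd : ∀ i, PG (D i F))
    (hl : PG (lap F)) (hsub : ∀ x, 0 ≤ lap F x) (z : Euc n) {r s : ℝ} (hr : 0 ≤ r) (hrs : r ≤ s) :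
    Mn F z r ≤ Mn F z s := by
  have hder := Mn_hasDerivAt hF hp hd hl z
  have : MonotoneOn (Mn F z) (Ici 0) := by
    refine monotoneOn_of_deriv_nonneg (convex_Ici 0)
      (fun t _ => (hder t).continuousAt.continuousWithinAt)
      (fun t _ => (hder t).differentiableAt.differentiableWithinAt) fun t ht => ?_
    rw [(hder t).deriv]
    rw [interior_Ici] at ht
    exact mul_nonneg (le_of_lt ht) (Ex_nonneg fun x => hsub _)
  exact this hr (hr.trans hrs) hrs

lemma le_Mn {F : Euc n → ℝ} (hF : Sm F) (hp : PG F) (hd : ∀ i, PG (D i F))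
    (hl : PG (lap F)) (hsub : ∀ x, 0 ≤ lap F x) (z : Euc n) {r : ℝ} (hr : 0 ≤ r) :
    F z ≤ Mn F z r := by
  simpa [Mn_zero] using Mn_mono hF hp hd hl hsub z le_rfl hr

/-- Comparison of the Gaussian kernel with centre `ξ` and scale `1` to the centred one with
scale `3`. -/
lemma Ex_shift_le {F : Euc n → ℝ} (hF : PG F) (h0 : ∀ x, 0 ≤ F x) (ξ : Euc n) :
    (Ex fun x => F (ξ + x)) ≤ 3 ^ n * Real.exp (‖ξ‖ ^ 2 / 16) * Ex fun x => F ((3 : ℝ) • x) := by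
  have hP : PG fun x : Euc n => F ((3 : ℝ) • x) := by simpa using hF.comp_affine 0 3
  have h1 : (∫ x, F (ξ + x) * gd x) = ∫ x, F x * gd (x - ξ) := by
    rw [← integral_add_right_eq_self (μ := volume) (fun x => F x * gd (x - ξ)) ξ]
    simp [add_comm]
  have h2 := Measure.integral_comp_smul (volume : Measure (Euc n)) (fun x => F x * gd (x - ξ)) 3
  have hpos : (0 : ℝ) < 3 ^ n := by positivity
  have h3 : (∫ x, F x * gd (x - ξ)) = 3 ^ n * ∫ x : Euc n, F ((3 : ℝ) • x) * gd ((3 : ℝ) • x - ξ) := by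
    rw [h2]
    simp [abs_of_pos, smul_eq_mul]
  have hI := integrable_gam_iff.1 hP.integrable
  have hle : ∀ x : Euc n, gd ((3 : ℝ) • x - ξ) ≤ Real.exp (‖ξ‖ ^ 2 / 16) * gd x := by
    intro x
    unfold gd
    rw [mul_left_comm, ← Real.exp_add]
    refine mul_le_mul_of_nonneg_left (Real.exp_le_exp.2 ?_)
      (inv_nonneg.2 (gauss_integral_pos (by norm_num)).le)
    have e1 : ‖(3 : ℝ) • x - ξ‖ ^ 2 = 9 * ‖x‖ ^ 2 - 6 * ⟪x, ξ⟫ + ‖ξ‖ ^ 2 := by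
      rw [norm_sub_sq_real, norm_smul, inner_smul_left]; simp; ring
    have e2 : ‖(2 : ℝ) • x - (3 / 4 : ℝ) • ξ‖ ^ 2 = 4 * ‖x‖ ^ 2 - 3 * ⟪x, ξ⟫ + 9 / 16 * ‖ξ‖ ^ 2 := by
      rw [norm_sub_sq_real, norm_smul, norm_smul, inner_smul_left, inner_smul_right]
      norm_num; ring
    have e3 := sq_nonneg ‖(2 : ℝ) • x - (3 / 4 : ℝ) • ξ‖
    rw [e2] at e3
    rw [e1]
    linarith
  rw [Ex_eq, Ex_eq, h1, h3, mul_assoc]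
  refine mul_le_mul_of_nonneg_left ?_ hpos.le
  rw [← integral_const_mul]
  refine integral_mono_of_nonneg (.of_forall fun x => mul_nonneg (h0 _) (gd_pos _).le)
    (hI.const_mul _) (.of_forall fun x => ?_)
  dsimp only
  rw [mul_left_comm]
  exact mul_le_mul_of_nonneg_left (hle x) (h0 _)

lemma Mn_shift_le {F : Euc n → ℝ} (hF : PG F) (h0 : ∀ x, 0 ≤ F x) (z ξ : Euc n) (r : ℝ) :
    Mn F (z + r • ξ) r ≤ 3 ^ n * Real.exp (‖ξ‖ ^ 2 / 16) * Mn F z (3 * r) := by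
  have := Ex_shift_le (hF.comp_affine z r) (fun x => h0 _) ξ
  simpa [Mn, smul_add, add_assoc, smul_smul, mul_comm] using this

/-- Pointwise bound of a nonnegative subharmonic function by its Gaussian averages at other centres. -/
lemma sub_le_Mn {F : Euc n → ℝ} (hF : Sm F) (hp : PG F) (hd : ∀ i, PG (D i F))
    (hl : PG (lap F)) (hsub : ∀ x, 0 ≤ lap F x) (h0 : ∀ x, 0 ≤ F x) (z ξ : Euc n) {r : ℝ}
    (hr : 0 ≤ r) : F (z + r • ξ) ≤ 3 ^ n * Real.exp (‖ξ‖ ^ 2 / 16) * Mn F z (3 * r) :=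
  (le_Mn hF hp hd hl hsub _ hr).trans (Mn_shift_le hp h0 z ξ r)

/-- Reverse Hölder inequality for nonnegative subharmonic functions. -/
lemma reverse_holder (n k : ℕ) (hk : k < 8) : ∃ C : ℝ, 0 < C ∧ ∀ F : Euc n → ℝ, Sm F → PG F →
    (∀ i, PG (D i F)) → PG (lap F) → (∀ x, 0 ≤ lap F x) → (∀ x, 0 ≤ F x) →
    ∀ (z : Euc n) (r : ℝ), 0 ≤ r → Mn (fun x => F x ^ k) z r ≤ C * (Mn F z (3 * r)) ^ k := by
  have hk' : (k : ℝ) / 16 < 1 / 2 := by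
    have : (k : ℝ) < 8 := by exact_mod_cast hk
    linarith
  have hI := integrable_exp (n := n) hk'
  refine ⟨(3 ^ n) ^ k * (∫ x : Euc n, Real.exp (k / 16 * ‖x‖ ^ 2) ∂gam n) + 1, ?_, ?_⟩
  · have : 0 ≤ ∫ x : Euc n, Real.exp (k / 16 * ‖x‖ ^ 2) ∂gam n :=
      integral_nonneg fun x => (Real.exp_pos _).le
    positivity
  · intro F hF hp hd hl hsub h0 z r hr
    have hM : 0 ≤ Mn F z (3 * r) := Ex_nonneg fun x => h0 _
    have : Mn (fun x => F x ^ k) z r ≤ ∫ x : Euc n,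
        ((3 ^ n) ^ k * (Mn F z (3 * r)) ^ k) * Real.exp (k / 16 * ‖x‖ ^ 2) ∂gam n := by
      refine integral_mono ((hp.comp_affine z r).pow k).integrable (hI.const_mul _) fun x => ?_
      have := pow_le_pow_left₀ (h0 _) (sub_le_Mn hF hp hd hl hsub h0 z x hr) k
      refine this.trans (le_of_eq ?_)
      rw [mul_pow, mul_pow, ← Real.exp_nat_mul]
      ring_nf
    rw [integral_const_mul] at this
    nlinarith [pow_nonneg hM k]

/-- Scale derivative for merely continuous functions: the derivative falls on the kernel. -/
lemma Mn_hasDerivAt_kernel_zero {K : Euc n → ℝ} (hK : PG K) {r : ℝ} (hr : 0 < r) :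
    HasDerivAt (fun s : ℝ => Ex fun x => K (s • x)) (r⁻¹ * Ex fun x => K (r • x) * (‖x‖ ^ 2 - n)) r := by
  have hsub : ∀ (F : Euc n → ℝ) (s : ℝ), 0 < s →
      (Ex fun x => F (s • x)) = (s ^ n)⁻¹ * ∫ y : Euc n, F y * gd (s⁻¹ • y) := by
    intro F s hs
    have := Measure.integral_comp_smul (volume : Measure (Euc n)) (fun y => F y * gd (s⁻¹ • y)) s
    rw [Ex_eq]
    simp only [inv_smul_smul₀ hs.ne', finrank_euclideanSpace, Fintype.card_fin, smul_eq_mul] at this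
    rw [this, abs_of_pos (by positivity)]
  have hInt : ∀ (F : Euc n → ℝ) (s : ℝ), 0 < s → PG F → Integrable fun y => F y * gd (s⁻¹ • y) := by
    intro F s hs hF
    have h1 : PG fun x : Euc n => F (s • x) := by simpa using hF.comp_affine 0 s
    have h2 := (integrable_gam_iff.1 h1.integrable).comp_smul (R := s⁻¹) (by positivity)
    simpa [smul_inv_smul₀ hs.ne'] using h2
  have hgc := gd_continuous (n := n)
  have hKc := hK.1
  have hder : ∀ (y : Euc n) (s : ℝ), 0 < s →
      HasDerivAt (fun s : ℝ => K y * gd (s⁻¹ • y))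
        (K y * ‖y‖ ^ 2 * gd (s⁻¹ • y) * (s⁻¹) ^ 3) s := by
    intro y s hs
    have h1 : HasDerivAt (fun s : ℝ => -(1 / 2) * (s⁻¹ ^ 2 * ‖y‖ ^ 2)) (s⁻¹ ^ 3 * ‖y‖ ^ 2) s := by
      have := (((hasDerivAt_inv hs.ne').fun_pow 2).mul_const (‖y‖ ^ 2)).const_mul (-(1 / 2))
      refine this.congr_deriv ?_
      push_cast
      field_simp
    have h2 : ∀ s : ℝ, gd (s⁻¹ • y) = (∫ y : Euc n, Real.exp (-(1 / 2) * ‖y‖ ^ 2))⁻¹ *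
        Real.exp (-(1 / 2) * (s⁻¹ ^ 2 * ‖y‖ ^ 2)) := by
      intro s; simp [gd, norm_smul, mul_pow]
    have h3 := ((h1.exp).const_mul (∫ y : Euc n, Real.exp (-(1 / 2) * ‖y‖ ^ 2))⁻¹).const_mul
      (K y)
    simp only [← h2] at h3
    refine h3.congr_deriv ?_
    rw [h2]; ring
  have hKd : HasDerivAt (fun s : ℝ => ∫ y : Euc n, K y * gd (s⁻¹ • y))
      (∫ y : Euc n, K y * ‖y‖ ^ 2 * gd (r⁻¹ • y) * (r⁻¹) ^ 3) r := by
    refine (hasDerivAt_integral_of_dominated_loc_of_deriv_le (μ := (volume : Measure (Euc n)))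
      (F := fun s y => K y * gd (s⁻¹ • y))
      (F' := fun s y => K y * ‖y‖ ^ 2 * gd (s⁻¹ • y) * (s⁻¹) ^ 3)
      (bound := fun y => (|K y| * ‖y‖ ^ 2 * (2 * r⁻¹) ^ 3) * gd ((2 * r)⁻¹ • y))
      (s := Ioo (r / 2) (2 * r))
      (Ioo_mem_nhds (by linarith) (by linarith)) (.of_forall fun s => ?_) (hInt _ r hr hK) ?_ ?_
      (hInt _ _ (by positivity) (by fun_prop)) ?_).2
    · exact Continuous.aestronglyMeasurable (by fun_prop)
    · exact Continuous.aestronglyMeasurable (by fun_prop)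
    · refine .of_forall fun y s hs => ?_
      have hs0 : 0 < s := by linarith [hs.1]
      have e1 : s⁻¹ ≤ 2 * r⁻¹ := by
        rw [← div_eq_mul_inv, inv_le_comm₀ hs0 (by positivity), inv_div]; exact hs.1.le
      have e2 : gd (s⁻¹ • y) ≤ gd ((2 * r)⁻¹ • y) := by
        unfold gd
        refine mul_le_mul_of_nonneg_left (Real.exp_le_exp.2 ?_)
          (inv_nonneg.2 (gauss_integral_pos (by norm_num)).le)
        rw [norm_smul, norm_smul, Real.norm_eq_abs, Real.norm_eq_abs, abs_of_pos (by positivity),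
          abs_of_pos (by positivity)]
        have : (2 * r)⁻¹ ≤ s⁻¹ := by gcongr; exact hs.2.le
        have : ((2 * r)⁻¹ * ‖y‖) ^ 2 ≤ (s⁻¹ * ‖y‖) ^ 2 := by gcongr
        linarith
      rw [Real.norm_eq_abs, abs_mul, abs_mul, abs_mul, abs_of_pos (gd_pos _),
        abs_of_nonneg (sq_nonneg ‖y‖), abs_of_pos (by positivity : 0 < s⁻¹ ^ 3)]
      calc |K y| * ‖y‖ ^ 2 * gd (s⁻¹ • y) * s⁻¹ ^ 3
          ≤ |K y| * ‖y‖ ^ 2 * gd ((2 * r)⁻¹ • y) * (2 * r⁻¹) ^ 3 := by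
            gcongr
            exact mul_nonneg (by positivity) (gd_pos _).le
        _ = _ := by ring
    · exact .of_forall fun y s hs => hder y s (by linarith [hs.1])
  have hpow : HasDerivAt (fun s : ℝ => (s ^ n)⁻¹) (-(n : ℝ) * r⁻¹ * (r ^ n)⁻¹) r := by
    have := (hasDerivAt_pow n r).fun_inv (by positivity)
    refine this.congr_deriv ?_
    rcases n with _ | m
    · simp
    · field_simp
      simp [pow_succ]
  have hprod := hpow.mul hKd
  have heq : (fun s : ℝ => Ex fun x => K (s • x)) =ᶠ[nhds r] fun s : ℝ => (s ^ n)⁻¹ * ∫ y : Euc n, K y * gd (s⁻¹ • y) := by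
    filter_upwards [lt_mem_nhds hr] with s hs
    exact hsub K s hs
  refine (hprod.congr_of_eventuallyEq heq).congr_deriv ?_
  have e1 : (Ex fun x => K (r • x) * (‖x‖ ^ 2 - n)) =
      (Ex fun x => (fun y => r⁻¹ ^ 2 * (K y * ‖y‖ ^ 2)) (r • x)) - n * Ex fun x => K (r • x) := by
    rw [← Ex_const_mul, ← Ex_sub]
    · congr 1; ext x
      simp only [norm_smul, Real.norm_eq_abs, mul_pow, sq_abs]
      field_simp
    · have : PG fun y => r⁻¹ ^ 2 * (K y * ‖y‖ ^ 2) := by fun_prop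
      simpa using this.comp_affine 0 r
    · have := hK.comp_affine 0 r
      simp only [zero_add] at this
      exact (PG.const (n : ℝ)).mul this
  rw [e1, hsub K r hr, hsub (fun y => r⁻¹ ^ 2 * (K y * ‖y‖ ^ 2)) r hr]
  have e2 : (∫ y : Euc n, K y * ‖y‖ ^ 2 * gd (r⁻¹ • y) * (r⁻¹) ^ 3) =
      r⁻¹ * ∫ y : Euc n, r⁻¹ ^ 2 * (K y * ‖y‖ ^ 2) * gd (r⁻¹ • y) := by
    rw [← integral_const_mul]; congr 1; ext y; ring
  rw [e2]
  ring

lemma Mn_hasDerivAt_kernel {G : Euc n → ℝ} (hG : PG G) (z : Euc n) {r : ℝ} (hr : 0 < r) :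
    HasDerivAt (Mn G z) (r⁻¹ * Ex fun x => G (z + r • x) * (‖x‖ ^ 2 - n)) r := by
  have h : PG fun y => G (z + y) := by simpa using hG.comp_affine z 1
  exact Mn_hasDerivAt_kernel_zero h hr

end averages

/-! ### Laplacian calculus and the second derivative test -/

section laplacian

variable {n : ℕ} {f g : Euc n → ℝ}

lemma D_comm (hf : Sm f) (i j : Fin n) : D i (D j f) = D j (D i f) := by
  have h2 : ∀ (i j : Fin n) (x : Euc n), D i (D j f) x =
      fderiv ℝ (fderiv ℝ f) x (EuclideanSpace.single i 1) (EuclideanSpace.single j 1) := by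
    intro i j x
    have hd : DifferentiableAt ℝ (fderiv ℝ f) x :=
      (hf.fderiv_right (m := (⊤ : ℕ∞)) (by norm_cast)).differentiable (by simp) x
    have : D j f = fun y => fderiv ℝ f y (EuclideanSpace.single j 1) := rfl
    rw [this, D, fderiv_clm_apply hd (by fun_prop)]
    simp
  ext x
  rw [h2, h2]
  exact (hf.contDiffAt.isSymmSndFDerivAt (by simp; norm_cast)) _ _

lemma lap_smooth (hf : Sm f) : Sm (lap f) := by
  have : lap f = fun x => ∑ i, D i (D i f) x := rfl
  rw [this]
  exact ContDiff.sum fun i _ => D_smooth (D_smooth hf i) i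

lemma D_lap (hf : Sm f) (j : Fin n) : D j (lap f) = lap (D j f) := by
  have : lap f = fun x => ∑ i, D i (D i f) x := rfl
  rw [this, D_sum fun i => (D_smooth (D_smooth hf i) i).diff]
  ext x
  rw [lap_eq]
  refine Finset.sum_congr rfl fun i _ => ?_
  rw [D_comm (D_smooth hf i) j i, D_comm hf j i]

lemma lap_add (hf : Sm f) (hg : Sm g) : lap (fun x => f x + g x) = fun x => lap f x + lap g x := by
  ext x
  simp only [lap_eq]
  rw [← Finset.sum_add_distrib]
  refine Finset.sum_congr rfl fun i _ => ?_
  rw [D_add hf.diff hg.diff, D_add (D_smooth hf i).diff (D_smooth hg i).diff]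

lemma lap_const_mul (c : ℝ) (hf : Sm f) : lap (fun x => c * f x) = fun x => c * lap f x := by
  ext x
  simp only [lap_eq]
  rw [Finset.mul_sum]
  refine Finset.sum_congr rfl fun i _ => ?_
  rw [D_const_mul c hf.diff, D_const_mul c (D_smooth hf i).diff]

lemma lap_mul (hf : Sm f) (hg : Sm g) : lap (fun x => f x * g x) =
    fun x => f x * lap g x + 2 * ∑ i, D i f x * D i g x + g x * lap f x := by
  ext x
  simp only [lap_eq, Finset.mul_sum]
  rw [← Finset.sum_add_distrib, ← Finset.sum_add_distrib]
  refine Finset.sum_congr rfl fun i _ => ?_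
  have h1 := (D_smooth hf i).diff
  have h2 := (D_smooth hg i).diff
  rw [D_mul hf.diff hg.diff, D_add (h1.fun_mul hg.diff) (hf.diff.fun_mul h2), D_mul h1 hg.diff,
    D_mul hf.diff h2]
  ring

lemma lap_sq (hf : Sm f) : lap (fun x => f x ^ 2) =
    fun x => 2 * (f x * lap f x + ∑ i, D i f x ^ 2) := by
  simp only [pow_two, lap_mul hf hf]
  ext x; ring

lemma lap_sum {ι : Type*} {s : Finset ι} {f : ι → Euc n → ℝ} (hf : ∀ j, Sm (f j)) :
    lap (fun x => ∑ j ∈ s, f j x) = fun x => ∑ j ∈ s, lap (f j) x := by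
  ext x
  simp only [lap_eq]
  rw [Finset.sum_comm]
  refine Finset.sum_congr rfl fun i _ => ?_
  rw [D_sum fun j => (hf j).diff, D_sum fun j => (D_smooth (hf j) i).diff]

lemma lap_affine (z : Euc n) (r : ℝ) (hf : Sm f) :
    lap (fun x => f (z + r • x)) = fun x => r ^ 2 * lap f (z + r • x) := by
  ext x
  simp only [lap_eq, Finset.mul_sum]
  refine Finset.sum_congr rfl fun i _ => ?_
  rw [D_affine z r hf.diff, D_const_mul r ((D_smooth hf i).affine z r).diff,
    D_affine z r (D_smooth hf i).diff]
  ring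

lemma deriv_deriv_nonpos {φ : ℝ → ℝ} {t : ℝ} (hφ : ContDiff ℝ 2 φ) (h : IsLocalMax φ t) :
    deriv (deriv φ) t ≤ 0 := by
  by_contra! hc
  have hmin := isLocalMin_of_deriv_deriv_pos hc h.deriv_eq_zero hφ.continuous.continuousAt
  have heq : φ =ᶠ[nhds t] fun _ => φ t := by
    filter_upwards [h, hmin] with s h1 h2 using le_antisymm h1 h2
  have := (heq.deriv).deriv_eq
  simp at this
  linarith

lemma lap_nonpos_of_isLocalMax (hf : Sm f) {p : Euc n} (h : IsLocalMax f p) : lap f p ≤ 0 := by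
  rw [lap_eq]
  refine Finset.sum_nonpos fun i _ => ?_
  set e : Euc n := EuclideanSpace.single i 1
  have h1 : ∀ (F : Euc n → ℝ), Sm F → deriv (fun t : ℝ => F (p + t • e)) =
      fun t => D i F (p + t • e) := by
    intro F hF
    ext t
    have hl : HasDerivAt (fun s : ℝ => p + s • e) e t := by
      simpa using ((hasDerivAt_id t).smul_const e).const_add p
    exact ((hF.diff _).hasFDerivAt.comp_hasDerivAt t hl).deriv


  have hc : ContDiff ℝ 2 fun t : ℝ => f (p + t • e) :=
    (hf.of_le (by norm_cast)).comp (by fun_prop)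
  have hm : IsLocalMax (fun t : ℝ => f (p + t • e)) 0 := by
    have : Filter.Tendsto (fun t : ℝ => p + t • e) (nhds 0) (nhds p) := by
      have : Continuous fun t : ℝ => p + t • e := by fun_prop
      simpa using this.tendsto 0
    have h' := this.eventually h
    filter_upwards [h'] with t ht
    simpa using ht
  have := deriv_deriv_nonpos hc hm
  rw [h1 f hf, h1 _ (D_smooth hf i)] at this
  simpa using this

/-- Interior gradient estimate of Bernstein type for the system `Δf = κ f g²`, `Δg = κ g f²`. -/
lemma grad_estimate {κ B : ℝ} (hκ : 0 ≤ κ) (hf : Sm f) (hg : Sm g)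
    (hf0 : ∀ x, 0 ≤ f x) (hg0 : ∀ x, 0 ≤ g x)
    (hlf : ∀ x, lap f x = κ * (f x * g x ^ 2)) (hlg : ∀ x, lap g x = κ * (g x * f x ^ 2))
    (hB : ∀ x ∈ closedBall (0 : Euc n) 1, f x ≤ B ∧ g x ≤ B) :
    (∑ i, D i f 0 ^ 2) + ∑ i, D i g 0 ^ 2 ≤ 2 * (2 * κ * B ^ 2 + 17 + 2 * n) * B ^ 2 := by
  have hDf := D_smooth hf
  have hDg := D_smooth hg
  set S : Euc n → ℝ := fun x => ∑ j, (D j f x ^ 2 + D j g x ^ 2) with hS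
  have hSs : Sm S := ContDiff.sum fun j _ => ((hDf j).pow 2).add ((hDg j).pow 2)
  have hS0 : ∀ x, 0 ≤ S x := fun x => Finset.sum_nonneg fun j _ => by positivity
  set η : Euc n → ℝ := fun x => 1 - ‖x‖ ^ 2 with hη
  have hηs : Sm η := contDiff_const.sub (contDiff_norm_sq ℝ)
  have hDη : ∀ i, D i η = fun x => -(2 * x i) := by
    intro i; rw [hη, D_sub (by fun_prop) norm_sq_diff, D_const, D_norm_sq]; simp
  have hlη : ∀ x, lap η x = -(2 * n) := by
    intro x
    rw [lap_eq]
    have : ∀ i : Fin n, D i (D i η) = fun _ => -2 := by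
      intro i
      rw [hDη i, show (fun x : Euc n => -(2 * x i)) = fun x => (-2) * x i by ext; ring,
        D_const_mul _ (by fun_prop), D_coord]
      simp
    simp [this]; ring
  set Λ : ℝ := 2 * κ * B ^ 2 + 17 + 2 * n with hΛ
  have hΛ0 : 0 < Λ := by positivity
  set w : Euc n → ℝ := fun x => η x ^ 2 * S x + Λ * (f x ^ 2 + g x ^ 2) with hw
  have hws : Sm w := ((hηs.pow 2).mul hSs).add (contDiff_const.mul ((hf.pow 2).add (hg.pow 2)))
  -- the differential inequality satisfied by `S`
  have hlS : ∀ x, lap S x = 2 * (∑ j, ∑ i, (D i (D j f) x ^ 2 + D i (D j g) x ^ 2)) +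
      2 * κ * ∑ j, (g x ^ 2 * D j f x ^ 2 + 4 * (f x * g x) * (D j f x * D j g x)
        + f x ^ 2 * D j g x ^ 2) := by
    intro x
    rw [hS, lap_sum fun j => ((hDf j).pow 2).add ((hDg j).pow 2), Finset.mul_sum, Finset.mul_sum,
      ← Finset.sum_add_distrib]
    refine Finset.sum_congr rfl fun j _ => ?_
    rw [lap_add ((hDf j).pow 2) ((hDg j).pow 2), lap_sq (hDf j), lap_sq (hDg j), ← D_lap hf,
      ← D_lap hg, funext hlf, funext hlg, D_const_mul κ (Sm.diff (hf.mul (hg.pow 2))),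
      D_const_mul κ (Sm.diff (hg.mul (hf.pow 2))), D_mul hf.diff (Sm.diff (hg.pow 2)),
      D_mul hg.diff (Sm.diff (hf.pow 2)), D_sq hf.diff, D_sq hg.diff, Finset.sum_add_distrib]
    ring
  have hDS : ∀ i x, D i S x = 2 * ∑ j, (D j f x * D i (D j f) x + D j g x * D i (D j g) x) := by
    intro i x
    rw [hS, D_sum fun j => Sm.diff (((hDf j).pow 2).add ((hDg j).pow 2)), Finset.mul_sum]
    refine Finset.sum_congr rfl fun j _ => ?_
    rw [D_add (Sm.diff ((hDf j).pow 2)) (Sm.diff ((hDg j).pow 2)), D_sq (hDf j).diff, D_sq (hDg j).diff]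
    ring
  have hlw : ∀ x ∈ closedBall (0 : Euc n) 1, 2 * S x ≤ lap w x := by
    intro x hx
    have hx1 : ‖x‖ ≤ 1 := by simpa using hx
    have hη0 : 0 ≤ η x := by simp only [hη]; nlinarith [norm_nonneg x]
    have hη1 : η x ≤ 1 := by simp only [hη]; nlinarith [norm_nonneg x]
    have e1 : lap w x = (η x ^ 2 * lap S x + 2 * ∑ i, (2 * (η x * D i η x)) * D i S x +
        S x * (2 * (η x * lap η x + ∑ i, D i η x ^ 2))) +
        Λ * (2 * (f x * lap f x + ∑ i, D i f x ^ 2) + 2 * (g x * lap g x + ∑ i, D i g x ^ 2)) := by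
      rw [hw, lap_add ((hηs.pow 2).mul hSs) (contDiff_const.mul ((hf.pow 2).add (hg.pow 2))),
        lap_const_mul _ ((hf.pow 2).add (hg.pow 2)), lap_add (hf.pow 2) (hg.pow 2), lap_sq hf,
        lap_sq hg, lap_mul (hηs.pow 2) hSs, lap_sq hηs]
      simp only [D_sq hηs.diff]
    have eS : S x = ∑ i, D i f x ^ 2 + ∑ i, D i g x ^ 2 := by simp [hS, Finset.sum_add_distrib]
    have hn1 : ∑ i, D i η x ^ 2 = 4 * ‖x‖ ^ 2 := by
      rw [norm_sq_eq, Finset.mul_sum]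
      exact Finset.sum_congr rfl fun i _ => by rw [hDη]; ring
    have cross : -(2 * (η x ^ 2 * ∑ j, ∑ i, (D i (D j f) x ^ 2 + D i (D j g) x ^ 2))
        + 8 * (4 * ‖x‖ ^ 2) * S x) ≤ 2 * ∑ i, (2 * (η x * D i η x)) * D i S x := by
      have key : ∀ i, -(2 * (η x ^ 2 * ∑ j, (D i (D j f) x ^ 2 + D i (D j g) x ^ 2))
          + 8 * D i η x ^ 2 * S x) ≤ 2 * ((2 * (η x * D i η x)) * D i S x) := by
        intro i
        rw [hDS]
        simp only [hS, Finset.mul_sum]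
        rw [← Finset.sum_add_distrib, ← Finset.sum_neg_distrib]
        refine Finset.sum_le_sum fun j _ => ?_
        nlinarith [sq_nonneg (η x * D i (D j f) x + 2 * D i η x * D j f x),
          sq_nonneg (η x * D i (D j g) x + 2 * D i η x * D j g x)]
      have := Finset.sum_le_sum fun i (_ : i ∈ Finset.univ) => key i
      rw [← Finset.mul_sum, Finset.sum_neg_distrib, Finset.sum_add_distrib, ← Finset.mul_sum,
        ← Finset.mul_sum, ← Finset.sum_mul, ← Finset.mul_sum, hn1, Finset.sum_comm] at this
      exact this
    have hfB := (hB x hx).1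
    have hgB := (hB x hx).2
    have hfg : f x * g x ≤ B ^ 2 := by
      rw [pow_two]; exact mul_le_mul hfB hgB (hg0 x) ((hf0 x).trans hfB)
    have hκS : -(2 * B ^ 2 * S x) ≤ ∑ j, (g x ^ 2 * D j f x ^ 2 +
        4 * (f x * g x) * (D j f x * D j g x) + f x ^ 2 * D j g x ^ 2) := by
      rw [hS, Finset.mul_sum, ← Finset.sum_neg_distrib]
      refine Finset.sum_le_sum fun j _ => ?_
      have h1 : -(f x * g x) * (D j f x ^ 2 + D j g x ^ 2) ≤ 2 * (f x * g x) * (D j f x * D j g x) := by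
        nlinarith [mul_nonneg (mul_nonneg (hf0 x) (hg0 x)) (sq_nonneg (D j f x + D j g x))]
      have h2 : (f x * g x) * (D j f x ^ 2 + D j g x ^ 2) ≤ B ^ 2 * (D j f x ^ 2 + D j g x ^ 2) := by
        gcongr
      have h3 : 0 ≤ g x ^ 2 * D j f x ^ 2 + f x ^ 2 * D j g x ^ 2 := by positivity
      nlinarith
    have hη2 : η x ^ 2 ≤ 1 := by nlinarith
    have k1 : η x ^ 2 * (2 * κ * ∑ j, (g x ^ 2 * D j f x ^ 2 +
        4 * (f x * g x) * (D j f x * D j g x) + f x ^ 2 * D j g x ^ 2)) ≥ -(4 * κ * B ^ 2 * S x) := by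
      have := mul_le_mul_of_nonneg_left hκS (by positivity : 0 ≤ η x ^ 2 * (2 * κ))
      have h4 : η x ^ 2 * (4 * κ * B ^ 2 * S x) ≤ 1 * (4 * κ * B ^ 2 * S x) :=
        mul_le_mul_of_nonneg_right hη2 (by have := hS0 x; positivity)
      linarith
    have k2 : ‖x‖ ^ 2 * S x ≤ 1 * S x := mul_le_mul_of_nonneg_right (by nlinarith [norm_nonneg x]) (hS0 x)
    have k3 : η x * (n * S x) ≤ 1 * (n * S x) :=
      mul_le_mul_of_nonneg_right hη1 (by have := hS0 x; positivity)
    have k4 : 0 ≤ f x * lap f x := mul_nonneg (hf0 x) (by rw [hlf]; have := hf0 x; positivity)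
    have k5 : 0 ≤ g x * lap g x := mul_nonneg (hg0 x) (by rw [hlg]; have := hg0 x; positivity)
    have k6 := mul_nonneg hΛ0.le k4
    have k7 := mul_nonneg hΛ0.le k5
    have k8 : 0 ≤ ‖x‖ ^ 2 * S x := mul_nonneg (by positivity) (hS0 x)
    rw [e1, hlS, hlη, hn1]
    have k9 : Λ * S x = (2 * κ * B ^ 2 + 17 + 2 * n) * S x := by rw [hΛ]
    rw [eS] at *
    linarith
  obtain ⟨p, hp, hmax⟩ := (isCompact_closedBall (0 : Euc n) 1).exists_isMaxOn
    ⟨0, by simp⟩ hws.continuous.continuousOn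
  have hwp : w p ≤ 2 * Λ * B ^ 2 := by
    have hS' : η p ^ 2 * S p ≤ 0 := by
      by_cases hpb : ‖p‖ < 1
      · have hl : IsLocalMax w p := hmax.isLocalMax
          (Filter.mem_of_superset (isOpen_ball.mem_nhds (by simpa using hpb : p ∈ ball (0 : Euc n) 1))
            ball_subset_closedBall)
        have := lap_nonpos_of_isLocalMax hws hl
        have h2 := hlw p hp
        have h3 : S p = 0 := le_antisymm (by linarith) (hS0 p)
        simp [h3]
      · have : ‖p‖ = 1 := le_antisymm (by simpa using hp) (not_lt.1 hpb)
        simp [hη, this]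
    have h1 := (hB p hp).1
    have h2 := (hB p hp).2
    have h3 : f p ^ 2 ≤ B ^ 2 := pow_le_pow_left₀ (hf0 p) h1 2
    have h4 : g p ^ 2 ≤ B ^ 2 := pow_le_pow_left₀ (hg0 p) h2 2
    have : Λ * (f p ^ 2 + g p ^ 2) ≤ Λ * (B ^ 2 + B ^ 2) := by gcongr
    simp only [hw]
    linarith
  have h0 : w 0 ≤ w p := hmax (by simp)
  have h1 : S 0 ≤ w 0 := by
    simp only [hw, hη]
    have : 0 ≤ Λ * (f 0 ^ 2 + g 0 ^ 2) := by positivity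
    simpa using this
  have h2 : S 0 = (∑ i, D i f 0 ^ 2) + ∑ i, D i g 0 ^ 2 := by simp [hS, Finset.sum_add_distrib]
  linarith

end laplacian

/-! ### The system and its fixed-scale integral identities -/

/-- The squared length `|∇f|²` of the gradient. -/
noncomputable def nG {n : ℕ} (f : Euc n → ℝ) (x : Euc n) : ℝ := ∑ i, D i f x ^ 2

/-- The radial derivative `x · ∇f(x)`. -/
noncomputable def xD {n : ℕ} (f : Euc n → ℝ) (x : Euc n) : ℝ := ∑ i, x i * D i f x

/-- Positive smooth solutions of `Δf = κ f g²`, `Δg = κ g f²`, growing together with their first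
derivatives at most polynomially. -/
structure Sol {n : ℕ} (κ : ℝ) (f g : Euc n → ℝ) : Prop where
  κpos : 0 < κ
  sf : Sm f
  sg : Sm g
  fpos : ∀ x, 0 < f x
  gpos : ∀ x, 0 < g x
  lf : ∀ x, lap f x = κ * (f x * g x ^ 2)
  lg : ∀ x, lap g x = κ * (g x * f x ^ 2)
  pf : PG f
  pg : PG g
  pdf : ∀ i, PG (D i f)
  pdg : ∀ i, PG (D i g)

section fixed

variable {n : ℕ} {κ : ℝ} {f g : Euc n → ℝ}

lemma nG_nonneg (f : Euc n → ℝ) (x : Euc n) : 0 ≤ nG f x := Finset.sum_nonneg fun _ _ => sq_nonneg _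

lemma PG_nG (h : ∀ i, PG (D i f)) : PG (nG f) := by unfold nG; fun_prop

lemma PG_xD (h : ∀ i, PG (D i f)) : PG (xD f) := by unfold xD; fun_prop

lemma nG_smooth (h : Sm f) : Sm (nG f) := ContDiff.sum fun i _ => (D_smooth h i).pow 2

lemma xD_smooth (h : Sm f) : Sm (xD f) :=
  ContDiff.sum fun i _ => ContDiff.mul (by fun_prop) (D_smooth h i)

namespace Sol

lemma symm (h : Sol κ f g) : Sol κ g f :=
  ⟨h.κpos, h.sg, h.sf, h.gpos, h.fpos, h.lg, h.lf, h.pg, h.pf, h.pdg, h.pdf⟩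

lemma plf (h : Sol κ f g) : PG (lap f) := by
  have := h.pf; have := h.pg
  rw [funext h.lf]; fun_prop

lemma plg (h : Sol κ f g) : PG (lap g) := h.symm.plf

lemma rescale (h : Sol κ f g) (z : Euc n) {c r : ℝ} (hc : 0 < c) (hr : 0 < r) :
    Sol (κ * (r / c) ^ 2) (fun x => c * f (z + r • x)) (fun x => c * g (z + r • x)) := by
  have hD : ∀ (F : Euc n → ℝ), Sm F → ∀ i, D i (fun x => c * F (z + r • x)) =
      fun x => c * (r * D i F (z + r • x)) := fun F hF i => by
    rw [D_const_mul c (hF.affine z r).diff, D_affine z r hF.diff]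
  have hL : ∀ (F : Euc n → ℝ), Sm F → ∀ x, lap (fun x => c * F (z + r • x)) x =
      c * (r ^ 2 * lap F (z + r • x)) := fun F hF x => by
    rw [lap_const_mul c (hF.affine z r), lap_affine z r hF]
  have := h.κpos
  refine ⟨by positivity, contDiff_const.mul (h.sf.affine z r), contDiff_const.mul (h.sg.affine z r),
    fun x => mul_pos hc (h.fpos _), fun x => mul_pos hc (h.gpos _), fun x => ?_, fun x => ?_,
    (PG.const c).mul (h.pf.comp_affine z r), (PG.const c).mul (h.pg.comp_affine z r),
    fun i => ?_, fun i => ?_⟩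
  · rw [hL f h.sf, h.lf]; field_simp
  · rw [hL g h.sg, h.lg]; field_simp
  · rw [hD f h.sf]; exact (PG.const c).mul ((PG.const r).mul ((h.pdf i).comp_affine z r))
  · rw [hD g h.sg]; exact (PG.const c).mul ((PG.const r).mul ((h.pdg i).comp_affine z r))

/-- `∫ f x·∇f dγ = ∫ |∇f|² + κ f² g² dγ`. -/
lemma energy (h : Sol κ f g) :
    (Ex fun x => f x * xD f x) = Ex (nG f) + κ * Ex fun x => f x ^ 2 * g x ^ 2 := by
  have := h.pf; have := h.pg; have hd := h.pdf; have hn := PG_nG hd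
  have hdiv : (fun x => ∑ i, D i (fun x => f x * D i f x) x) =
      fun x => nG f x + κ * (f x ^ 2 * g x ^ 2) := by
    ext x
    simp only [D_mul h.sf.diff (D_smooth h.sf _).diff, Finset.sum_add_distrib, ← Finset.mul_sum,
      ← lap_eq, h.lf, nG]
    congr 1
    · exact Finset.sum_congr rfl fun i _ => by ring
    · ring
  have key := ibp_div (h := fun i x => f x * D i f x)
    (fun i => (h.sf.mul (D_smooth h.sf i)).of_le (by norm_cast)) (fun i => by fun_prop)
    (by rw [hdiv]; fun_prop)
  rw [hdiv, Ex_add hn (by fun_prop), Ex_const_mul] at key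
  rw [key]
  congr 1; ext x
  rw [xD, Finset.mul_sum]
  exact Finset.sum_congr rfl fun i _ => by ring

/-- The energy density `|∇f|² + |∇g|² + κ f² g²`. -/
noncomputable def ed (κ : ℝ) (f g : Euc n → ℝ) (x : Euc n) : ℝ :=
  nG f x + nG g x + κ * (f x ^ 2 * g x ^ 2)

lemma ed_smooth (h : Sol κ f g) : Sm (ed κ f g) :=
  ((nG_smooth h.sf).add (nG_smooth h.sg)).add
    (contDiff_const.mul ((h.sf.pow 2).mul (h.sg.pow 2)))

lemma PG_ed (h : Sol κ f g) : PG (ed κ f g) := by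
  have := h.pf; have := h.pg; have := PG_nG h.pdf; have := PG_nG h.pdg
  unfold ed; fun_prop

lemma D_nG (hf : Sm f) (i : Fin n) : D i (nG f) = fun x => 2 * ∑ j, D j f x * D i (D j f) x := by
  have : nG f = fun x => ∑ j, D j f x ^ 2 := rfl
  rw [this, D_sum fun j => Sm.diff ((D_smooth hf j).pow 2)]
  ext x
  rw [Finset.mul_sum]
  exact Finset.sum_congr rfl fun j _ => by rw [D_sq (D_smooth hf j).diff]

/-- The stress–energy tensor of the system is divergence free; this is its Gaussian pairing with
the conformal field `k + l x`. -/
lemma stress (h : Sol κ f g) (k : Euc n) (l : ℝ) :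
    (Ex fun x => (∑ i, x i * (k i + l * x i)) * ed κ f g x
      - 2 * (∑ j, (k j + l * x j) * D j f x) * xD f x
      - 2 * (∑ j, (k j + l * x j) * D j g x) * xD g x)
    = l * Ex fun x => n * ed κ f g x - 2 * nG f x - 2 * nG g x := by
  have hes := h.ed_smooth
  have := h.PG_ed; have := h.pdf; have := h.pdg; have := PG_nG h.pdf; have := PG_nG h.pdg
  have hDf := D_smooth h.sf
  have hDg := D_smooth h.sg
  have hk : ∀ j : Fin n, Sm fun x : Euc n => k j + l * x j := fun j => by
    show ContDiff ℝ _ _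
    fun_prop
  have hkD : ∀ i j : Fin n, D i (fun x : Euc n => k j + l * x j) =
      fun _ => l * if j = i then 1 else 0 := by
    intro i j
    rw [D_add (by fun_prop) (by fun_prop), D_const, D_const_mul _ (by fun_prop), D_coord]
    simp
  have hQ : ∀ F : Euc n → ℝ, Sm F → Sm fun x => ∑ j, (k j + l * x j) * D j F x := fun F hF =>
    ContDiff.sum fun j _ => (hk j).mul (D_smooth hF j)
  have hQD : ∀ F : Euc n → ℝ, Sm F → ∀ i, D i (fun x => ∑ j, (k j + l * x j) * D j F x) =
      fun x => l * D i F x + ∑ j, (k j + l * x j) * D i (D j F) x := by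
    intro F hF i
    rw [D_sum fun j => Sm.diff ((hk j).mul (D_smooth hF j))]
    ext x
    simp only [D_mul (hk _).diff (D_smooth hF _).diff, hkD, Finset.sum_add_distrib]
    simp
  have hstep : ∀ F : Euc n → ℝ, Sm F → ∀ x,
      ∑ i, D i (fun x => (∑ j, (k j + l * x j) * D j F x) * D i F x) x =
      l * nG F x + 1 / 2 * ∑ j, (k j + l * x j) * D j (nG F) x
        + (∑ j, (k j + l * x j) * D j F x) * lap F x := by
    intro F hF x
    have e1 : ∀ i, D i (fun x => (∑ j, (k j + l * x j) * D j F x) * D i F x) x =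
        l * D i F x ^ 2 + (∑ j, (k j + l * x j) * D i (D j F) x) * D i F x
        + (∑ j, (k j + l * x j) * D j F x) * D i (D i F) x := by
      intro i
      rw [D_mul (hQ F hF).diff (D_smooth hF _).diff, hQD F hF]
      ring
    rw [Finset.sum_congr rfl fun i _ => e1 i]
    rw [Finset.sum_add_distrib, Finset.sum_add_distrib, ← Finset.mul_sum, ← Finset.mul_sum, ← lap_eq]
    congr 1
    · congr 1
      · simp only [D_nG hF, Finset.mul_sum, Finset.sum_mul]
        rw [Finset.sum_comm]
        refine Finset.sum_congr rfl fun j _ => Finset.sum_congr rfl fun i _ => ?_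
        rw [D_comm hF i j]; ring
  have hDe : ∀ j, D j (ed κ f g) = fun x => D j (nG f) x + D j (nG g) x +
      κ * (2 * (f x * D j f x) * g x ^ 2 + f x ^ 2 * (2 * (g x * D j g x))) := by
    intro j
    have : ed κ f g = fun x => nG f x + nG g x + κ * (f x ^ 2 * g x ^ 2) := rfl
    rw [this, D_add (Sm.diff ((nG_smooth h.sf).add (nG_smooth h.sg)))
      (Sm.diff (contDiff_const.mul ((h.sf.pow 2).mul (h.sg.pow 2)))),
      D_add (nG_smooth h.sf).diff (nG_smooth h.sg).diff,
      D_const_mul _ (Sm.diff ((h.sf.pow 2).mul (h.sg.pow 2))),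
      D_mul (Sm.diff (h.sf.pow 2)) (Sm.diff (h.sg.pow 2)), D_sq h.sf.diff, D_sq h.sg.diff]
  have s1 : ∀ i, Sm fun x => (k i + l * x i) * ed κ f g x := fun i => (hk i).mul hes
  have s2 : ∀ F : Euc n → ℝ, Sm F → ∀ i,
      Sm fun x => (∑ j, (k j + l * x j) * D j F x) * D i F x := fun F hF i =>
    (hQ F hF).mul (D_smooth hF i)
  have hdiv : (fun x => ∑ i, D i (fun x => (k i + l * x i) * ed κ f g x
      - 2 * ((∑ j, (k j + l * x j) * D j f x) * D i f x)
      - 2 * ((∑ j, (k j + l * x j) * D j g x) * D i g x)) x) =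
      fun x => l * (n * ed κ f g x - 2 * nG f x - 2 * nG g x) := by
    ext x
    have e0 : ∀ i, D i (fun x => (k i + l * x i) * ed κ f g x
      - 2 * ((∑ j, (k j + l * x j) * D j f x) * D i f x)
      - 2 * ((∑ j, (k j + l * x j) * D j g x) * D i g x)) x
      = (l * ed κ f g x + (k i + l * x i) * D i (ed κ f g) x)
      - 2 * D i (fun x => (∑ j, (k j + l * x j) * D j f x) * D i f x) x
      - 2 * D i (fun x => (∑ j, (k j + l * x j) * D j g x) * D i g x) x := by
      intro i
      rw [D_sub (Sm.diff ((s1 i).sub (contDiff_const.mul (s2 f h.sf i))))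
        (Sm.diff (contDiff_const.mul (s2 g h.sg i))),
        D_sub (s1 i).diff (Sm.diff (contDiff_const.mul (s2 f h.sf i))),
        D_const_mul _ (s2 f h.sf i).diff, D_const_mul _ (s2 g h.sg i).diff,
        D_mul (hk i).diff hes.diff, hkD]
      simp
    simp only [e0]
    rw [Finset.sum_sub_distrib, Finset.sum_sub_distrib, Finset.sum_add_distrib,
      show ∑ _i : Fin n, l * ed κ f g x = n * (l * ed κ f g x) by simp,
      ← Finset.mul_sum, ← Finset.mul_sum, hstep f h.sf, hstep g h.sg, h.lf, h.lg]
    have e1 : ∑ i, (k i + l * x i) * D i (ed κ f g) x =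
        ∑ j, (k j + l * x j) * D j (nG f) x + ∑ j, (k j + l * x j) * D j (nG g) x
        + 2 * κ * (f x * g x ^ 2) * (∑ j, (k j + l * x j) * D j f x)
        + 2 * κ * (g x * f x ^ 2) * (∑ j, (k j + l * x j) * D j g x) := by
      simp only [hDe, Finset.mul_sum]
      rw [← Finset.sum_add_distrib, ← Finset.sum_add_distrib, ← Finset.sum_add_distrib]
      exact Finset.sum_congr rfl fun j _ => by ring
    rw [e1]
    ring
  have key := ibp_div (h := fun i x => (k i + l * x i) * ed κ f g x
      - 2 * ((∑ j, (k j + l * x j) * D j f x) * D i f x)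
      - 2 * ((∑ j, (k j + l * x j) * D j g x) * D i g x))
    (fun i => Sm.one (((s1 i).sub (contDiff_const.mul (s2 f h.sf i))).sub
      (contDiff_const.mul (s2 g h.sg i)))) (fun i => by fun_prop)
    (by rw [hdiv]; fun_prop)
  rw [hdiv, Ex_const_mul] at key
  rw [key]
  congr 1; ext x
  have e2 : ∀ F : Euc n → ℝ, 2 * (∑ j, (k j + l * x j) * D j F x) * xD F x =
      ∑ i, x i * (2 * ((∑ j, (k j + l * x j) * D j F x) * D i F x)) := by
    intro F
    rw [xD, Finset.mul_sum]
    exact Finset.sum_congr rfl fun i _ => by ring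
  rw [e2, e2, Finset.sum_mul, ← Finset.sum_sub_distrib, ← Finset.sum_sub_distrib]
  exact Finset.sum_congr rfl fun i _ => by ring

/-- Pohozaev identity. -/
lemma pohozaev (h : Sol κ f g) :
    (Ex fun x => ed κ f g x * (‖x‖ ^ 2 - n)) =
      2 * ((Ex fun x => xD f x ^ 2) + Ex fun x => xD g x ^ 2) - 2 * (Ex (nG f) + Ex (nG g)) := by
  have := h.PG_ed; have := h.pdf; have := h.pdg; have := PG_nG h.pdf; have := PG_nG h.pdg
  have := PG_xD h.pdf; have := PG_xD h.pdg
  have key := h.stress 0 1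
  have e : (fun x : Euc n => (∑ i, x i * ((0 : Euc n) i + 1 * x i)) * ed κ f g x
      - 2 * (∑ j, ((0 : Euc n) j + 1 * x j) * D j f x) * xD f x
      - 2 * (∑ j, ((0 : Euc n) j + 1 * x j) * D j g x) * xD g x) =
      fun x => ed κ f g x * ‖x‖ ^ 2 - 2 * (xD f x ^ 2) - 2 * (xD g x ^ 2) := by
    ext x
    simp only [PiLp.zero_apply, zero_add, one_mul, norm_sq_eq, xD, ← pow_two]
    ring
  rw [e, Ex_sub (by fun_prop) (by fun_prop), Ex_sub (by fun_prop) (by fun_prop), Ex_const_mul,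
    Ex_const_mul, one_mul, Ex_sub (by fun_prop) (by fun_prop), Ex_sub (by fun_prop) (by fun_prop),
    Ex_const_mul, Ex_const_mul, Ex_const_mul] at key
  simp only [mul_sub]
  rw [Ex_sub (by fun_prop) (by fun_prop)]
  have : (Ex fun x => ed κ f g x * (n : ℝ)) = n * Ex (ed κ f g) := by
    rw [← Ex_const_mul]; congr 1; ext x; ring
  rw [this]
  linarith

end Sol

end fixed

/-! ### Almgren-type monotonicity formulas at Gaussian scale -/

/-- Gaussian average of `u²`. -/
noncomputable def av {n : ℕ} (u : Euc n → ℝ) (z : Euc n) (r : ℝ) : ℝ := Mn (fun x => u x ^ 2) z r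

/-- Scaled Dirichlet energy of `u`. -/
noncomputable def dr {n : ℕ} (u : Euc n → ℝ) (z : Euc n) (r : ℝ) : ℝ := r ^ 2 * Mn (nG u) z r

/-- Scaled interaction energy. -/
noncomputable def ph {n : ℕ} (u v : Euc n → ℝ) (z : Euc n) (r : ℝ) : ℝ :=
  r ^ 2 * Mn (fun x => u x ^ 2 * v x ^ 2) z r

/-- Gaussian average of the squared radial derivative. -/
noncomputable def rd {n : ℕ} (u : Euc n → ℝ) (z : Euc n) (r : ℝ) : ℝ :=
  Ex fun x => xD (fun y => u (z + r • y)) x ^ 2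

/-- The height `H(r)`. -/
noncomputable def HH {n : ℕ} (u v : Euc n → ℝ) (z : Euc n) (r : ℝ) : ℝ := av u z r + av v z r

/-- The total scaled energy. -/
noncomputable def EE {n : ℕ} (u v : Euc n → ℝ) (z : Euc n) (r : ℝ) : ℝ :=
  dr u z r + dr v z r + ph u v z r

/-- Entire solutions of the system with linear growth. -/
structure Ent {n : ℕ} (u v : Euc n → ℝ) : Prop where
  sol : Sol 1 u v
  gr : ∃ C : ℝ, 0 < C ∧ ∀ x, u x + v x ≤ C * (1 + ‖x‖)

lemma mono_of_deriv {F F' : ℝ → ℝ} {ρ : ℝ} (h : ∀ r, ρ ≤ r → HasDerivAt F (F' r) r)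
    (h0 : ∀ r, ρ ≤ r → 0 ≤ F' r) {a b : ℝ} (ha : ρ ≤ a) (hab : a ≤ b) : F a ≤ F b := by
  have : MonotoneOn F (Ici ρ) := by
    refine monotoneOn_of_deriv_nonneg (convex_Ici ρ)
      (fun t ht => (h t ht).continuousAt.continuousWithinAt)
      (fun t ht => (h t (interior_subset ht)).differentiableAt.differentiableWithinAt) fun t ht => ?_
    rw [(h t (interior_subset ht)).deriv]
    exact h0 t (interior_subset ht)
  exact this ha (ha.trans hab) hab

section mono

variable {n : ℕ} {u v : Euc n → ℝ}

lemma Sol.scale (h : Sol 1 u v) (z : Euc n) {r : ℝ} (hr : 0 < r) :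
    Sol (r ^ 2) (fun x => u (z + r • x)) (fun x => v (z + r • x)) := by
  simpa using h.rescale z one_pos hr

lemma nG_affine (hu : Sm u) (z : Euc n) (r : ℝ) (x : Euc n) :
    nG (fun x => u (z + r • x)) x = r ^ 2 * nG u (z + r • x) := by
  simp only [nG, D_affine z r hu.diff, Finset.mul_sum, mul_pow]

lemma Ex_nG_affine (hu : Sm u) (z : Euc n) (r : ℝ) :
    Ex (nG (fun x => u (z + r • x))) = dr u z r := by
  rw [funext (nG_affine hu z r), Ex_const_mul, dr, Mn]

lemma dr_nonneg (u : Euc n → ℝ) (z : Euc n) (r : ℝ) : 0 ≤ dr u z r :=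
  mul_nonneg (sq_nonneg _) (Ex_nonneg fun _ => nG_nonneg _ _)

lemma ph_nonneg (u v : Euc n → ℝ) (z : Euc n) (r : ℝ) : 0 ≤ ph u v z r :=
  mul_nonneg (sq_nonneg _) (Ex_nonneg fun _ => by positivity)

lemma rd_nonneg (u : Euc n → ℝ) (z : Euc n) (r : ℝ) : 0 ≤ rd u z r :=
  Ex_nonneg fun _ => sq_nonneg _

lemma ph_comm (u v : Euc n → ℝ) (z : Euc n) (r : ℝ) : ph u v z r = ph v u z r := by
  simp only [ph, mul_comm]

lemma av_pos (h : Sol 1 u v) (z : Euc n) (r : ℝ) : 0 < av u z r :=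
  Ex_pos ((h.pf.pow 2).comp_affine z r) fun _ => pow_pos (h.fpos _) 2

lemma HH_pos (h : Sol 1 u v) (z : Euc n) (r : ℝ) : 0 < HH u v z r :=
  add_pos (av_pos h z r) (av_pos h.symm z r)

/-- `(d/dr) ∫ u² = (2/r) (D + Φ)`, from the heat equation for averages and `Δ(u²) = 2|∇u|² + 2u²v²`. -/
lemma av_hasDerivAt (h : Sol 1 u v) (z : Euc n) {r : ℝ} (hr : 0 < r) :
    HasDerivAt (av u z) (2 * (dr u z r + ph u v z r) / r) r := by
  have h1 := h.pf; have h2 := h.pg; have h3 := h.pdf; have h4 := PG_nG h3; have h5 := h.plf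
  have hl : lap (fun x => u x ^ 2) = fun x => 2 * (nG u x + u x ^ 2 * v x ^ 2) := by
    rw [lap_sq h.sf]; ext x; rw [h.lf, nG]; ring
  have := Mn_hasDerivAt (F := fun x => u x ^ 2) (h.sf.pow 2) (by fun_prop)
    (fun i => by rw [D_sq h.sf.diff]; fun_prop) (by rw [hl]; fun_prop) z r
  refine this.congr_deriv ?_
  rw [hl, Mn, Ex_const_mul, Ex_add (h4.comp_affine z r)
    (((h1.pow 2).mul (h2.pow 2)).comp_affine z r), dr, ph, Mn, Mn]
  field_simp

lemma HH_hasDerivAt (h : Sol 1 u v) (z : Euc n) {r : ℝ} (hr : 0 < r) :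
    HasDerivAt (HH u v z) (2 * (EE u v z r + ph u v z r) / r) r := by
  refine ((av_hasDerivAt h z hr).fun_add (av_hasDerivAt h.symm z hr)).congr_deriv ?_
  rw [ph_comm v u, EE]; ring

/-- Scale derivative of the energy, from the Pohozaev identity. -/
lemma EE_hasDerivAt (h : Sol 1 u v) (z : Euc n) {r : ℝ} (hr : 0 < r) :
    HasDerivAt (EE u v z) (2 * (ph u v z r + (rd u z r + rd v z r)) / r) r := by
  have p1 := (PG_nG h.pdf).comp_affine z
  have p2 := (PG_nG h.pdg).comp_affine z
  have p3 := ((h.pf.pow 2).mul (h.pg.pow 2)).comp_affine z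
  have hE : EE u v z = fun s => s ^ 2 * Mn (Sol.ed 1 u v) z s := by
    ext s
    have : Mn (Sol.ed 1 u v) z s = Mn (nG u) z s + Mn (nG v) z s +
        Mn (fun x => u x ^ 2 * v x ^ 2) z s := by
      simp only [Mn, Sol.ed, one_mul]
      rw [Ex_add ((p1 s).add (p2 s)) (p3 s), Ex_add (p1 s) (p2 s)]
    rw [this, EE, dr, dr, ph]; ring
  have h1 := Mn_hasDerivAt_kernel h.PG_ed z hr
  have h2 := (hasDerivAt_pow 2 r).fun_mul h1
  have hp := (h.scale z hr).pohozaev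
  have he : ∀ x, Sol.ed (r ^ 2) (fun x => u (z + r • x)) (fun x => v (z + r • x)) x =
      r ^ 2 * Sol.ed 1 u v (z + r • x) := by
    intro x; simp only [Sol.ed, nG_affine h.sf, nG_affine h.sg]; ring
  simp only [he] at hp
  rw [Ex_nG_affine h.sf, Ex_nG_affine h.sg] at hp
  simp only [mul_assoc, Ex_const_mul] at hp
  rw [hE]
  refine h2.congr_deriv ?_
  have hE' : r ^ 2 * Mn (Sol.ed 1 u v) z r = EE u v z r := by rw [hE]
  rw [eq_div_iff hr.ne']
  have : (↑2 * r ^ (2 - 1) * Mn (Sol.ed 1 u v) z r + r ^ 2 * (r⁻¹ * Ex fun x =>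
      Sol.ed 1 u v (z + r • x) * (‖x‖ ^ 2 - n))) * r = 2 * (r ^ 2 * Mn (Sol.ed 1 u v) z r) +
      r ^ 2 * Ex fun x => Sol.ed 1 u v (z + r • x) * (‖x‖ ^ 2 - n) := by
    field_simp; norm_num; ring
  simp only [Nat.cast_ofNat] at this ⊢
  rw [this, hp, hE', EE, ← rd, ← rd]
  ring

/-- Cauchy–Schwarz for the radial derivative. -/
lemma II_sq_le (h : Sol 1 u v) (z : Euc n) {r : ℝ} (hr : 0 < r) :
    (EE u v z r + ph u v z r) ^ 2 ≤ (rd u z r + rd v z r) * HH u v z r := by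
  have key : ∀ {u v : Euc n → ℝ}, Sol 1 u v →
      (dr u z r + ph u v z r) ^ 2 ≤ av u z r * rd u z r := by
    intro u v h
    have hs := h.scale z hr
    have := Ex_cs hs.pf (PG_xD hs.pdf)
    rw [hs.energy, Ex_nG_affine h.sf] at this
    exact this
  have h1 := key h
  have h2 := key h.symm
  rw [ph_comm v u] at h2
  have e : EE u v z r + ph u v z r = (dr u z r + ph u v z r) + (dr v z r + ph u v z r) := by
    rw [EE]; ring
  rw [e, HH]
  set p := dr u z r + ph u v z r
  set q := dr v z r + ph u v z r
  have a0 := (av_pos h z r).le; have b0 := (av_pos h.symm z r).le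
  have c0 := rd_nonneg u z r; have d0 := rd_nonneg v z r
  have hp : 0 ≤ p := add_nonneg (dr_nonneg _ _ _) (ph_nonneg _ _ _ _)
  have hq : 0 ≤ q := add_nonneg (dr_nonneg _ _ _) (ph_nonneg _ _ _ _)
  have h3 : (p * q) ^ 2 ≤ ((av u z r * rd v z r + av v z r * rd u z r) / 2) ^ 2 := by
    have : (p * q) ^ 2 ≤ (av u z r * rd u z r) * (av v z r * rd v z r) := by
      rw [mul_pow]; exact mul_le_mul h1 h2 (sq_nonneg _) (by positivity)
    nlinarith [sq_nonneg (av u z r * rd v z r - av v z r * rd u z r)]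
  have h4 := abs_le_of_sq_le_sq h3 (by positivity)
  nlinarith [le_of_abs_le h4]

/-- Almgren monotonicity: the frequency `E/H` is nondecreasing, with a quantitative gain from the
interaction energy. -/
lemma NN_hasDerivAt (h : Sol 1 u v) (z : Euc n) {r : ℝ} (hr : 0 < r) :
    ∃ N', HasDerivAt (fun s => EE u v z s / HH u v z s) N' r ∧
      2 * (ph u v z r / HH u v z r) / r ≤ N' := by
  have hH := HH_pos h z r
  refine ⟨_, (EE_hasDerivAt h z hr).fun_div (HH_hasDerivAt h z hr) hH.ne', ?_⟩
  have h1 := II_sq_le h z hr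
  have h2 := ph_nonneg u v z r
  have h3 : 0 ≤ EE u v z r := add_nonneg (add_nonneg (dr_nonneg _ _ _) (dr_nonneg _ _ _)) h2
  rw [le_div_iff₀ (by positivity)]
  have e1 : 2 * (ph u v z r / HH u v z r) / r * HH u v z r ^ 2 = 2 * (ph u v z r * HH u v z r) / r := by
    field_simp
  rw [e1]
  have e2 : 2 * (ph u v z r + (rd u z r + rd v z r)) / r * HH u v z r -
      EE u v z r * (2 * (EE u v z r + ph u v z r) / r) =
      2 * (ph u v z r * HH u v z r + ((rd u z r + rd v z r) * HH u v z r
        - EE u v z r * (EE u v z r + ph u v z r))) / r := by ring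
  rw [e2]
  gcongr
  nlinarith [mul_nonneg h2 h3]

lemma EE_nonneg (u v : Euc n → ℝ) (z : Euc n) (r : ℝ) : 0 ≤ EE u v z r :=
  add_nonneg (add_nonneg (dr_nonneg _ _ _) (dr_nonneg _ _ _)) (ph_nonneg _ _ _ _)

lemma NN_mono (h : Sol 1 u v) (z : Euc n) {r s : ℝ} (hr : 0 < r) (hrs : r ≤ s) :
    EE u v z r / HH u v z r ≤ EE u v z s / HH u v z s := by
  choose! N' hN using fun t (ht : 0 < t) => NN_hasDerivAt h z ht
  refine mono_of_deriv (F := fun s => EE u v z s / HH u v z s) (F' := N')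
    (fun t ht => (hN t (hr.trans_le ht)).1) (fun t ht => ?_) le_rfl hrs
  refine le_trans ?_ (hN t (hr.trans_le ht)).2
  have := HH_pos h z t; have := ph_nonneg u v z t; have := hr.trans_le ht
  positivity

lemma HH_growth (h : Ent u v) (z : Euc n) :
    ∃ C : ℝ, 0 < C ∧ ∀ r, 0 ≤ r → HH u v z r ≤ C * (1 + r) ^ 2 := by
  obtain ⟨C, hC, hgr⟩ := h.gr
  have hq : PG fun x : Euc n => (1 + ‖x‖) ^ 2 := by fun_prop
  have hpos : 0 < Ex fun x : Euc n => (1 + ‖x‖) ^ 2 := Ex_pos hq fun x => by positivity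
  refine ⟨C ^ 2 * (1 + ‖z‖) ^ 2 * Ex fun x : Euc n => (1 + ‖x‖) ^ 2, by positivity, fun r hr => ?_⟩
  have p1 := (h.sol.pf.pow 2).comp_affine z r
  have p2 := (h.sol.pg.pow 2).comp_affine z r
  have e : HH u v z r = Ex fun x => u (z + r • x) ^ 2 + v (z + r • x) ^ 2 := (Ex_add p1 p2).symm
  rw [e, show C ^ 2 * (1 + ‖z‖) ^ 2 * (Ex fun x : Euc n => (1 + ‖x‖) ^ 2) * (1 + r) ^ 2 =
    (C ^ 2 * (1 + ‖z‖) ^ 2 * (1 + r) ^ 2) * (Ex fun x : Euc n => (1 + ‖x‖) ^ 2) by ring,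
    ← Ex_const_mul]
  refine Ex_mono (p1.add p2) (by fun_prop) fun x => ?_
  have h1 := hgr (z + r • x)
  have hu := h.sol.fpos (z + r • x)
  have hv := h.sol.gpos (z + r • x)
  have h2 : 1 + ‖z + r • x‖ ≤ (1 + ‖z‖) * ((1 + r) * (1 + ‖x‖)) := by
    have : ‖z + r • x‖ ≤ ‖z‖ + r * ‖x‖ := by
      simpa [norm_smul, abs_of_nonneg hr] using norm_add_le z (r • x)
    have a1 := norm_nonneg z; have a2 := norm_nonneg x
    nlinarith [mul_nonneg a1 a2, mul_nonneg a1 hr, mul_nonneg hr a2, mul_nonneg a1 (mul_nonneg hr a2)]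
  have h3 : u (z + r • x) + v (z + r • x) ≤ C * ((1 + ‖z‖) * ((1 + r) * (1 + ‖x‖))) :=
    h1.trans (mul_le_mul_of_nonneg_left h2 hC.le)
  have h4 := pow_le_pow_left₀ (by positivity) h3 2
  nlinarith [mul_pos hu hv]

/-- Linear growth bounds the frequency by `1`. -/
lemma EE_le_HH (h : Ent u v) (z : Euc n) {r : ℝ} (hr : 0 < r) : EE u v z r ≤ HH u v z r := by
  have hs := h.sol
  by_contra! hc
  set δ := EE u v z r / HH u v z r - 1 with hδ
  have hδ0 : 0 < δ := by
    rw [hδ, sub_pos, lt_div_iff₀ (HH_pos hs z r)]; linarith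
  have hder : ∀ s, r ≤ s → HasDerivAt (fun s => Real.log (HH u v z s) - 2 * (1 + δ) * Real.log s)
      (2 * (EE u v z s + ph u v z s) / s / HH u v z s - 2 * (1 + δ) * s⁻¹) s := fun s hrs =>
    ((HH_hasDerivAt hs z (hr.trans_le hrs)).log (HH_pos hs z s).ne').fun_sub
      ((Real.hasDerivAt_log (hr.trans_le hrs).ne').const_mul _)
  have hm : ∀ s, r ≤ s → Real.log (HH u v z r) - 2 * (1 + δ) * Real.log r ≤
      Real.log (HH u v z s) - 2 * (1 + δ) * Real.log s := by
    intro s hrs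
    refine mono_of_deriv hder (fun t ht => ?_) le_rfl hrs
    have ht0 := hr.trans_le ht
    have hN := NN_mono hs z hr ht
    have hH := HH_pos hs z t
    have e : EE u v z r / HH u v z r = 1 + δ := by rw [hδ]; ring
    rw [e, le_div_iff₀ hH] at hN
    have : 2 * (EE u v z t + ph u v z t) / t / HH u v z t - 2 * (1 + δ) * t⁻¹ =
        2 * (EE u v z t + ph u v z t - (1 + δ) * HH u v z t) / (t * HH u v z t) := by
      field_simp
    rw [this]
    have := ph_nonneg u v z t
    exact div_nonneg (by linarith) (by positivity)
  obtain ⟨C, hC, hgr⟩ := HH_growth h z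
  obtain ⟨s, hs1, hs2, hs3⟩ : ∃ s, r ≤ s ∧ 1 ≤ s ∧ (Real.log C + 2 * Real.log 2 -
      (Real.log (HH u v z r) - 2 * (1 + δ) * Real.log r)) / (2 * δ) < Real.log s :=
    ((Filter.eventually_ge_atTop r).and ((Filter.eventually_ge_atTop 1).and
      (Real.tendsto_log_atTop.eventually_gt_atTop _))).exists
  have h1 := hm s hs1
  have h2 : Real.log (HH u v z s) ≤ Real.log C + 2 * (Real.log 2 + Real.log s) := by
    have := Real.log_le_log (HH_pos hs z s) ((hgr s (by linarith)).trans
      (mul_le_mul_of_nonneg_left (pow_le_pow_left₀ (by linarith) (by linarith : 1 + s ≤ 2 * s) 2) hC.le))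
    rwa [Real.log_mul hC.ne' (by positivity), Real.log_pow, Real.log_mul (by norm_num) (by positivity)]
      at this
  rw [div_lt_iff₀ (by positivity)] at hs3
  nlinarith

lemma ph_le_EE (u v : Euc n → ℝ) (z : Euc n) (r : ℝ) : ph u v z r ≤ EE u v z r := by
  rw [EE]; linarith [dr_nonneg u z r, dr_nonneg v z r]

lemma HH_mono (h : Sol 1 u v) (z : Euc n) {r s : ℝ} (hr : 0 < r) (hrs : r ≤ s) :
    HH u v z r ≤ HH u v z s :=
  mono_of_deriv (F := HH u v z) (fun t ht => HH_hasDerivAt h z (hr.trans_le ht)) (fun t ht => by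
    have := EE_nonneg u v z t; have := ph_nonneg u v z t; have := hr.trans_le ht
    positivity) le_rfl hrs

lemma av_mono (h : Sol 1 u v) (z : Euc n) {r s : ℝ} (hr : 0 < r) (hrs : r ≤ s) :
    av u z r ≤ av u z s :=
  mono_of_deriv (F := av u z) (fun t ht => av_hasDerivAt h z (hr.trans_le ht)) (fun t ht => by
    have := dr_nonneg u z t; have := ph_nonneg u v z t; have := hr.trans_le ht
    positivity) le_rfl hrs

/-- Doubling of the height, since the frequency is at most `1`. -/
lemma HH_doubling (h : Ent u v) (z : Euc n) {r l : ℝ} (hr : 0 < r) (hl : 1 ≤ l) :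
    HH u v z (l * r) ≤ l ^ 4 * HH u v z r := by
  have hl0 : 0 < l := by linarith
  have hder : ∀ s, r ≤ s → HasDerivAt (fun s => 4 * Real.log s - Real.log (HH u v z s))
      (4 * s⁻¹ - 2 * (EE u v z s + ph u v z s) / s / HH u v z s) s := fun s hrs =>
    ((Real.hasDerivAt_log (hr.trans_le hrs).ne').const_mul _).fun_sub
    ((HH_hasDerivAt h.sol z (hr.trans_le hrs)).log (HH_pos h.sol z s).ne')
  have := mono_of_deriv hder (fun t ht => ?_) le_rfl (le_mul_of_one_le_left hr.le hl)
  · have e := Real.log_mul hl0.ne' hr.ne'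
    have : Real.log (HH u v z (l * r)) ≤ Real.log (l ^ 4 * HH u v z r) := by
      rw [Real.log_mul (by positivity) (HH_pos h.sol z r).ne', Real.log_pow]
      push_cast
      linarith
    exact (Real.log_le_log_iff (HH_pos h.sol z _) (mul_pos (by positivity) (HH_pos h.sol z r))).1 this
  · have ht0 := hr.trans_le ht
    have hH := HH_pos h.sol z t
    have : 4 * t⁻¹ - 2 * (EE u v z t + ph u v z t) / t / HH u v z t =
        2 * (2 * HH u v z t - (EE u v z t + ph u v z t)) / (t * HH u v z t) := by
      field_simp; ring
    rw [this]
    have := EE_le_HH h z ht0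
    have := ph_le_EE u v z t
    exact div_nonneg (by linarith) (by positivity)

/-- The Weiss-type deficit `(H - E)/r²`. -/
noncomputable def om (u v : Euc n → ℝ) (z : Euc n) (r : ℝ) : ℝ := (HH u v z r - EE u v z r) / r ^ 2

/-- Deviation from one-homogeneity: by `al_eq` this is `r⁻² ∫ |x·∇f - f|² + |x·∇g - g|² dγ` for
`f(x) = u(z + r x)` and `g(x) = v(z + r x)`. -/
noncomputable def al (u v : Euc n → ℝ) (z : Euc n) (r : ℝ) : ℝ :=
  (rd u z r + rd v z r - 2 * (EE u v z r + ph u v z r) + HH u v z r) / r ^ 2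

lemma om_nonneg (h : Ent u v) (z : Euc n) {r : ℝ} (hr : 0 < r) : 0 ≤ om u v z r :=
  div_nonneg (sub_nonneg.2 (EE_le_HH h z hr)) (sq_nonneg _)

/-- Weiss-type monotonicity: the deficit decreases at a rate given by the homogeneity defect and the
interaction energy. -/
lemma om_hasDerivAt (h : Sol 1 u v) (z : Euc n) {r : ℝ} (hr : 0 < r) :
    HasDerivAt (om u v z) (-(2 * al u v z r + 4 * (ph u v z r / r ^ 2)) / r) r := by
  refine (((HH_hasDerivAt h z hr).fun_sub (EE_hasDerivAt h z hr)).fun_div (hasDerivAt_pow 2 r)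
    (by positivity)).congr_deriv ?_
  rw [al]; field_simp; push_cast; ring

lemma HHr_hasDerivAt (h : Sol 1 u v) (z : Euc n) {r : ℝ} (hr : 0 < r) :
    HasDerivAt (fun s => HH u v z s / s ^ 2)
      (-(2 * om u v z r - 2 * (ph u v z r / r ^ 2)) / r) r := by
  refine ((HH_hasDerivAt h z hr).fun_div (hasDerivAt_pow 2 r) (by positivity)).congr_deriv ?_
  rw [om]; field_simp; push_cast; ring

lemma al_eq (h : Sol 1 u v) (z : Euc n) {r : ℝ} (hr : 0 < r) :
    al u v z r = ((Ex fun x => (xD (fun y => u (z + r • y)) x - u (z + r • x)) ^ 2) +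
      Ex fun x => (xD (fun y => v (z + r • y)) x - v (z + r • x)) ^ 2) / r ^ 2 := by
  have key : ∀ {u v : Euc n → ℝ}, Sol 1 u v →
      (Ex fun x => (xD (fun y => u (z + r • y)) x - u (z + r • x)) ^ 2) =
        rd u z r - 2 * (dr u z r + ph u v z r) + av u z r := by
    intro u v h
    have hs := h.scale z hr
    have p1 := hs.pf; have p2 := PG_xD hs.pdf
    have e := hs.energy
    rw [Ex_nG_affine h.sf] at e
    have e' : (Ex fun x => u (z + r • x) * xD (fun y => u (z + r • y)) x) = dr u z r + ph u v z r := e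
    rw [← e', rd, av, Mn]
    rw [← Ex_const_mul, ← Ex_sub (p2.pow 2) ((PG.const 2).mul (p1.mul p2)),
      ← Ex_add ((p2.pow 2).sub ((PG.const 2).mul (p1.mul p2))) (p1.pow 2)]
    congr 1; ext x; ring
  rw [key h, key h.symm, ph_comm v u, al, EE, HH]
  ring

lemma al_nonneg (h : Sol 1 u v) (z : Euc n) {r : ℝ} (hr : 0 < r) : 0 ≤ al u v z r := by
  rw [al_eq h z hr]
  exact div_nonneg (add_nonneg (Ex_nonneg fun _ => sq_nonneg _) (Ex_nonneg fun _ => sq_nonneg _))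
    (sq_nonneg _)

lemma om_anti (h : Sol 1 u v) (z : Euc n) {r s : ℝ} (hr : 0 < r) (hrs : r ≤ s) :
    om u v z s ≤ om u v z r := by
  have := mono_of_deriv (F := fun s => -om u v z s)
    (fun t ht => (om_hasDerivAt h z (hr.trans_le ht)).fun_neg) (fun t ht => by
      have h0 := hr.trans_le ht
      have := al_nonneg h z h0; have := ph_nonneg u v z t
      rw [neg_div, neg_neg]; positivity) le_rfl hrs
  linarith

/-- The normalised height `H/r²` is almost nonincreasing. -/
lemma HHr_le (h : Ent u v) (z : Euc n) {r s : ℝ} (hr : 0 < r) (hrs : r ≤ s) :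
    HH u v z s / s ^ 2 ≤ 3 / 2 * (HH u v z r / r ^ 2) := by
  have hs := h.sol
  have := mono_of_deriv (F := fun s => -(HH u v z s / s ^ 2 + 1 / 2 * om u v z s))
    (fun t ht => ((HHr_hasDerivAt hs z (hr.trans_le ht)).fun_add
      ((om_hasDerivAt hs z (hr.trans_le ht)).const_mul (1 / 2))).fun_neg) (fun t ht => by
      have h0 := hr.trans_le ht
      have h1 := al_nonneg hs z h0; have h2 := ph_nonneg u v z t; have h3 := om_nonneg h z h0
      rw [show -(-(2 * om u v z t - 2 * (ph u v z t / t ^ 2)) / t +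
        1 / 2 * (-(2 * al u v z t + 4 * (ph u v z t / t ^ 2)) / t)) =
        (2 * om u v z t + al u v z t) / t by ring]
      positivity) le_rfl hrs
  have h1 := om_nonneg h z (hr.trans_le hrs)
  have h2 : om u v z r ≤ HH u v z r / r ^ 2 := by
    rw [om]; gcongr; linarith [EE_nonneg u v z r]
  linarith

/-- Bound of the deficit by the homogeneity defect. -/
lemma om_le (h : Sol 1 u v) (z : Euc n) {r : ℝ} (hr : 0 < r) :
    om u v z r ≤ √(HH u v z r / r ^ 2 * al u v z r) + ph u v z r / r ^ 2 := by
  have h1 := II_sq_le h z hr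
  have hH := HH_pos h z r
  have key : (om u v z r - ph u v z r / r ^ 2) ^ 2 ≤ HH u v z r / r ^ 2 * al u v z r := by
    have e1 : (om u v z r - ph u v z r / r ^ 2) ^ 2 =
        (HH u v z r - (EE u v z r + ph u v z r)) ^ 2 / (r ^ 2 * r ^ 2) := by
      rw [om]; field_simp; ring
    rw [e1, al, div_mul_div_comm]
    gcongr
    nlinarith
  have := Real.le_sqrt_of_sq_le key
  linarith

end mono

/-! ### A pointwise gradient bound -/

section grad

variable {n : ℕ} {u v : Euc n → ℝ}

lemma Sol.q_lap (h : Sol 1 u v) :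
    lap (fun x => u x + v x) = fun x => u x * v x * (u x + v x) := by
  rw [lap_add h.sf h.sg]; ext x; rw [h.lf, h.lg]; ring

lemma Sol.q_sm (h : Sol 1 u v) : Sm fun x => u x + v x := h.sf.add h.sg

lemma Sol.q_pg (h : Sol 1 u v) : PG fun x => u x + v x := h.pf.add h.pg

lemma Sol.q_pd (h : Sol 1 u v) (i : Fin n) : PG (D i fun x => u x + v x) := by
  have h1 := h.pdf; have h2 := h.pdg
  rw [D_add h.sf.diff h.sg.diff]; fun_prop

lemma Sol.q_plap (h : Sol 1 u v) : PG (lap fun x => u x + v x) := by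
  have h1 := h.pf; have h2 := h.pg
  rw [h.q_lap]; fun_prop

lemma Sol.q_sub (h : Sol 1 u v) (x : Euc n) : 0 ≤ lap (fun x => u x + v x) x := by
  have h1 := h.fpos x; have h2 := h.gpos x
  rw [h.q_lap]; positivity

lemma Sol.q_pos (h : Sol 1 u v) (x : Euc n) : 0 < u x + v x := add_pos (h.fpos x) (h.gpos x)

lemma Sol.Mn_q_mono (h : Sol 1 u v) (z : Euc n) {r s : ℝ} (hr : 0 ≤ r) (hrs : r ≤ s) :
    Mn (fun x => u x + v x) z r ≤ Mn (fun x => u x + v x) z s :=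
  Mn_mono h.q_sm h.q_pg h.q_pd h.q_plap h.q_sub z hr hrs

lemma Sol.Mn_q_nonneg (h : Sol 1 u v) (z : Euc n) (r : ℝ) : 0 ≤ Mn (fun x => u x + v x) z r :=
  Ex_nonneg fun _ => (h.q_pos _).le

lemma Sol.HH_eq (h : Sol 1 u v) (z : Euc n) (r : ℝ) :
    HH u v z r = Mn (fun x => u x ^ 2 + v x ^ 2) z r :=
  (Ex_add ((h.pf.pow 2).comp_affine z r) ((h.pg.pow 2).comp_affine z r)).symm

lemma Sol.Mn_q_sq_le (h : Sol 1 u v) (z : Euc n) (r : ℝ) :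
    Mn (fun x => u x + v x) z r ^ 2 ≤ 2 * HH u v z r := by
  have p1 := h.pf; have p2 := h.pg
  refine (Ex_sq_le (h.q_pg.comp_affine z r)).trans ?_
  rw [h.HH_eq, Mn, ← Ex_const_mul]
  refine Ex_mono ((h.q_pg.pow 2).comp_affine z r)
    ((PG.const 2).mul (((p1.pow 2).add (p2.pow 2)).comp_affine z r)) fun x => ?_
  nlinarith [sq_nonneg (u (z + r • x) - v (z + r • x))]

lemma Sol.HH_le_Mn_q_sq (h : Sol 1 u v) (z : Euc n) (r : ℝ) :
    HH u v z r ≤ Mn (fun x => (u x + v x) ^ 2) z r := by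
  have p1 := h.pf; have p2 := h.pg
  rw [h.HH_eq]
  refine Ex_mono (((p1.pow 2).add (p2.pow 2)).comp_affine z r)
    ((h.q_pg.pow 2).comp_affine z r) fun x => ?_
  nlinarith [mul_pos (h.fpos (z + r • x)) (h.gpos (z + r • x))]

/-- With `m = √H(z,s)`, Gaussian means of `u + v` at scales comparable to `s` are `O(m)`. -/
lemma Ent.Mn_q_le (h : Ent u v) (z : Euc n) {s l : ℝ} (hs : 0 < s) (hl : 1 ≤ l) :
    Mn (fun x => u x + v x) z (l * s) ≤ 2 * l ^ 2 * √(HH u v z s) := by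
  refine le_of_sq_le_sq ?_ (by positivity)
  rw [mul_pow, Real.sq_sqrt (HH_pos h.sol z s).le]
  have := h.sol.Mn_q_sq_le z (l * s)
  have := HH_doubling h z hs hl
  have : 0 ≤ l ^ 4 * HH u v z s := mul_nonneg (by positivity) (HH_pos h.sol z s).le
  nlinarith

/-- Below the intrinsic scale at `z`, where `s² H(z,s)` is small, `u + v` at `z` is bounded below by its
quadratic mean: the heat equation for averages moves the mean of `u + v` only slightly. -/
lemma q_lower (n : ℕ) : ∃ δ c : ℝ, 0 < δ ∧ 0 < c ∧ ∀ u v : Euc n → ℝ, Ent u v →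
    ∀ (z : Euc n) (s : ℝ), 0 < s → s ^ 2 * HH u v z s ≤ δ → c * √(HH u v z s) ≤ u z + v z := by
  obtain ⟨C2, hC2, h2⟩ := reverse_holder n 2 (by norm_num)
  obtain ⟨C3, hC3, h3⟩ := reverse_holder n 3 (by norm_num)
  set A : ℝ := 9 / 2 * (C3 * (2 * 9 ^ 2) ^ 3) with hA
  have hA0 : 0 < A := by positivity
  have hs2 : 0 < √C2 := Real.sqrt_pos.2 hC2
  refine ⟨1 / (2 * √C2 * A), 1 / (2 * √C2), by positivity, by positivity, fun u v h z s hs hle => ?_⟩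
  have hS := h.sol
  set m := √(HH u v z s) with hm
  have hm0 : 0 < m := Real.sqrt_pos.2 (HH_pos hS z s)
  have hm2 : m ^ 2 = HH u v z s := Real.sq_sqrt (HH_pos hS z s).le
  rw [← hm2] at hle
  -- lower bound for the mean
  have l1 : m ≤ √C2 * Mn (fun x => u x + v x) z (3 * s) := by
    refine le_of_sq_le_sq ?_ (mul_nonneg hs2.le (hS.Mn_q_nonneg _ _))
    rw [mul_pow, Real.sq_sqrt hC2.le, hm2]
    exact (hS.HH_le_Mn_q_sq z s).trans
      (h2 _ hS.q_sm hS.q_pg hS.q_pd hS.q_plap hS.q_sub (fun x => (hS.q_pos x).le) z s hs.le)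
  set K : ℝ := C3 * (2 * 9 ^ 2 * m) ^ 3 with hK
  have l2 : ∀ σ, 0 ≤ σ → σ ≤ 3 * s → Mn (lap fun x => u x + v x) z σ ≤ K := by
    intro σ h0 hσ
    have p1 := hS.pf; have p2 := hS.pg
    calc Mn (lap fun x => u x + v x) z σ ≤ Mn (fun x => (u x + v x) ^ 3) z σ := by
          refine Ex_mono (hS.q_plap.comp_affine z σ) ((hS.q_pg.pow 3).comp_affine z σ) fun x => ?_
          rw [hS.q_lap]
          have a1 := hS.fpos (z + σ • x); have a2 := hS.gpos (z + σ • x)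
          have : u (z + σ • x) * v (z + σ • x) ≤ (u (z + σ • x) + v (z + σ • x)) ^ 2 := by nlinarith
          simp only
          rw [pow_succ _ 2]
          gcongr
      _ ≤ C3 * Mn (fun x => u x + v x) z (3 * σ) ^ 3 :=
          h3 _ hS.q_sm hS.q_pg hS.q_pd hS.q_plap hS.q_sub (fun x => (hS.q_pos x).le) z σ h0
      _ ≤ K := by
          have e1 := (hS.Mn_q_mono z (by positivity) (by linarith : 3 * σ ≤ 9 * s)).trans
            (h.Mn_q_le z hs (by norm_num : (1 : ℝ) ≤ 9))
          have := hS.Mn_q_nonneg z (3 * σ)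
          rw [hK]; gcongr
  have l3 : Mn (fun x => u x + v x) z (3 * s) ≤ u z + v z + K * (3 * s) ^ 2 / 2 := by
    have hder : ∀ σ, HasDerivAt (fun σ => K * σ ^ 2 / 2 - Mn (fun x => u x + v x) z σ)
        (K * σ - σ * Mn (lap fun x => u x + v x) z σ) σ := fun σ => by
      refine ((((hasDerivAt_pow 2 σ).const_mul K).div_const 2).fun_sub
        (Mn_hasDerivAt hS.q_sm hS.q_pg hS.q_pd hS.q_plap z σ)).congr_deriv ?_
      push_cast; ring
    have hm : MonotoneOn (fun σ => K * σ ^ 2 / 2 - Mn (fun x => u x + v x) z σ) (Icc 0 (3 * s)) := by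
      refine monotoneOn_of_deriv_nonneg (convex_Icc _ _)
        (fun t _ => (hder t).continuousAt.continuousWithinAt)
        (fun t _ => (hder t).differentiableAt.differentiableWithinAt) fun t ht => ?_
      rw [(hder t).deriv]
      have ht' := interior_subset ht
      nlinarith [l2 t ht'.1 ht'.2, ht'.1]
    have := hm (left_mem_Icc.2 (by positivity)) (right_mem_Icc.2 (by positivity)) (by positivity)
    simp only [Mn_zero] at this
    linarith
  have l4 : K * (3 * s) ^ 2 / 2 ≤ m / (2 * √C2) := by
    have : K * (3 * s) ^ 2 / 2 = A * m * (s ^ 2 * m ^ 2) := by rw [hK, hA]; ring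
    rw [this]
    refine (mul_le_mul_of_nonneg_left hle (by positivity)).trans (le_of_eq ?_)
    field_simp
  have l5 : m / √C2 ≤ Mn (fun x => u x + v x) z (3 * s) := by
    rw [div_le_iff₀ hs2]; linarith
  have : m / √C2 - m / (2 * √C2) = 1 / (2 * √C2) * m := by field_simp; norm_num
  linarith

/-- Existence of the intrinsic scale, at which the rescaled system has unit coupling. -/
lemma exists_rho (h : Sol 1 u v) (z : Euc n) {δ : ℝ} (hδ : 0 < δ) :
    ∃ s : ℝ, 0 < s ∧ s ^ 2 * HH u v z s = δ := by
  set M := HH u v z 1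
  have hM : 0 < M := HH_pos h z 1
  set a := min 1 √(δ / M)
  set b := max 1 √(δ / M)
  have hq : 0 < √(δ / M) := Real.sqrt_pos.2 (by positivity)
  have ha : 0 < a := lt_min one_pos hq
  have e : √(δ / M) ^ 2 = δ / M := Real.sq_sqrt (by positivity)
  have hab : a ≤ b := (min_le_left _ _).trans (le_max_left _ _)
  have hc : ContinuousOn (fun s => s ^ 2 * HH u v z s) (Icc a b) := fun t ht =>
    ((continuous_pow 2).continuousAt.mul
      (HH_hasDerivAt h z (ha.trans_le ht.1)).continuousAt).continuousWithinAt
  have h1 : a ^ 2 * HH u v z a ≤ δ := by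
    have h2 := HH_mono h z ha (min_le_left 1 √(δ / M))
    have h3 : a ^ 2 ≤ δ / M := e ▸ pow_le_pow_left₀ ha.le (min_le_right _ _) 2
    calc a ^ 2 * HH u v z a ≤ δ / M * M := mul_le_mul h3 h2 (HH_pos h z a).le (by positivity)
      _ = δ := by field_simp
  have h2 : δ ≤ b ^ 2 * HH u v z b := by
    have h2 := HH_mono h z one_pos (le_max_left 1 √(δ / M))
    have h3 : δ / M ≤ b ^ 2 := e ▸ pow_le_pow_left₀ hq.le (le_max_right _ _) 2
    calc δ = δ / M * M := by field_simp
      _ ≤ b ^ 2 * HH u v z b := mul_le_mul h3 h2 hM.le (by positivity)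
  obtain ⟨s, hs, he⟩ := intermediate_value_Icc hab hc ⟨h1, h2⟩
  exact ⟨s, ha.trans_le hs.1, he⟩

/-- The scale-invariant gradient bound `|∇u|² + |∇v|² ≤ C (u + v)⁴`. -/
lemma grad_bound (n : ℕ) : ∃ C : ℝ, 0 < C ∧ ∀ u v : Euc n → ℝ, Ent u v →
    ∀ z, nG u z + nG v z ≤ C * (u z + v z) ^ 4 := by
  obtain ⟨δ, c, hδ, hc, hq⟩ := q_lower n
  set A : ℝ := 3 ^ n * Real.exp (1 / 16) * (2 * 3 ^ 2) with hA
  have hA0 : 0 < A := by positivity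
  set C : ℝ := 2 * (2 * (A ^ 2 * δ) + 17 + 2 * n) * A ^ 2 with hC
  have hC0 : 0 < C := by positivity
  refine ⟨C / (δ * c ^ 4), by positivity, fun u v h z => ?_⟩
  have hS := h.sol
  obtain ⟨s, hs, hse⟩ := exists_rho hS z hδ
  set m := √(HH u v z s) with hm
  have hm0 : 0 < m := Real.sqrt_pos.2 (HH_pos hS z s)
  have hm2 : m ^ 2 = HH u v z s := Real.sq_sqrt (HH_pos hS z s).le
  have h1 := hq u v h z s hs hse.le
  rw [← hm] at h1
  rw [← hm2] at hse
  have hR := hS.scale z hs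
  have hB : ∀ x ∈ closedBall (0 : Euc n) 1, u (z + s • x) ≤ A * m ∧ v (z + s • x) ≤ A * m := by
    intro x hx
    have hx1 : ‖x‖ ≤ 1 := by simpa using hx
    have e1 := sub_le_Mn hS.q_sm hS.q_pg hS.q_pd hS.q_plap hS.q_sub (fun x => (hS.q_pos x).le) z x hs.le
    have e2 := h.Mn_q_le z hs (by norm_num : (1 : ℝ) ≤ 3)
    have e3 : Real.exp (‖x‖ ^ 2 / 16) ≤ Real.exp (1 / 16) := by
      apply Real.exp_le_exp.2
      have := pow_le_one₀ (n := 2) (norm_nonneg x) hx1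
      linarith
    have e4 : u (z + s • x) + v (z + s • x) ≤ A * m := by
      refine e1.trans ?_
      rw [hA, mul_assoc (3 ^ n * Real.exp (1 / 16))]
      exact mul_le_mul (by gcongr) e2 (hS.Mn_q_nonneg _ _) (by positivity)
    have a1 := hS.fpos (z + s • x); have a2 := hS.gpos (z + s • x)
    exact ⟨by linarith, by linarith⟩
  have h2 := grad_estimate hR.κpos.le hR.sf hR.sg (fun x => (hR.fpos x).le) (fun x => (hR.gpos x).le)
    hR.lf hR.lg hB
  have e1 : ∑ i, D i (fun x => u (z + s • x)) 0 ^ 2 = s ^ 2 * nG u z := by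
    have := nG_affine hS.sf z s 0
    simpa [nG] using this
  have e2 : ∑ i, D i (fun x => v (z + s • x)) 0 ^ 2 = s ^ 2 * nG v z := by
    have := nG_affine hS.sg z s 0
    simpa [nG] using this
  rw [e1, e2] at h2
  have e3 : 2 * (2 * s ^ 2 * (A * m) ^ 2 + 17 + 2 * n) * (A * m) ^ 2 = C * m ^ 2 := by
    rw [hC, ← hse]; ring
  rw [e3] at h2
  have e4 : nG u z + nG v z ≤ C * m ^ 4 / δ := by
    rw [le_div_iff₀ hδ]
    calc (nG u z + nG v z) * δ = (s ^ 2 * nG u z + s ^ 2 * nG v z) * m ^ 2 := by rw [← hse]; ring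
      _ ≤ C * m ^ 2 * m ^ 2 := by gcongr
      _ = C * m ^ 4 := by ring
  refine e4.trans ?_
  have e5 := pow_le_pow_left₀ (by positivity) h1 4
  calc C * m ^ 4 / δ = C / (δ * c ^ 4) * (c * m) ^ 4 := by field_simp
    _ ≤ _ := by gcongr

end grad

/-! ### Sector cutoffs -/

lemma smoothTransition_deriv_zero {t : ℝ} (ht : ¬ (0 < t ∧ t < 1)) :
    deriv Real.smoothTransition t = 0 := by
  by_cases h0 : 0 < t
  · have h1 : 1 ≤ t := by by_contra! h; exact ht ⟨h0, h⟩
    refine IsLocalMax.deriv_eq_zero (.of_forall fun s => ?_)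
    rw [Real.smoothTransition.one_of_one_le h1]
    exact Real.smoothTransition.le_one s
  · refine IsLocalMin.deriv_eq_zero (.of_forall fun s => ?_)
    rw [Real.smoothTransition.zero_of_nonpos (not_lt.1 h0)]
    exact Real.smoothTransition.nonneg s

lemma smoothTransition_deriv_bound : ∃ L : ℝ, 0 < L ∧ ∀ t, |deriv Real.smoothTransition t| ≤ L := by
  have hc : Continuous (deriv Real.smoothTransition) :=
    (Real.smoothTransition.contDiff (n := 1)).continuous_deriv le_rfl
  obtain ⟨L, hL⟩ := isCompact_Icc (a := (0 : ℝ)) (b := 1) |>.exists_bound_of_continuousOn hc.continuousOn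
  refine ⟨max L 1, lt_max_of_lt_right one_pos, fun t => ?_⟩
  by_cases ht : 0 < t ∧ t < 1
  · exact (hL t ⟨ht.1.le, ht.2.le⟩).trans (le_max_left _ _)
  · rw [smoothTransition_deriv_zero ht]; simp

/-- A smooth cutoff supported where `f > g` and equal to `1` where `f ≥ 2g`. -/
noncomputable def cut {n : ℕ} (f g : Euc n → ℝ) (x : Euc n) : ℝ :=
  Real.smoothTransition (f x / g x - 1)

/-- Solutions for which the gradient bound `|∇f|² + |∇g|² ≤ C κ (f + g)⁴` is known. -/
structure GSol {n : ℕ} (C κ : ℝ) (f g : Euc n → ℝ) : Prop extends Sol κ f g where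
  gb : ∀ x, nG f x + nG g x ≤ C * κ * (f x + g x) ^ 4

section cut

variable {n : ℕ} {C κ : ℝ} {f g : Euc n → ℝ}

lemma GSol.symm (h : GSol C κ f g) : GSol C κ g f :=
  ⟨h.toSol.symm, fun x => by rw [add_comm (nG g x), add_comm (g x)]; exact h.gb x⟩

lemma nG_const_mul (c : ℝ) (hf : Sm f) (x : Euc n) : nG (fun x => c * f x) x = c ^ 2 * nG f x := by
  simp only [nG, D_const_mul c hf.diff, mul_pow, Finset.mul_sum]

lemma Ent.gsol {u v : Euc n → ℝ} (h : Ent u v) (hC : ∀ z, nG u z + nG v z ≤ C * (u z + v z) ^ 4)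
    (z : Euc n) {c r : ℝ} (hc : 0 < c) (hr : 0 < r) :
    GSol C ((r / c) ^ 2) (fun x => c * u (z + r • x)) (fun x => c * v (z + r • x)) := by
  have h1 := h.sol.rescale z hc hr
  rw [one_mul] at h1
  refine ⟨h1, fun x => ?_⟩
  rw [nG_const_mul c (h.sol.sf.affine z r), nG_const_mul c (h.sol.sg.affine z r),
    nG_affine h.sol.sf, nG_affine h.sol.sg]
  have e : C * (r / c) ^ 2 * (c * u (z + r • x) + c * v (z + r • x)) ^ 4 =
      c ^ 2 * r ^ 2 * (C * (u (z + r • x) + v (z + r • x)) ^ 4) := by field_simp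
  rw [e]
  nlinarith [mul_le_mul_of_nonneg_left (hC (z + r • x)) (by positivity : 0 ≤ c ^ 2 * r ^ 2)]

lemma cut_nonneg (f g : Euc n → ℝ) (x : Euc n) : 0 ≤ cut f g x := Real.smoothTransition.nonneg _

lemma cut_le_one (f g : Euc n → ℝ) (x : Euc n) : cut f g x ≤ 1 := Real.smoothTransition.le_one _

lemma cut_zero {x : Euc n} (hg : 0 < g x) (h : f x ≤ g x) : cut f g x = 0 :=
  Real.smoothTransition.zero_of_nonpos (by rw [sub_nonpos, div_le_one hg]; exact h)

lemma cut_one {x : Euc n} (hg : 0 < g x) (h : 2 * g x ≤ f x) : cut f g x = 1 :=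
  Real.smoothTransition.one_of_one_le (by rw [le_sub_iff_add_le, le_div_iff₀ hg]; linarith)

lemma Sol.cut_sm (h : Sol κ f g) : Sm (cut f g) := by
  have : Sm fun x => f x / g x - 1 := (h.sf.div h.sg fun x => (h.gpos x).ne').sub contDiff_const
  exact Real.smoothTransition.contDiff.comp this

lemma Sol.D_cut (h : Sol κ f g) (i : Fin n) (x : Euc n) :
    D i (cut f g) x = deriv Real.smoothTransition (f x / g x - 1) *
      ((D i f x - f x / g x * D i g x) / g x) := by
  have hw : Sm fun x => f x / g x := h.sf.div h.sg fun x => (h.gpos x).ne'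
  have h1 : D i (cut f g) = fun x => deriv Real.smoothTransition (f x / g x - 1) *
      D i (fun x => f x / g x - 1) x :=
    D_comp (Real.smoothTransition.contDiff.differentiable one_ne_zero)
      (Sm.diff (hw.sub contDiff_const))
  have h2 : D i (fun x => f x / g x - 1) = fun x => D i (fun x => f x / g x) x := by
    rw [D_sub hw.diff (differentiable_const _), D_const]; simp
  have h3 : D i f x = D i (fun x => f x / g x) x * g x + f x / g x * D i g x := by
    have := congrFun (D_mul (i := i) hw.diff h.sg.diff) x
    rw [← this]; congr 1; ext y; rw [div_mul_cancel₀ _ (h.gpos y).ne']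
  rw [h1, h2]
  simp only
  rw [h3]
  have := (h.gpos x).ne'
  field_simp
  ring

/-- The cutoff varies only where `f` and `g` are comparable, and there with slope `O(√κ g)`. -/
lemma cut_grad (C : ℝ) : ∃ C' : ℝ, 0 < C' ∧ ∀ (n : ℕ) (κ : ℝ) (f g : Euc n → ℝ), GSol C κ f g →
    ∀ x, (g x < f x ∧ f x < 2 * g x ∧ nG (cut f g) x ≤ C' * κ * g x ^ 2) ∨
      ∀ i, D i (cut f g) x = 0 := by
  obtain ⟨L, hL, hLb⟩ := smoothTransition_deriv_bound
  refine ⟨L ^ 2 * 8 * (|C| * 81) + 1, by positivity, fun n κ f g h x => ?_⟩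
  have hg := h.gpos x
  have hf := h.fpos x
  have hκ := h.κpos
  by_cases hx : 0 < f x / g x - 1 ∧ f x / g x - 1 < 1
  · have h1 : g x < f x := by
      have := hx.1; rw [sub_pos, one_lt_div hg] at this; exact this
    have h2 : f x < 2 * g x := by
      have := hx.2; rw [sub_lt_iff_lt_add, div_lt_iff₀ hg] at this; linarith
    refine .inl ⟨h1, h2, ?_⟩
    have key : ∀ i, D i (cut f g) x ^ 2 ≤ L ^ 2 * 8 * (D i f x ^ 2 + D i g x ^ 2) / g x ^ 2 := by
      intro i
      rw [h.D_cut, mul_pow, div_pow, ← mul_div_assoc]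
      have a1 : deriv Real.smoothTransition (f x / g x - 1) ^ 2 ≤ L ^ 2 :=
        sq_le_sq' (by linarith [(abs_le.1 (hLb (f x / g x - 1))).1]) (abs_le.1 (hLb (f x / g x - 1))).2
      have a2 : (D i f x - f x / g x * D i g x) ^ 2 ≤ 8 * (D i f x ^ 2 + D i g x ^ 2) := by
        have b1 : 0 ≤ f x / g x := by positivity
        have b2 : (f x / g x) ^ 2 ≤ 4 := by nlinarith [hx.2]
        nlinarith [sq_nonneg (D i f x + f x / g x * D i g x), sq_nonneg (D i g x), sq_nonneg (D i f x),
          mul_le_mul_of_nonneg_right b2 (sq_nonneg (D i g x))]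
      rw [mul_assoc (L ^ 2)]
      gcongr
    have h3 : nG (cut f g) x ≤ L ^ 2 * 8 * (nG f x + nG g x) / g x ^ 2 := by
      rw [nG, nG, nG, ← Finset.sum_add_distrib, Finset.mul_sum, Finset.sum_div]
      exact Finset.sum_le_sum fun i _ => key i
    refine h3.trans ?_
    rw [div_le_iff₀ (by positivity)]
    have h4 : nG f x + nG g x ≤ |C| * κ * (81 * g x ^ 4) := by
      refine (h.gb x).trans ?_
      have : (f x + g x) ^ 4 ≤ (3 * g x) ^ 4 := pow_le_pow_left₀ (by positivity) (by linarith) 4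
      have e : (3 * g x) ^ 4 = 81 * g x ^ 4 := by ring
      rw [e] at this
      exact mul_le_mul (mul_le_mul_of_nonneg_right (le_abs_self C) hκ.le) this (by positivity)
        (by positivity)
    calc L ^ 2 * 8 * (nG f x + nG g x) ≤ L ^ 2 * 8 * (|C| * κ * (81 * g x ^ 4)) := by gcongr
      _ ≤ _ := by
        have : 0 ≤ κ * g x ^ 4 := by positivity
        nlinarith
  · refine .inr fun i => ?_
    rw [h.D_cut, smoothTransition_deriv_zero hx, zero_mul]

lemma Sol.PG_cut (h : Sol κ f g) : PG (cut f g) :=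
  PG.of_le h.cut_sm.continuous (PG.const 1) fun x => by
    rw [abs_of_nonneg (cut_nonneg f g x)]; exact cut_le_one f g x

lemma D_sq_le_nG (f : Euc n → ℝ) (i : Fin n) (x : Euc n) : D i f x ^ 2 ≤ nG f x :=
  Finset.single_le_sum (f := fun i => D i f x ^ 2) (fun _ _ => sq_nonneg _) (Finset.mem_univ i)

lemma PG_D_cut (h : GSol C κ f g) (i : Fin n) : PG (D i (cut f g)) := by
  obtain ⟨C', hC', hc⟩ := cut_grad C
  have p := h.pg
  refine PG.of_le (D_continuous (Sm.one h.cut_sm) i) (g := fun x => √(C' * κ) * g x) (by fun_prop)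
    fun x => ?_
  have hκ := h.κpos; have hg := h.gpos x
  rcases hc n κ f g h x with ⟨_, _, h3⟩ | h3
  · refine abs_le_of_sq_le_sq ?_ (by positivity)
    rw [mul_pow, Real.sq_sqrt (by positivity)]
    exact (D_sq_le_nG _ i x).trans h3
  · rw [h3 i, abs_zero]; positivity

end cut

/-! ### Comparability of the two components -/

section comp

variable {n : ℕ} {C κ : ℝ} {f g : Euc n → ℝ}

lemma sum_mul_sq_le (a b : Fin n → ℝ) : (∑ i, a i * b i) ^ 2 ≤ (∑ i, a i ^ 2) * ∑ i, b i ^ 2 :=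
  Finset.sum_mul_sq_le_sq_mul_sq _ _ _

lemma xD_sq_le (f : Euc n → ℝ) (x : Euc n) : xD f x ^ 2 ≤ ‖x‖ ^ 2 * nG f x := by
  rw [norm_sq_eq]; exact sum_mul_sq_le _ _

set_option maxHeartbeats 1000000 in
/-- The two reaction terms control each other up to `O(κ^{-1/2})`. -/
lemma reaction_comp (n : ℕ) (C : ℝ) (hC : 0 < C) : ∃ K : ℝ, 0 < K ∧ ∀ (κ : ℝ) (f g : Euc n → ℝ),
    GSol C κ f g →
    κ * (Ex fun x => f x * g x ^ 2) ≤ K * (κ * Ex fun x => g x * f x ^ 2) + K / √κ := by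
  obtain ⟨C', hC', hc⟩ := cut_grad C
  set M := Ex fun x : Euc n => ‖x‖ ^ 3 with hM
  have hM0 : 0 ≤ M := Ex_nonneg fun x => by positivity
  set A := √(C' * C * 81) + C' / 2 + 2 with hA
  have hA0 : 0 < A := by positivity
  refine ⟨2 * A + 6 * M, by positivity, fun κ f g h => ?_⟩
  have hκ := h.κpos
  have hsκ : 0 < √κ := Real.sqrt_pos.2 hκ
  have hsκ2 : √κ ^ 2 = κ := Real.sq_sqrt hκ.le
  have p1 := h.pf; have p2 := h.pg; have p3 := h.pdf; have p4 := h.plf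
  have p5 := h.symm.PG_cut; have p6 := fun i => PG_D_cut h.symm i
  have p7 := PG_xD p3; have p8 := PG_xD p6
  have s1 := h.sf; have s2 := h.symm.cut_sm
  set χ := cut g f with hχ
  -- first integration by parts
  have i1 : (Ex fun x => χ x * lap f x) + (Ex fun x => ∑ i, D i χ x * D i f x) =
      Ex fun x => χ x * xD f x := by
    have e : ∀ x, ∑ i, D i (fun x => χ x * D i f x) x = χ x * lap f x + ∑ i, D i χ x * D i f x := by
      intro x
      rw [lap_eq, Finset.mul_sum, ← Finset.sum_add_distrib]
      refine Finset.sum_congr rfl fun i _ => ?_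
      rw [D_mul s2.diff (D_smooth s1 i).diff]; ring
    have := ibp_div (h := fun i x => χ x * D i f x)
      (fun i => Sm.one (s2.mul (D_smooth s1 i))) (fun i => by fun_prop)
      (by rw [funext e]; fun_prop)
    rw [funext e, Ex_add (by fun_prop) (by fun_prop)] at this
    rw [this]; congr 1; ext x; rw [xD, Finset.mul_sum]
    exact Finset.sum_congr rfl fun i _ => by ring
  -- second integration by parts
  have i2 : (Ex fun x => χ x * xD f x) + (Ex fun x => f x * xD χ x) + (n : ℝ) * (Ex fun x => χ x * f x) =
      Ex fun x => ‖x‖ ^ 2 * (χ x * f x) := by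
    have e : ∀ x, ∑ i, D i (fun x : Euc n => x i * (χ x * f x)) x =
        χ x * xD f x + f x * xD χ x + n * (χ x * f x) := by
      intro x
      have : ∀ i, D i (fun x : Euc n => x i * (χ x * f x)) x =
          χ x * (x i * D i f x) + f x * (x i * D i χ x) + χ x * f x := by
        intro i
        rw [D_mul (by fun_prop) (Sm.diff (s2.mul s1)), D_mul s2.diff s1.diff, D_coord]
        simp; ring
      simp only [this, Finset.sum_add_distrib, ← Finset.mul_sum]
      simp [xD]; ring
    have := ibp_div (h := fun i (x : Euc n) => x i * (χ x * f x))
      (fun i => by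
        have := s2.mul s1
        refine ContDiff.mul (by fun_prop) (Sm.one this)) (fun i => by fun_prop)
      (by rw [funext e]; fun_prop)
    rw [funext e, Ex_add (by fun_prop) (by fun_prop), Ex_add (by fun_prop) (by fun_prop),
      Ex_const_mul] at this
    rw [this]; congr 1; ext x; rw [norm_sq_eq, Finset.sum_mul]
    exact Finset.sum_congr rfl fun i _ => by ring
  have i3 : 0 ≤ (n : ℝ) * (Ex fun x => χ x * f x) :=
    mul_nonneg (by positivity) (Ex_nonneg fun x => mul_nonneg (cut_nonneg _ _ _) (h.fpos x).le)
  -- a small multiple of the reaction term absorbs the weight on the far region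
  have far : ∀ x, f x ≤ g x → ‖x‖ ^ 2 * f x ≤ 1 / 3 * (κ * (f x * g x ^ 2)) + 2 / √κ * ‖x‖ ^ 3 := by
    intro x hx
    have hf := h.fpos x; have hg := h.gpos x
    by_cases hb : ‖x‖ ^ 2 ≤ 1 / 3 * (κ * g x ^ 2)
    · have := mul_le_mul_of_nonneg_right hb hf.le
      have : 0 ≤ 2 / √κ * ‖x‖ ^ 3 := by positivity
      linarith
    · have h1 : √κ * g x ≤ 2 * ‖x‖ := by
        refine le_of_sq_le_sq ?_ (by positivity)
        rw [mul_pow, hsκ2]; nlinarith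
      have h2 : f x ≤ 2 / √κ * ‖x‖ := by
        rw [div_mul_eq_mul_div, le_div_iff₀ hsκ]
        nlinarith
      have h3 := mul_le_mul_of_nonneg_left h2 (sq_nonneg ‖x‖)
      have : 0 ≤ 1 / 3 * (κ * (f x * g x ^ 2)) := by positivity
      linarith
  have pt1 : ∀ x, ‖x‖ ^ 2 * (χ x * f x) ≤ 1 / 3 * (κ * (f x * g x ^ 2)) + 2 / √κ * ‖x‖ ^ 3 := by
    intro x
    have hf := h.fpos x; have hg := h.gpos x
    by_cases hx : f x ≤ g x
    · refine le_trans ?_ (far x hx)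
      have := cut_le_one g f x
      have : 0 ≤ ‖x‖ ^ 2 * f x := by positivity
      nlinarith
    · rw [hχ, cut_zero hf (not_le.1 hx).le]
      simp only [zero_mul, mul_zero]
      positivity
  have pt2 : ∀ x, -(f x * xD χ x) ≤ C' / 2 * (κ * (g x * f x ^ 2)) +
      (1 / 2) * (1 / 3 * (κ * (f x * g x ^ 2)) + 2 / √κ * ‖x‖ ^ 3) := by
    intro x
    have hf := h.fpos x; have hg := h.gpos x
    rcases hc n κ g f h.symm x with ⟨h1, _, h3⟩ | h3
    · have h4 := far x h1.le
      have h5 : xD χ x ^ 2 ≤ ‖x‖ ^ 2 * (C' * κ * f x ^ 2) :=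
        (xD_sq_le χ x).trans (by gcongr)
      have h6 : |xD χ x| ≤ 1 / 2 * (‖x‖ ^ 2 + C' * κ * f x ^ 2) := by
        refine abs_le_of_sq_le_sq (h5.trans ?_) (by positivity)
        nlinarith [sq_nonneg (‖x‖ ^ 2 - C' * κ * f x ^ 2)]
      have h7 : -(f x * xD χ x) ≤ f x * (1 / 2 * (‖x‖ ^ 2 + C' * κ * f x ^ 2)) := by
        have := neg_le_of_abs_le h6
        nlinarith
      have h8 : f x * f x ^ 2 ≤ g x * f x ^ 2 := by gcongr
      have h9 := mul_le_mul_of_nonneg_left h8 (by positivity : 0 ≤ C' / 2 * κ)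
      nlinarith
    · have : xD χ x = 0 := Finset.sum_eq_zero fun i _ => by rw [h3 i, mul_zero]
      rw [this, mul_zero, neg_zero]; positivity
  have pt3 : ∀ x, -(∑ i, D i χ x * D i f x) ≤ √(C' * C * 81) * (κ * (g x * f x ^ 2)) := by
    intro x
    have hf := h.fpos x; have hg := h.gpos x
    rcases hc n κ g f h.symm x with ⟨h1, h2, h3⟩ | h3
    · have h4 := sum_mul_sq_le (fun i => D i χ x) (fun i => D i f x)
      have h5 : nG f x ≤ C * κ * (81 * f x ^ 4) := by
        have := h.gb x
        have a := nG_nonneg g x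
        have b : (f x + g x) ^ 4 ≤ (3 * f x) ^ 4 := pow_le_pow_left₀ (by positivity) (by linarith) 4
        have c : (3 * f x) ^ 4 = 81 * f x ^ 4 := by ring
        rw [c] at b
        have := mul_le_mul_of_nonneg_left b (by positivity : 0 ≤ C * κ)
        linarith
      refine (neg_le_abs _).trans (abs_le_of_sq_le_sq ?_ (by positivity))
      rw [mul_pow, Real.sq_sqrt (by positivity)]
      calc _ ≤ nG χ x * nG f x := h4
        _ ≤ (C' * κ * f x ^ 2) * (C * κ * (81 * f x ^ 4)) :=
          mul_le_mul h3 h5 (nG_nonneg _ _) (by positivity)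
        _ = C' * C * 81 * (κ * (f x * f x ^ 2)) ^ 2 := by ring
        _ ≤ _ := by gcongr
    · have : ∑ i, D i χ x * D i f x = 0 := Finset.sum_eq_zero fun i _ => by rw [h3 i, zero_mul]
      rw [this, neg_zero]; positivity
  have pt4 : ∀ x, κ * (f x * g x ^ 2) - χ x * lap f x ≤ 2 * (κ * (g x * f x ^ 2)) := by
    intro x
    have hf := h.fpos x; have hg := h.gpos x
    rw [h.lf]
    by_cases hx : 2 * f x ≤ g x
    · rw [hχ, cut_one hf hx]
      have : 0 ≤ 2 * (κ * (g x * f x ^ 2)) := by positivity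
      linarith
    · have h0 : 0 ≤ χ x := cut_nonneg _ _ _
      have h1 : f x * g x ^ 2 ≤ 2 * (g x * f x ^ 2) := by nlinarith [mul_pos hf hg]
      have : 0 ≤ χ x * (κ * (f x * g x ^ 2)) := by positivity
      nlinarith
  set P := Ex fun x => f x * g x ^ 2 with hP
  set Q := Ex fun x => g x * f x ^ 2 with hQ
  have j1 := Ex_mono (by fun_prop) (by fun_prop) pt1
  rw [Ex_add (by fun_prop) (by fun_prop), Ex_const_mul, Ex_const_mul, Ex_const_mul, ← hP, ← hM] at j1
  have j2 := Ex_mono (by fun_prop) (by fun_prop) pt2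
  rw [Ex_add (by fun_prop) (by fun_prop), Ex_const_mul, Ex_const_mul, Ex_const_mul,
    Ex_add (by fun_prop) (by fun_prop), Ex_const_mul, Ex_const_mul, Ex_const_mul, ← hP, ← hM,
    ← hQ, Ex_neg] at j2
  have j3 := Ex_mono (by fun_prop) (by fun_prop) pt3
  rw [Ex_const_mul, Ex_const_mul, ← hQ, Ex_neg] at j3
  have j4 := Ex_mono (by fun_prop) (by fun_prop) pt4
  rw [Ex_const_mul, Ex_const_mul, ← hQ, Ex_sub (by fun_prop) (by fun_prop), Ex_const_mul, ← hP] at j4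
  have hQ0 : 0 ≤ κ * Q := mul_nonneg hκ.le (Ex_nonneg fun x =>
    mul_nonneg (h.gpos x).le (sq_nonneg _))
  have e : (2 * A + 6 * M) / √κ = 3 * (2 / √κ * M) + 2 * A / √κ := by ring
  have e2 : 0 ≤ 2 * A / √κ := by positivity
  rw [e]
  have e3 : A * (κ * Q) = √(C' * C * 81) * (κ * Q) + C' / 2 * (κ * Q) + 2 * (κ * Q) := by
    rw [hA]; ring
  have e4 : (2 * A + 6 * M) * (κ * Q) = 2 * (A * (κ * Q)) + 6 * (M * (κ * Q)) := by ring
  have e5 := mul_nonneg hM0 hQ0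
  rw [e4]
  have e6 : 6 * M / √κ = 3 * (2 / √κ * M) := by ring
  linarith

end comp

section comp2

variable {n : ℕ}

lemma Sol.Mn_hasDerivAt_u {u v : Euc n → ℝ} (h : Sol 1 u v) (z : Euc n) (r : ℝ) :
    HasDerivAt (Mn u z) (r * Mn (fun x => u x * v x ^ 2) z r) r := by
  have := Mn_hasDerivAt h.sf h.pf h.pdf h.plf z r
  have e : lap u = fun x => u x * v x ^ 2 := by ext x; rw [h.lf, one_mul]
  rwa [e] at this

/-- On `{u = v}`, the means of `u` and `v` are comparable beyond the scale `ρ` with `ρ²H = δ`. -/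
lemma mean_comp (n : ℕ) : ∃ δ K : ℝ, 0 < δ ∧ 0 < K ∧ ∀ u v : Euc n → ℝ, Ent u v → ∀ y, u y = v y →
    ∀ s, 0 < s → s ^ 2 * HH u v y s = δ → ∀ r, s ≤ r → Mn u y r ≤ K * Mn v y r := by
  obtain ⟨C, hC, hg⟩ := grad_bound n
  obtain ⟨K, hK, hr⟩ := reaction_comp n C hC
  obtain ⟨δ, c, hδ, hc, hq⟩ := q_lower n
  have hsδ : 0 < √δ := Real.sqrt_pos.2 hδ
  set c1 := c * √δ / 2 with hc1
  have hc10 : 0 < c1 := by positivity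
  refine ⟨δ, K + (√δ + K) / c1, hδ, by positivity, fun u v h y hy s hs hse r hsr => ?_⟩
  have hS := h.sol
  have hm : √(HH u v y s) = √δ / s := by
    rw [← hse, Real.sqrt_mul (sq_nonneg s), Real.sqrt_sq hs.le]; field_simp
  have h1 := hq u v h y s hs hse.le
  rw [hm, ← hy] at h1
  have h2 : c1 / s ≤ v y := by
    rw [hc1, ← hy]
    have : c * √δ / 2 / s = c * (√δ / s) / 2 := by ring
    rw [this]; linarith
  have h3 : v y ≤ Mn v y r :=
    le_Mn hS.sg hS.pg hS.pdg hS.plg (fun x => by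
      rw [hS.lg]; have := hS.fpos x; have := hS.gpos x; positivity) y (hs.trans_le hsr).le
  have h4 : Mn u y s ≤ √δ / s := by
    rw [← hm]
    refine Real.le_sqrt_of_sq_le ((Ex_sq_le (hS.pf.comp_affine y s)).trans ?_)
    have := (av_pos hS.symm y s).le
    exact le_add_of_nonneg_right this
  have hder : ∀ t, s ≤ t → HasDerivAt (fun t => K * Mn v y t - K / t - Mn u y t)
      (K * (t * Mn (fun x => v x * u x ^ 2) y t) + K / t ^ 2 - t * Mn (fun x => u x * v x ^ 2) y t) t := by
    intro t ht
    have ht0 := hs.trans_le ht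
    have e1 : HasDerivAt (fun t => K / t) (-(K / t ^ 2)) t := by
      have := (hasDerivAt_inv ht0.ne').const_mul K
      simp only [← div_eq_mul_inv] at this
      refine this.congr_deriv ?_
      ring
    refine ((((hS.symm.Mn_hasDerivAt_u y t).const_mul K).fun_sub e1).fun_sub
      (hS.Mn_hasDerivAt_u y t)).congr_deriv ?_
    ring
  have h5 := mono_of_deriv hder (fun t ht => ?_) le_rfl hsr
  · have h6 : 0 ≤ Mn v y s := Ex_nonneg fun x => (hS.gpos _).le
    have h7 : 0 ≤ K / r := div_nonneg hK.le (hs.trans_le hsr).le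
    have h8 : Mn u y r ≤ K * Mn v y r + (√δ + K) / s := by
      have := mul_nonneg hK.le h6
      have : (√δ + K) / s = √δ / s + K / s := by ring
      linarith
    have h9 : (√δ + K) / s ≤ (√δ + K) / c1 * Mn v y r := by
      have : (√δ + K) / s = (√δ + K) / c1 * (c1 / s) := by field_simp
      rw [this]
      exact mul_le_mul_of_nonneg_left (h2.trans h3) (by positivity)
    linarith
  · have ht0 := hs.trans_le ht
    have e := h.gsol (hg u v h) y one_pos ht0
    have := hr _ _ _ e
    simp only [div_one, one_mul, Real.sqrt_sq ht0.le] at this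
    have e2 : K * (t * Mn (fun x => v x * u x ^ 2) y t) + K / t ^ 2 - t * Mn (fun x => u x * v x ^ 2) y t
      = (K * (t ^ 2 * Mn (fun x => v x * u x ^ 2) y t) + K / t
          - t ^ 2 * Mn (fun x => u x * v x ^ 2) y t) / t := by
      field_simp
    rw [e2]
    exact div_nonneg (sub_nonneg.2 this) ht0.le

lemma HH_comm (u v : Euc n → ℝ) (z : Euc n) (r : ℝ) : HH u v z r = HH v u z r := add_comm _ _

lemma Ent.symm {u v : Euc n → ℝ} (h : Ent u v) : Ent v u :=
  ⟨h.sol.symm, h.gr.imp fun C hC => ⟨hC.1, fun x => by rw [add_comm]; exact hC.2 x⟩⟩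

lemma Mn_sq_le_av {u v : Euc n → ℝ} (h : Sol 1 u v) (z : Euc n) (r : ℝ) : Mn u z r ^ 2 ≤ av u z r :=
  Ex_sq_le (h.pf.comp_affine z r)

/-- At a point of `{u = v}` there is a scale beyond which both components carry a fixed fraction
of the height. -/
lemma comp_gamma (n : ℕ) : ∃ K : ℝ, 1 ≤ K ∧ ∀ u v : Euc n → ℝ, Ent u v → ∀ y, u y = v y →
    ∃ ρ : ℝ, 0 < ρ ∧ 1 ≤ K * (ρ ^ 2 * HH u v y ρ) ∧ ρ ^ 2 * HH u v y ρ ≤ K ∧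
      ∀ r, ρ ≤ r → HH u v y r ≤ K * av u y r ∧ HH u v y r ≤ K * av v y r := by
  obtain ⟨δ, K, hδ, hK, hm⟩ := mean_comp n
  obtain ⟨C2, hC2, h2⟩ := reverse_holder n 2 (by norm_num)
  set M := 81 * (C2 * (1 + K) ^ 2) with hM
  have hM0 : 0 < M := by positivity
  have key : ∀ u v : Euc n → ℝ, Ent u v → ∀ y, u y = v y →
    ∀ s, 0 < s → s ^ 2 * HH u v y s = δ → ∀ r, 3 * s ≤ r → HH u v y r ≤ M * av v y r := by
    intro u v h y hy s hs hse r hr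
    have hS := h.sol
    obtain ⟨t, rfl⟩ : ∃ t, r = 3 * t := ⟨r / 3, by ring⟩
    have ht : s ≤ t := by linarith
    have ht0 := hs.trans_le ht
    have a1 := HH_doubling h y ht0 (by norm_num : (1 : ℝ) ≤ 3)
    have a2 := (hS.HH_le_Mn_q_sq y t).trans
      (h2 _ hS.q_sm hS.q_pg hS.q_pd hS.q_plap hS.q_sub (fun x => (hS.q_pos x).le) y t ht0.le)
    have a3 : Mn (fun x => u x + v x) y (3 * t) ≤ (1 + K) * Mn v y (3 * t) := by
      have : Mn (fun x => u x + v x) y (3 * t) = Mn u y (3 * t) + Mn v y (3 * t) :=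
        Ex_add (hS.pf.comp_affine y _) (hS.pg.comp_affine y _)
      rw [this]
      linarith [hm u v h y hy s hs hse (3 * t) (by linarith)]
    have a4 := pow_le_pow_left₀ (hS.Mn_q_nonneg _ _) a3 2
    have a5 := Mn_sq_le_av hS.symm y (3 * t)
    rw [mul_pow] at a4
    have a6 : (1 + K) ^ 2 * Mn v y (3 * t) ^ 2 ≤ (1 + K) ^ 2 * av v y (3 * t) := by gcongr
    have a7 := a2.trans (mul_le_mul_of_nonneg_left (a4.trans a6) hC2.le)
    have : M * av v y (3 * t) = 81 * (C2 * ((1 + K) ^ 2 * av v y (3 * t))) := by rw [hM]; ring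
    rw [this]
    linarith
  refine ⟨max 1 (max M (max (729 * δ) (1 / δ))), le_max_left _ _, fun u v h y hy => ?_⟩
  set K' := max 1 (max M (max (729 * δ) (1 / δ))) with hK'
  have b1 : M ≤ K' := (le_max_left _ _).trans (le_max_right _ _)
  have b2 : 729 * δ ≤ K' := (le_max_left _ _).trans ((le_max_right _ _).trans (le_max_right _ _))
  have b3 : 1 / δ ≤ K' := (le_max_right _ _).trans ((le_max_right _ _).trans (le_max_right _ _))
  have hS := h.sol
  obtain ⟨s, hs, hse⟩ := exists_rho hS y hδ
  have hH := HH_pos hS y s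
  refine ⟨3 * s, by positivity, ?_, ?_, fun r hr => ⟨?_, ?_⟩⟩
  · have : δ ≤ (3 * s) ^ 2 * HH u v y (3 * s) := by
      have := HH_mono hS y hs (by linarith : s ≤ 3 * s)
      rw [← hse]
      have : s ^ 2 ≤ (3 * s) ^ 2 := by nlinarith
      gcongr
    calc (1 : ℝ) = 1 / δ * δ := by field_simp
      _ ≤ _ := mul_le_mul b3 this hδ.le (by positivity)
  · refine le_trans ?_ b2
    have := HH_doubling h y hs (by norm_num : (1 : ℝ) ≤ 3)
    rw [← hse]
    nlinarith [mul_le_mul_of_nonneg_left this (sq_nonneg s)]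
  · rw [HH_comm]
    rw [HH_comm] at hse
    refine (key v u h.symm y hy.symm s hs hse r hr).trans ?_
    exact mul_le_mul_of_nonneg_right b1 (av_pos hS y r).le
  · refine (key u v h y hy s hs hse r hr).trans ?_
    exact mul_le_mul_of_nonneg_right b1 (av_pos hS.symm y r).le

end comp2

/-! ### A refined Gaussian Poincaré inequality -/

/-- Smooth compactly supported functions. -/
structure TF {n : ℕ} (f : Euc n → ℝ) : Prop where
  sm : Sm f
  cs : HasCompactSupport f

/-- The Mehler (Ornstein–Uhlenbeck) operator with correlation `cos θ`. -/
noncomputable def Pt {n : ℕ} (θ : ℝ) (f : Euc n → ℝ) (x : Euc n) : ℝ :=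
  Mn f (Real.cos θ • x) (Real.sin θ)

section mehler

variable {n : ℕ} {f : Euc n → ℝ}

lemma TF.d (h : TF f) (i : Fin n) : TF (D i f) :=
  ⟨D_smooth h.sm i, h.cs.fderiv_apply ℝ _⟩

lemma TF.bdd (h : TF f) : ∃ B : ℝ, 0 ≤ B ∧ ∀ x, |f x| ≤ B := by
  obtain ⟨B, hB⟩ := h.cs.exists_bound_of_continuous h.sm.continuous
  exact ⟨B, (norm_nonneg _).trans (hB 0), hB⟩

lemma TF.pg (h : TF f) : PG f := by
  obtain ⟨B, _, hB⟩ := h.bdd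
  exact PG.of_le h.sm.continuous (PG.const B) hB

lemma Pt_bdd {B : ℝ} (hf : PG f) (hB : ∀ x, |f x| ≤ B) (θ : ℝ) (x : Euc n) : |Pt θ f x| ≤ B := by
  have := Ex_abs_le (hf.comp_affine (Real.cos θ • x) (Real.sin θ)) (PG.const B) fun y => hB _
  rwa [Ex_const] at this

lemma TF.hasFDerivAt_Pt (h : TF f) (θ : ℝ) (x : Euc n) : HasFDerivAt (Pt θ f)
    (∫ y, Real.cos θ • fderiv ℝ f (Real.cos θ • x + Real.sin θ • y) ∂gam n) x := by
  have hc : Continuous (fderiv ℝ f) := h.sm.continuous_fderiv (by simp)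
  obtain ⟨B, hB⟩ := (h.cs.fderiv ℝ).exists_bound_of_continuous hc
  refine hasFDerivAt_integral_of_dominated_of_fderiv_le (bound := fun _ => |Real.cos θ| * B)
    (F' := fun x y => Real.cos θ • fderiv ℝ f (Real.cos θ • x + Real.sin θ • y))
    (F := fun x y => f (Real.cos θ • x + Real.sin θ • y))
    Filter.univ_mem
    (.of_forall fun z => (h.pg.comp_affine (Real.cos θ • z) (Real.sin θ)).continuous.aestronglyMeasurable)
    (h.pg.comp_affine (Real.cos θ • x) (Real.sin θ)).integrable
    (Continuous.aestronglyMeasurable (by fun_prop)) (.of_forall fun y z _ => ?_) (integrable_const _)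
    (.of_forall fun y z _ => ?_)
  · rw [norm_smul, Real.norm_eq_abs]; gcongr; exact hB _
  · have h1 := (h.sm.diff (Real.cos θ • z + Real.sin θ • y)).hasFDerivAt
    have h2 : HasFDerivAt (fun z : Euc n => Real.cos θ • z + Real.sin θ • y)
        (Real.cos θ • ContinuousLinearMap.id ℝ (Euc n)) z :=
      ((hasFDerivAt_id z).const_smul (Real.cos θ)).add_const _
    refine (h1.comp z h2).congr_fderiv ?_
    ext w; simp

lemma TF.Pt_contDiff (h : TF f) (θ : ℝ) : ContDiff ℝ 1 (Pt θ f) := by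
  have hc : Continuous (fderiv ℝ f) := h.sm.continuous_fderiv (by simp)
  obtain ⟨B, hB⟩ := (h.cs.fderiv ℝ).exists_bound_of_continuous hc
  rw [contDiff_one_iff_fderiv]
  refine ⟨fun x => (h.hasFDerivAt_Pt θ x).differentiableAt, ?_⟩
  rw [funext fun x => (h.hasFDerivAt_Pt θ x).fderiv]
  refine continuous_of_dominated (bound := fun _ => |Real.cos θ| * B)
    (fun x => Continuous.aestronglyMeasurable (by fun_prop)) (fun x => .of_forall fun y => ?_)
    (integrable_const _) (.of_forall fun y => by fun_prop)
  rw [norm_smul, Real.norm_eq_abs]; gcongr; exact hB _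

lemma TF.D_Pt (h : TF f) (θ : ℝ) (i : Fin n) :
    D i (Pt θ f) = fun x => Real.cos θ * Pt θ (D i f) x := by
  have hc : Continuous (fderiv ℝ f) := h.sm.continuous_fderiv (by simp)
  obtain ⟨B, hB⟩ := (h.cs.fderiv ℝ).exists_bound_of_continuous hc
  ext x
  rw [D, (h.hasFDerivAt_Pt θ x).fderiv, integral_smul, smul_apply,
    ContinuousLinearMap.integral_apply]
  · rfl
  · refine Integrable.of_bound (Continuous.aestronglyMeasurable (by fun_prop)) B
      (.of_forall fun y => hB _)

lemma TF.Pt_pg (h : TF f) (θ : ℝ) : PG (Pt θ f) := by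
  obtain ⟨B, _, hB⟩ := h.bdd
  exact PG.of_le (h.Pt_contDiff θ).continuous (PG.const B) (Pt_bdd h.pg hB θ)

lemma TF.Pt_hasDerivAt (h : TF f) (θ : ℝ) (x : Euc n) : HasDerivAt (fun t => Pt t f x)
    (Real.sin θ * (Real.cos θ * (∑ i, Pt θ (D i (D i f)) x) - ∑ i, x i * Pt θ (D i f) x)) θ := by
  choose B hB0 hB using fun i => (h.d i).bdd
  have hder := hasDerivAt_Ex (t₀ := θ) (ε := 1) one_pos
    (G := fun t y => f (Real.cos t • x + Real.sin t • y))
    (G' := fun t y => ∑ i, (-Real.sin t * x i + Real.cos t * y i) *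
      D i f (Real.cos t • x + Real.sin t • y))
    (B := fun y => ∑ i, (|x i| + |y i|) * B i) (by fun_prop)
    (fun t => h.pg.comp_affine _ _)
    (by have := fun i => (h.d i).pg.continuous; fun_prop)
    (fun t _ y => by
      refine (Finset.abs_sum_le_sum_abs _ _).trans (Finset.sum_le_sum fun i _ => ?_)
      rw [abs_mul]
      refine mul_le_mul ((abs_add_le _ _).trans (add_le_add ?_ ?_)) (hB i _) (abs_nonneg _)
        (by positivity)
      · rw [abs_mul, abs_neg]
        exact mul_le_of_le_one_left (abs_nonneg _) (Real.abs_sin_le_one t)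
      · rw [abs_mul]
        exact mul_le_of_le_one_left (abs_nonneg _) (Real.abs_cos_le_one t))
    (fun t _ y => by
      have h1 : HasDerivAt (fun t => Real.cos t • x + Real.sin t • y)
          (-Real.sin t • x + Real.cos t • y) t :=
        ((Real.hasDerivAt_cos t).smul_const x).add ((Real.hasDerivAt_sin t).smul_const y)
      have h2 := (h.sm.diff (Real.cos t • x + Real.sin t • y)).hasFDerivAt.comp_hasDerivAt t h1
      refine h2.congr_deriv ?_
      rw [fderiv_eq_sum]
      simp)
  refine hder.congr_deriv ?_
  have pD : ∀ i, PG fun y => D i f (Real.cos θ • x + Real.sin θ • y) :=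
    fun i => (h.d i).pg.comp_affine _ _
  have e1 : ∀ i, (Ex fun y : Euc n => y i * D i f (Real.cos θ • x + Real.sin θ • y)) =
      Real.sin θ * Pt θ (D i (D i f)) x := by
    intro i
    have e := D_affine (i := i) (Real.cos θ • x) (Real.sin θ) (h.d i).sm.diff
    rw [← ibp (Sm.one ((h.d i).sm.affine (Real.cos θ • x) (Real.sin θ))) (pD i) i, e, Ex_const_mul]
    · rfl
    · rw [e]; exact (PG.const _).mul (((h.d i).d i).pg.comp_affine _ _)
  have e2 : (fun y => ∑ i, (-Real.sin θ * x i + Real.cos θ * y i) *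
      D i f (Real.cos θ • x + Real.sin θ • y)) = fun y => ∑ i,
      ((-Real.sin θ * x i) * D i f (Real.cos θ • x + Real.sin θ • y) +
        Real.cos θ * (y i * D i f (Real.cos θ • x + Real.sin θ • y))) := by
    ext y; exact Finset.sum_congr rfl fun i _ => by ring
  rw [e2, Ex_sum (fun i => by have := pD i; fun_prop), Finset.mul_sum, ← Finset.sum_sub_distrib,
    Finset.mul_sum]
  refine Finset.sum_congr rfl fun i _ => ?_
  rw [Ex_add (by have := pD i; fun_prop) (by have := pD i; fun_prop), Ex_const_mul, Ex_const_mul, e1]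
  rw [show (Ex fun y => D i f (Real.cos θ • x + Real.sin θ • y)) = Pt θ (D i f) x from rfl]
  ring

/-- `β(θ) = ∫ (P_θ f)² dγ`. -/
noncomputable def bt (f : Euc n → ℝ) (θ : ℝ) : ℝ := Ex fun x => Pt θ f x ^ 2

lemma bt_nonneg (f : Euc n → ℝ) (θ : ℝ) : 0 ≤ bt f θ := Ex_nonneg fun _ => sq_nonneg _

/-- `β` decreases at a rate given by the same functional of the partial derivatives. -/
lemma TF.bt_hasDerivAt (h : TF f) (θ : ℝ) :
    HasDerivAt (bt f) (-(2 * Real.sin θ * Real.cos θ) * ∑ i, bt (D i f) θ) θ := by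
  obtain ⟨A, hA0, hA⟩ := h.bdd
  choose B hB0 hB using fun i => (h.d i).bdd
  choose B' hB0' hB' using fun i => ((h.d i).d i).bdd
  have p0 := h.Pt_pg; have p1 := fun i => (h.d i).Pt_pg; have p2 := fun i => ((h.d i).d i).Pt_pg
  have hder := hasDerivAt_Ex (t₀ := θ) (ε := 1) one_pos
    (G := fun t x => Pt t f x ^ 2)
    (G' := fun θ x => 2 * Pt θ f x * (Real.sin θ * (Real.cos θ * (∑ i, Pt θ (D i (D i f)) x) -
      ∑ i, x i * Pt θ (D i f) x)))
    (B := fun x => 2 * A * (∑ i, B' i + ∑ i, |x i| * B i)) (by fun_prop)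
    (fun t => (p0 t).pow 2)
    (by
      have q0 := (p0 θ).continuous; have q1 := fun i => (p1 i θ).continuous
      have q2 := fun i => (p2 i θ).continuous
      fun_prop)
    (fun t _ x => by
      rw [abs_mul, abs_mul, abs_two]
      refine mul_le_mul (by gcongr; exact Pt_bdd h.pg hA t x) ?_ (abs_nonneg _) (by positivity)
      rw [abs_mul]
      refine (mul_le_of_le_one_left (abs_nonneg _) (Real.abs_sin_le_one t)).trans ?_
      refine (abs_sub _ _).trans (add_le_add ?_ ?_)
      · rw [abs_mul]
        refine (mul_le_of_le_one_left (abs_nonneg _) (Real.abs_cos_le_one t)).trans ?_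
        exact (Finset.abs_sum_le_sum_abs _ _).trans (Finset.sum_le_sum fun i _ =>
          Pt_bdd ((h.d i).d i).pg (hB' i) t x)
      · refine (Finset.abs_sum_le_sum_abs _ _).trans (Finset.sum_le_sum fun i _ => ?_)
        rw [abs_mul]; gcongr
        exact Pt_bdd (h.d i).pg (hB i) t x)
    (fun t _ x => ((h.Pt_hasDerivAt t x).pow 2).congr_deriv (by simp))
  refine hder.congr_deriv ?_
  have q0 := p0 θ; have q1 := fun i => p1 i θ; have q2 := fun i => p2 i θ
  have key : ∀ i, (Ex fun x : Euc n => x i * (Pt θ f x * Pt θ (D i f) x)) =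
      Real.cos θ * (bt (D i f) θ) + Real.cos θ * Ex fun x => Pt θ f x * Pt θ (D i (D i f)) x := by
    intro i
    have e : D i (fun x => Pt θ f x * Pt θ (D i f) x) = fun x =>
        Real.cos θ * Pt θ (D i f) x ^ 2 + Real.cos θ * (Pt θ f x * Pt θ (D i (D i f)) x) := by
      rw [D_mul ((h.Pt_contDiff θ).differentiable one_ne_zero)
        (((h.d i).Pt_contDiff θ).differentiable one_ne_zero), h.D_Pt, (h.d i).D_Pt]
      ext x; ring
    rw [← ibp ((h.Pt_contDiff θ).mul ((h.d i).Pt_contDiff θ)) (q0.mul (q1 i)) i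
      (by have := q1 i; have := q2 i; rw [e]; fun_prop), e,
      Ex_add (by have := q1 i; fun_prop) (by have := q2 i; fun_prop), Ex_const_mul, Ex_const_mul]
    rfl
  have e2 : (fun x => 2 * Pt θ f x * (Real.sin θ * (Real.cos θ * (∑ i, Pt θ (D i (D i f)) x) -
      ∑ i, x i * Pt θ (D i f) x))) = fun x => ∑ i, ((2 * Real.sin θ * Real.cos θ) *
        (Pt θ f x * Pt θ (D i (D i f)) x) - (2 * Real.sin θ) * (x i * (Pt θ f x * Pt θ (D i f) x))) := by
    ext x
    rw [Finset.mul_sum, ← Finset.sum_sub_distrib, Finset.mul_sum, Finset.mul_sum]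
    exact Finset.sum_congr rfl fun i _ => by ring
  rw [e2, Ex_sum (fun i => by have := q1 i; have := q2 i; fun_prop), Finset.mul_sum]
  refine Finset.sum_congr rfl fun i _ => ?_
  rw [Ex_sub (by have := q2 i; fun_prop) (by have := q1 i; fun_prop), Ex_const_mul, Ex_const_mul, key]
  ring

end mehler

section poincare

variable {n : ℕ} {f : Euc n → ℝ}

lemma bt_zero (f : Euc n → ℝ) : bt f 0 = Ex fun x => f x ^ 2 := by
  unfold bt Pt
  simp [Mn_zero]

lemma bt_pi_div_two (f : Euc n → ℝ) : bt f (Real.pi / 2) = (Ex f) ^ 2 := by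
  unfold bt Pt Mn
  simp [Ex_const]

lemma sin_cos_nonneg {θ : ℝ} (h0 : 0 ≤ θ) (h1 : θ ≤ Real.pi / 2) :
    0 ≤ 2 * Real.sin θ * Real.cos θ := by
  have := Real.sin_nonneg_of_nonneg_of_le_pi h0 (by linarith [Real.pi_pos])
  have := Real.cos_nonneg_of_neg_pi_div_two_le_of_le (by linarith [Real.pi_pos]) h1
  positivity

lemma antitone_Icc_of_hasDerivAt {F F' : ℝ → ℝ} {a b : ℝ} (hF : ∀ t, HasDerivAt F (F' t) t)
    (h : ∀ t, a ≤ t → t ≤ b → F' t ≤ 0) (hab : a ≤ b) : F b ≤ F a := by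
  refine antitoneOn_of_deriv_nonpos (convex_Icc a b) (fun t _ => (hF t).continuousAt.continuousWithinAt)
    (fun t _ => (hF t).differentiableAt.differentiableWithinAt) (fun t ht => ?_)
    (left_mem_Icc.2 hab) (right_mem_Icc.2 hab) hab
  rw [interior_Icc] at ht
  rw [(hF t).deriv]; exact h t ht.1.le ht.2.le

lemma monotone_Icc_of_hasDerivAt {F F' : ℝ → ℝ} {a b : ℝ} (hF : ∀ t, HasDerivAt F (F' t) t)
    (h : ∀ t, a ≤ t → t ≤ b → 0 ≤ F' t) (hab : a ≤ b) : F a ≤ F b := by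
  have := antitone_Icc_of_hasDerivAt (fun t => (hF t).neg) (fun t h1 h2 => neg_nonpos.2 (h t h1 h2)) hab
  simpa using this

/-- Convexity of `∑ᵢ β_{∂ᵢ f}` in the variable `cos² θ`. -/
lemma TF.sum_bt_le (h : TF f) {θ : ℝ} (h0 : 0 ≤ θ) (h1 : θ ≤ Real.pi / 2) :
    ∑ i, bt (D i f) θ ≤ Real.sin θ ^ 2 * ∑ i, bt (D i f) (Real.pi / 2) +
      Real.cos θ ^ 2 * ∑ i, bt (D i f) 0 := by
  set K : ℝ → ℝ := fun θ => ∑ i, bt (D i f) θ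
  set Λ : ℝ → ℝ := fun θ => ∑ i, ∑ j, bt (D j (D i f)) θ
  have hK : ∀ t, HasDerivAt K (-(2 * Real.sin t * Real.cos t) * Λ t) t := fun t => by
    have := HasDerivAt.fun_sum (u := Finset.univ) fun (i : Fin n) _ => (h.d i).bt_hasDerivAt t
    exact this.congr_deriv (by rw [← Finset.mul_sum])
  have hΛ : ∀ t, HasDerivAt Λ (-(2 * Real.sin t * Real.cos t) *
      ∑ i, ∑ j, ∑ k, bt (D k (D j (D i f))) t) t := fun t => by
    have := HasDerivAt.fun_sum (u := Finset.univ) fun (i : Fin n) _ =>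
      HasDerivAt.fun_sum (u := Finset.univ) fun (j : Fin n) _ => ((h.d i).d j).bt_hasDerivAt t
    exact this.congr_deriv (by simp only [← Finset.mul_sum])
  have hanti : ∀ a b, 0 ≤ a → a ≤ b → b ≤ Real.pi / 2 → Λ b ≤ Λ a := fun a b ha hab hb =>
    antitone_Icc_of_hasDerivAt hΛ (fun t h1 h2 => by
      have := sin_cos_nonneg (ha.trans h1) (h2.trans hb)
      have h3 : 0 ≤ ∑ i, ∑ j, ∑ k, bt (D k (D j (D i f))) t := Finset.sum_nonneg fun i _ =>
        Finset.sum_nonneg fun j _ => Finset.sum_nonneg fun k _ => bt_nonneg _ _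
      nlinarith [mul_nonneg this h3]) hab
  set c := K 0 - K (Real.pi / 2) with hc
  have hG : ∀ t, HasDerivAt (fun t => K t - Real.sin t ^ 2 * K (Real.pi / 2) - Real.cos t ^ 2 * K 0)
      (-(2 * Real.sin t * Real.cos t) * (Λ t - c)) t := fun t => by
    refine (((hK t).sub (((Real.hasDerivAt_sin t).pow 2).mul_const (K (Real.pi / 2)))).sub
      (((Real.hasDerivAt_cos t).pow 2).mul_const (K 0))).congr_deriv ?_
    rw [hc]; simp; ring
  have goal : K θ - Real.sin θ ^ 2 * K (Real.pi / 2) - Real.cos θ ^ 2 * K 0 ≤ 0 := by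
    rcases le_total c (Λ θ) with hle | hle
    · refine (antitone_Icc_of_hasDerivAt hG (fun t ha hb => ?_) h0).trans (by simp)
      nlinarith [mul_nonneg (sin_cos_nonneg ha (hb.trans h1)) (sub_nonneg.2 (hle.trans (hanti t θ ha hb h1)))]
    · refine (monotone_Icc_of_hasDerivAt hG (fun t ha hb => ?_) h1).trans (by simp)
      nlinarith [mul_nonneg (sin_cos_nonneg (h0.trans ha) hb) (sub_nonneg.2 ((hanti θ t h0 ha hb).trans hle))]
  have : K θ ≤ Real.sin θ ^ 2 * K (Real.pi / 2) + Real.cos θ ^ 2 * K 0 := by linarith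
  exact this

lemma TF.poincare (h : TF f) : (Ex fun x => f x ^ 2) - (Ex f) ^ 2 ≤
    1 / 2 * ∑ i, (Ex fun x => D i f x ^ 2) + 1 / 2 * ∑ i, (Ex (D i f)) ^ 2 := by
  simp only [← bt_zero, ← bt_pi_div_two]
  set K0 := ∑ i, bt (D i f) 0
  set K1 := ∑ i, bt (D i f) (Real.pi / 2)
  have hP : ∀ t, HasDerivAt (fun t => bt f t - Real.cos t ^ 4 * (K0 / 2) + Real.sin t ^ 4 * (K1 / 2))
      (2 * Real.sin t * Real.cos t * (Real.sin t ^ 2 * K1 + Real.cos t ^ 2 * K0 -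
        ∑ i, bt (D i f) t)) t := fun t => by
    refine (((h.bt_hasDerivAt t).sub (((Real.hasDerivAt_cos t).pow 4).mul_const (K0 / 2))).add
      (((Real.hasDerivAt_sin t).pow 4).mul_const (K1 / 2))).congr_deriv ?_
    simp; ring
  have := monotone_Icc_of_hasDerivAt (a := 0) (b := Real.pi / 2) hP (fun t h0 h1 =>
    mul_nonneg (sin_cos_nonneg h0 h1) (sub_nonneg.2 (h.sum_bt_le h0 h1))) (by positivity)
  simp at this
  linarith

lemma Ex_tendsto {F : ℕ → Euc n → ℝ} {G B : Euc n → ℝ} (hF : ∀ k, PG (F k)) (hB : PG B)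
    (hb : ∀ k x, |F k x| ≤ B x) (hl : ∀ x, Filter.Tendsto (fun k => F k x) Filter.atTop (nhds (G x))) :
    Filter.Tendsto (fun k => Ex (F k)) Filter.atTop (nhds (Ex G)) :=
  tendsto_integral_of_dominated_convergence B (fun k => (hF k).continuous.aestronglyMeasurable)
    hB.integrable (fun k => .of_forall fun x => hb k x) (.of_forall hl)

/-- Second-order Gaussian Poincaré inequality: modes of Hermite degree at least two are bounded by
half of their Dirichlet energy, and the modes of degree one are measured by the mean gradient. -/
lemma poincare (hf : Sm f) (pf : PG f) (pd : ∀ i, PG (D i f)) :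
    (Ex fun x => f x ^ 2) - (Ex f) ^ 2 ≤
      1 / 2 * ∑ i, (Ex fun x => D i f x ^ 2) + 1 / 2 * ∑ i, (Ex (D i f)) ^ 2 := by
  obtain ⟨χ, M, hM, hχ, hχc, hχ1, hχd, hχl⟩ := exists_cutoff n
  have hT : ∀ k, TF fun x => χ k x * f x := fun k => ⟨(hχ k).mul hf, (hχc k).mul_right⟩
  have hD : ∀ k i, D i (fun x => χ k x * f x) = fun x => D i (χ k) x * f x + χ k x * D i f x :=
    fun k i => D_mul (hχ k).diff hf.diff
  have hb0 : ∀ k x, |χ k x * f x| ≤ |f x| := fun k x => by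
    rw [abs_mul, abs_of_nonneg (hχ1 k x).1]
    exact mul_le_of_le_one_left (abs_nonneg _) (hχ1 k x).2
  have hM1 : ∀ k i x, |D i (χ k) x| ≤ M := fun k i x => (hχd k i x).trans
    (div_le_self hM (by norm_cast; omega))
  have hb1 : ∀ k i x, |D i (fun x => χ k x * f x) x| ≤ M * |f x| + |D i f x| := fun k i x => by
    rw [hD]
    refine (abs_add_le _ _).trans ?_
    rw [abs_mul, abs_mul, abs_of_nonneg (hχ1 k x).1]
    refine add_le_add (by gcongr; exact hM1 k i x) ?_
    exact mul_le_of_le_one_left (abs_nonneg _) (hχ1 k x).2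
  have hl0 : ∀ x, Filter.Tendsto (fun k => χ k x * f x) Filter.atTop (nhds (f x)) := fun x => by
    simpa using (hχl x).mul_const (f x)
  have hMk : Filter.Tendsto (fun k : ℕ => M / ((k : ℝ) + 1)) Filter.atTop (nhds 0) :=
    tendsto_const_div_atTop_nhds_zero_nat M |>.comp (Filter.tendsto_add_atTop_nat 1) |>.congr
      fun k => by simp
  have hl1 : ∀ i x, Filter.Tendsto (fun k => D i (fun x => χ k x * f x) x) Filter.atTop
      (nhds (D i f x)) := fun i x => by
    simp only [hD]
    have := ((squeeze_zero_norm (fun k => hχd k i x) hMk).mul_const (f x)).add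
      ((hχl x).mul_const (D i f x))
    simpa using this
  have sq_abs_le : ∀ {a b : ℝ}, |a| ≤ b → |a ^ 2| ≤ b ^ 2 := fun {a b} h => by
    rw [abs_pow]; exact pow_le_pow_left₀ (abs_nonneg _) h 2
  have pB : ∀ i, PG fun x => M * |f x| + |D i f x| := fun i => by have := pd i; fun_prop
  have t1 := Ex_tendsto (fun k => (hT k).pg.pow 2) (pf.abs.pow 2) (fun k x => sq_abs_le (hb0 k x))
    fun x => (hl0 x).pow 2
  have t2 := Ex_tendsto (fun k => (hT k).pg) pf.abs hb0 hl0
  have t3 := fun i => Ex_tendsto (fun k => ((hT k).d i).pg.pow 2) ((pB i).pow 2)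
    (fun k x => sq_abs_le (hb1 k i x)) fun x => (hl1 i x).pow 2
  have t4 := fun i => Ex_tendsto (fun k => ((hT k).d i).pg) (pB i) (fun k => hb1 k i) (hl1 i)
  exact le_of_tendsto_of_tendsto' (t1.sub (t2.pow 2))
    (((tendsto_finsetSum _ fun i _ => t3 i).const_mul _).add
      ((tendsto_finsetSum _ fun i _ => (t4 i).pow 2).const_mul _)) fun k => (hT k).poincare

end poincare

/-! ### The Gaussian Friedland–Hayman inequality -/

lemma hasDerivAt_mul_abs' (t : ℝ) : HasDerivAt (fun t : ℝ => t * |t|) (2 * |t|) t := by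
  rcases lt_trichotomy t 0 with h | h | h
  · exact ((hasDerivAt_id t).fun_mul (hasDerivAt_abs_neg h)).congr_deriv
      (by simp [abs_of_neg h]; ring)
  · subst h
    rw [hasDerivAt_iff_isLittleO_nhds_zero]
    simp only [zero_add, abs_zero, mul_zero, sub_zero, smul_zero]
    have h1 : (fun h : ℝ => |h|) =o[nhds 0] fun _ => (1 : ℝ) := by
      rw [Asymptotics.isLittleO_one_iff]
      simpa using (continuous_abs (G := ℝ)).tendsto 0
    simpa using (Asymptotics.isBigO_refl (fun h : ℝ => h) (nhds 0)).mul_isLittleO h1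
  · exact ((hasDerivAt_id t).fun_mul (hasDerivAt_abs_pos h)).congr_deriv
      (by simp [abs_of_pos h]; ring)

lemma contDiff_mul_abs : ContDiff ℝ 1 fun t : ℝ => t * |t| := by
  rw [contDiff_one_iff_deriv]
  refine ⟨fun t => (hasDerivAt_mul_abs' t).differentiableAt, ?_⟩
  rw [funext fun t => (hasDerivAt_mul_abs' t).deriv]
  fun_prop

lemma second_deriv_nonpos {w w' : ℝ → ℝ} {w'' t : ℝ} (h1 : ∀ t, HasDerivAt w (w' t) t)
    (h2 : HasDerivAt w' w'' t) (hm : IsLocalMax w t) : w'' ≤ 0 := by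
  by_contra! hc
  have hd : deriv w = w' := funext fun t => (h1 t).deriv
  have hmin := isLocalMin_of_deriv_deriv_pos (by rw [hd, h2.deriv]; exact hc) hm.deriv_eq_zero
    (h1 t).continuousAt
  have heq : w =ᶠ[nhds t] fun _ => w t := by
    filter_upwards [hmin, hm] with s h1 h2 using le_antisymm h2 h1
  have := heq.deriv.deriv_eq
  rw [hd, h2.deriv] at this
  simp at this
  linarith

lemma Ex_comp_neg {n : ℕ} (F : Euc n → ℝ) : (Ex fun x => F (-x)) = Ex F := by
  rw [Ex_eq, Ex_eq, ← integral_neg_eq_self]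
  simp [gd]

/-- The linear form `x ↦ e · x`. -/
def lin {n : ℕ} (e : Fin n → ℝ) (x : Euc n) : ℝ := ∑ i, e i * x i

section FH

variable {n : ℕ} {e : Fin n → ℝ}

@[fun_prop] lemma lin_pg (e : Fin n → ℝ) : PG (lin e) := by unfold lin; fun_prop

lemma lin_sm (e : Fin n → ℝ) : Sm (lin e) := by
  show ContDiff ℝ _ _; unfold lin; fun_prop

lemma D_lin (e : Fin n → ℝ) (i : Fin n) : D i (lin e) = fun _ => e i := by
  unfold lin
  rw [D_sum (fun j => by fun_prop)]
  ext x
  have : ∀ j, D i (fun x : Euc n => e j * x j) x = if j = i then e i else 0 := fun j => by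
    rw [D_const_mul _ (by fun_prop), D_coord]; split_ifs with h <;> simp [h]
  simp [this]

lemma ibp_lin {φ : ℝ → ℝ} (hφ : ContDiff ℝ 1 φ) (κ : ℝ)
    (h0 : PG fun x : Euc n => φ (lin e x + κ)) (h1 : PG fun x : Euc n => deriv φ (lin e x + κ)) :
    (∑ i, e i ^ 2) * (Ex fun x : Euc n => deriv φ (lin e x + κ)) =
      Ex fun x : Euc n => lin e x * φ (lin e x + κ) := by
  have hsm : ContDiff ℝ 1 fun x : Euc n => φ (lin e x + κ) :=
    hφ.comp ((lin_sm e).one.add contDiff_const)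
  have hD : ∀ i, D i (fun x : Euc n => e i * φ (lin e x + κ)) =
      fun x => e i ^ 2 * deriv φ (lin e x + κ) := fun i => by
    rw [D_const_mul _ (hsm.differentiable one_ne_zero), D_comp (f := fun x : Euc n => lin e x + κ)
      (hφ.differentiable one_ne_zero) ((lin_sm e).diff.add_const κ),
      D_add (lin_sm e).diff (by fun_prop), D_lin, D_const]
    ext x; simp; ring
  have := ibp_div (h := fun i (x : Euc n) => e i * φ (lin e x + κ))
    (fun i => contDiff_const.mul hsm) (fun i => (PG.const _).mul h0)
    (by simp only [hD]; exact PG.sum fun i => (PG.const _).mul h1)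
  simp only [hD] at this
  rw [← Ex_const_mul]
  convert this using 2
  · ext x; rw [Finset.sum_mul]
  · ext x; rw [lin, Finset.sum_mul]; exact Finset.sum_congr rfl fun i _ => by ring

lemma Ex_lin (e : Fin n → ℝ) : Ex (lin e) = 0 := by
  have := ibp_lin (e := e) (φ := fun _ => 1) contDiff_const 0 (by fun_prop) (by simp; fun_prop)
  simpa [Ex_const] using this.symm

lemma Ex_lin_sq (e : Fin n → ℝ) : (Ex fun x => lin e x ^ 2) = ∑ i, e i ^ 2 := by
  have := ibp_lin (e := e) (φ := fun t => t) contDiff_id 0 (by fun_prop) (by simp; fun_prop)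
  simpa [Ex_const, ← pow_two] using this.symm

lemma Ex_affine_sq (e : Fin n → ℝ) (κ : ℝ) :
    (Ex fun x => (lin e x + κ) ^ 2) = ∑ i, e i ^ 2 + κ ^ 2 := by
  have : (fun x : Euc n => (lin e x + κ) ^ 2) = fun x =>
      lin e x ^ 2 + ((2 * κ) * lin e x + κ ^ 2) := by ext x; ring
  rw [this, Ex_add (by fun_prop) (by fun_prop), Ex_add (by fun_prop) (by fun_prop), Ex_const_mul,
    Ex_lin, Ex_lin_sq, Ex_const]
  ring

lemma sv_hasDerivAt (e : Fin n → ℝ) (κ : ℝ) :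
    HasDerivAt (fun κ => Ex fun x => (lin e x + κ) * |lin e x + κ|)
      (Ex fun x => 2 * |lin e x + κ|) κ := by
  refine hasDerivAt_Ex (ε := 1) one_pos (G := fun κ x => (lin e x + κ) * |lin e x + κ|)
    (G' := fun κ x => 2 * |lin e x + κ|) (B := fun x => 2 * (|lin e x| + |κ| + 1)) (by fun_prop)
    (fun t => by fun_prop) ((PG.continuous (by fun_prop))) (fun t ht x => ?_) fun t _ x => ?_
  · rw [abs_mul, abs_abs, abs_two]
    have := abs_add_le (lin e x) t
    have := abs_add_le (t - κ) κ
    simp only [sub_add_cancel] at this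
    linarith
  · simpa using (hasDerivAt_mul_abs' (lin e x + t)).comp_const_add (lin e x) t

lemma sv_hasDerivAt' (e : Fin n → ℝ) (κ : ℝ) :
    HasDerivAt (fun κ => Ex fun x => lin e x * ((lin e x + κ) * |lin e x + κ|))
      (Ex fun x => lin e x * (2 * |lin e x + κ|)) κ := by
  refine hasDerivAt_Ex (ε := 1) one_pos (G := fun κ x => lin e x * ((lin e x + κ) * |lin e x + κ|))
    (G' := fun κ x => lin e x * (2 * |lin e x + κ|))
    (B := fun x => |lin e x| * (2 * (|lin e x| + |κ| + 1))) (by fun_prop)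
    (fun t => by fun_prop) ((PG.continuous (by fun_prop))) (fun t ht x => ?_) fun t _ x => ?_
  · rw [abs_mul, abs_mul, abs_abs, abs_two]
    have := abs_add_le (lin e x) t
    have := abs_add_le (t - κ) κ
    simp only [sub_add_cancel] at this
    gcongr
    linarith
  · exact ((hasDerivAt_mul_abs' (lin e x + t)).comp_const_add (lin e x) t).const_mul (lin e x)

lemma sv_eq (he : ∑ i, e i ^ 2 = 1) (κ : ℝ) :
    (Ex fun x : Euc n => 2 * |lin e x + κ|) =
      Ex fun x => lin e x * ((lin e x + κ) * |lin e x + κ|) := by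
  have hd : deriv (fun t : ℝ => t * |t|) = fun t => 2 * |t| :=
    funext fun t => (hasDerivAt_mul_abs' t).deriv
  have := ibp_lin (e := e) contDiff_mul_abs κ (by fun_prop) (by rw [hd]; fun_prop)
  rw [hd, he, one_mul] at this
  exact this

/-- Comparison of the signed second moment `s(κ)` of a shifted standard Gaussian with
`κ √(2 + κ²)`: both vanish at `0` and `s` solves `s'' + κ s' - 2 s = 0`, of which
`κ √(2 + κ²)` is a subsolution. -/
lemma sv_lower (he : ∑ i, e i ^ 2 = 1) {κ : ℝ} (hκ : 0 ≤ κ) :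
    κ * √(2 + κ ^ 2) ≤ Ex fun x => (lin e x + κ) * |lin e x + κ| := by
  set s : ℝ → ℝ := fun κ => Ex fun x => (lin e x + κ) * |lin e x + κ|
  set s1 : ℝ → ℝ := fun κ => Ex fun x => lin e x * ((lin e x + κ) * |lin e x + κ|)
  set s2 : ℝ → ℝ := fun κ => Ex fun x => lin e x * (2 * |lin e x + κ|)
  have hs1 : ∀ κ, HasDerivAt s (s1 κ) κ := fun κ => by
    have := sv_hasDerivAt e κ; rwa [sv_eq he] at this
  have hs2 : ∀ κ, HasDerivAt s1 (s2 κ) κ := sv_hasDerivAt' e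
  have hode : ∀ κ, s2 κ + κ * s1 κ = 2 * s κ := fun κ => by
    show s2 κ + κ * (Ex fun x => lin e x * ((lin e x + κ) * |lin e x + κ|)) = 2 * s κ
    rw [← sv_eq he]
    simp only [s2, s]
    rw [← Ex_const_mul, ← Ex_const_mul, ← Ex_add (by fun_prop) (by fun_prop)]
    congr 1; ext x; ring
  set q : ℝ → ℝ := fun κ => √(2 + κ ^ 2)
  have hq0 : ∀ t, 0 < q t := fun t => Real.sqrt_pos.2 (by positivity)
  have hq2 : ∀ t, q t ^ 2 = 2 + t ^ 2 := fun t => Real.sq_sqrt (by positivity)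
  have hq : ∀ t, HasDerivAt q (t / q t) t := fun t => by
    refine (((hasDerivAt_pow 2 t).const_add 2).sqrt (by positivity)).congr_deriv ?_
    have := (hq0 t).ne'
    simp only [q] at this ⊢
    field_simp
    norm_num
  have hj : ∀ t, HasDerivAt (fun t => t * q t) (q t + t * (t / q t)) t := fun t =>
    ((hasDerivAt_id t).fun_mul (hq t)).congr_deriv (by simp)
  have hj' : ∀ t, HasDerivAt (fun t => q t + t * (t / q t)) (3 * t / q t - t ^ 3 / q t ^ 3) t :=
    fun t => by
      refine ((hq t).fun_add ((hasDerivAt_id t).fun_mul ((hasDerivAt_id t).fun_div (hq t) (hq0 t).ne'))).congr_deriv ?_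
      have := (hq0 t).ne'
      simp only [id]
      field_simp
      ring
  have hw : ∀ t, HasDerivAt (fun t => t * q t - s t) (q t + t * (t / q t) - s1 t) t :=
    fun t => (hj t).sub (hs1 t)
  have hw' : ∀ t, HasDerivAt (fun t => q t + t * (t / q t) - s1 t)
    (3 * t / q t - t ^ 3 / q t ^ 3 - s2 t) t := fun t => (hj' t).sub (hs2 t)
  have hineq : ∀ t, 0 ≤ t → 2 * (t * q t - s t) ≤
      (3 * t / q t - t ^ 3 / q t ^ 3 - s2 t) + t * (q t + t * (t / q t) - s1 t) := fun t ht => by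
    have h1 : 2 * (t * q t) ≤ 3 * t / q t - t ^ 3 / q t ^ 3 + t * (q t + t * (t / q t)) := by
      have hk : 3 * t / q t - t ^ 3 / q t ^ 3 + t * (q t + t * (t / q t)) - 2 * (t * q t) =
          2 * t / q t ^ 3 := by
        have h3 := (hq0 t).ne'
        have h4 : t ^ 2 = q t ^ 2 - 2 := by linarith [hq2 t]
        field_simp
        rw [show t ^ 2 = q t ^ 2 - 2 from h4]; ring
      have : 0 ≤ 2 * t / q t ^ 3 := by have := hq0 t; positivity
      linarith
    have := hode t
    nlinarith
  set C := Ex fun x => lin e x ^ 4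
  have hup : ∀ t, 0 < t → t * q t - s t ≤ 2 * C / t ^ 2 := fun t ht => by
    have h1 : t * q t ≤ 1 + t ^ 2 := by nlinarith [sq_nonneg (q t - t), hq2 t]
    have h2 : (1 + t ^ 2) - 2 * C / t ^ 2 ≤ s t := by
      rw [← he, ← Ex_affine_sq, mul_div_right_comm, ← Ex_const_mul,
        ← Ex_sub (by fun_prop) (by fun_prop)]
      refine Ex_mono (by fun_prop) (by fun_prop) fun x => ?_
      rcases le_total 0 (lin e x + t) with h | h
      · rw [abs_of_nonneg h]
        have : 0 ≤ 2 / t ^ 2 * lin e x ^ 4 := by positivity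
        nlinarith
      · rw [abs_of_nonpos h, div_mul_eq_mul_div]
        have h3 : (lin e x + t) ^ 2 ≤ lin e x ^ 2 := by nlinarith
        have h4 : t ^ 2 ≤ lin e x ^ 2 := by nlinarith
        have : 2 * (lin e x + t) ^ 2 ≤ 2 * lin e x ^ 4 / t ^ 2 := by
          rw [le_div_iff₀ (by positivity)]
          nlinarith [mul_le_mul h3 h4 (by positivity) (by positivity)]
        nlinarith
    linarith
  by_contra! hc
  set δ := κ * q κ - s κ with hδ
  have hδ0 : 0 < δ := sub_pos.2 hc
  have hC : 0 ≤ C := Ex_nonneg fun x => by positivity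
  set M := κ + 1 + 2 * C / δ with hM
  have hM1 : 1 ≤ M := by rw [hM]; have : 0 ≤ 2 * C / δ := by positivity
                         linarith
  have hwM : M * q M - s M < δ := by
    refine (hup M (by linarith)).trans_lt ?_
    rw [div_lt_iff₀ (by positivity)]
    have : 2 * C < δ * M := by
      have : 2 * C = δ * (2 * C / δ) := by field_simp
      rw [hM]; nlinarith
    nlinarith
  obtain ⟨m, hm, hmax⟩ := isCompact_Icc.exists_isMaxOn (s := Icc 0 M) (f := fun t => t * q t - s t)
    ⟨0, by simp; linarith⟩ (fun t _ => (hw t).continuousAt.continuousWithinAt)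
  have hκM : κ ∈ Icc 0 M := ⟨hκ, by
    rw [hM]; have : 0 ≤ 2 * C / δ := by positivity
    linarith⟩
  have hmδ : δ ≤ m * q m - s m := hmax hκM
  have hs0 : s 0 = 0 := by
    have : s 0 = -s 0 := by
      simp only [s]
      nth_rewrite 1 [← Ex_comp_neg]
      rw [← Ex_neg]
      congr 1; ext x
      have : lin e (-x) = -lin e x := by simp [lin]
      rw [this]; simp
    linarith
  have hm0 : m ≠ 0 := by rintro rfl; rw [hs0] at hmδ; linarith
  have hmM : m ≠ M := by rintro h; rw [h] at hmδ; linarith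
  have hmi : m ∈ Ioo 0 M := ⟨lt_of_le_of_ne hm.1 (Ne.symm hm0), lt_of_le_of_ne hm.2 hmM⟩
  have hloc : IsLocalMax (fun t => t * q t - s t) m := hmax.isLocalMax (Icc_mem_nhds hmi.1 hmi.2)
  have h1 := second_deriv_nonpos hw (hw' m) hloc
  have h2 := hloc.hasDerivAt_eq_zero (hw m)
  have h3 := hineq m hm.1
  rw [h2] at h3
  linarith

end FH

section FH

variable {n : ℕ}

lemma affine_aux (e : Fin n → ℝ) {α : ℝ} (hα : 0 ≤ α) :
    α ^ 4 + 2 * α ^ 2 * ∑ i, e i ^ 2 ≤ (Ex fun x => (lin e x + α) * |lin e x + α|) ^ 2 := by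
  set b2 := ∑ i, e i ^ 2 with hb2
  have hb0 : 0 ≤ b2 := Finset.sum_nonneg fun i _ => sq_nonneg _
  rcases hb0.eq_or_lt with h | h
  · have h0 : ∀ i, e i = 0 := fun i => by
      have := (Finset.sum_eq_zero_iff_of_nonneg fun i _ => sq_nonneg (e i)).1 (hb2.symm.trans h.symm) i
        (Finset.mem_univ i)
      exact pow_eq_zero_iff two_ne_zero |>.1 this
    simp only [lin, h0, zero_mul, Finset.sum_const_zero, zero_add, Ex_const, ← h, abs_of_nonneg hα]
    apply le_of_eq; ring
  · set b := √b2
    have hb : 0 < b := Real.sqrt_pos.2 h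
    have hbb : b ^ 2 = b2 := Real.sq_sqrt hb0
    have he : ∑ i, (fun i => e i / b) i ^ 2 = 1 := by
      simp only [div_pow, ← Finset.sum_div, hbb]
      exact div_self h.ne'
    have h1 := sv_lower he (κ := α / b) (by positivity)
    have h2 : (Ex fun x => (lin e x + α) * |lin e x + α|) = b ^ 2 *
        Ex fun x => (lin (fun i => e i / b) x + α / b) * |lin (fun i => e i / b) x + α / b| := by
      rw [← Ex_const_mul]
      congr 1; ext x
      have : lin (fun i => e i / b) x = lin e x / b := by
        simp only [lin, Finset.sum_div]; exact Finset.sum_congr rfl fun i _ => by ring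
      rw [this, ← add_div, abs_div, abs_of_pos hb]
      field_simp
    rw [h2, mul_pow]
    have h3 := pow_le_pow_left₀ (by positivity) h1 2
    rw [mul_pow, Real.sq_sqrt (by positivity)] at h3
    refine le_trans (le_of_eq ?_) (mul_le_mul_of_nonneg_left h3 (by positivity))
    rw [← hbb]; field_simp; ring

/-- The case of an affine function and its positive and negative parts in `fh_mean`. -/
lemma affine_ineq (e : Fin n → ℝ) (α : ℝ) :
    α ^ 4 + 2 * α ^ 2 * ∑ i, e i ^ 2 ≤ (Ex fun x => (lin e x + α) * |lin e x + α|) ^ 2 := by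
  rcases le_total 0 α with h | h
  · exact affine_aux e h
  · have := affine_aux (fun i => -e i) (α := -α) (by linarith)
    have h2 : (Ex fun x => (lin (fun i => -e i) x + -α) * |lin (fun i => -e i) x + -α|) =
        - Ex fun x => (lin e x + α) * |lin e x + α| := by
      rw [← Ex_neg]
      congr 1; ext x
      have : lin (fun i => -e i) x = - lin e x := by simp [lin]
      rw [this, ← neg_add, abs_neg]; ring
    rw [h2] at this
    simpa [Even.neg_pow (show Even 4 by decide)] using this

variable {F G : Euc n → ℝ}

/-- Constraint on the mean value and the mean gradient of a difference of two nonnegative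
functions in the unit ball of `L²`. -/
lemma fh_mean (pF : PG F) (pG : PG G) (F0 : ∀ x, 0 ≤ F x) (G0 : ∀ x, 0 ≤ G x)
    (hF : (Ex fun x => F x ^ 2) ≤ 1) (hG : (Ex fun x => G x ^ 2) ≤ 1) {m : Fin n → ℝ}
    (hm : ∀ i, m i = Ex fun x => x i * (F x - G x)) :
    2 * (Ex fun x => F x - G x) ^ 2 + ∑ i, m i ^ 2 ≤ 2 := by
  set α := Ex fun x => F x - G x with hα
  set e : Fin n → ℝ := fun i => m i / 2 with he
  set k : Euc n → ℝ := fun x => lin e x + α with hk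
  have pk : PG k := by rw [hk]; fun_prop
  set N := α ^ 2 + 2 * ∑ i, e i ^ 2 with hN
  have hN2 : 2 * N = 2 * α ^ 2 + ∑ i, m i ^ 2 := by
    simp only [hN, he, div_pow, ← Finset.sum_div]; ring
  rw [← hN2]
  have h1 : (Ex fun x => (F x - G x) * k x) = N := by
    have : (fun x => (F x - G x) * k x) = fun x => (∑ i, e i * (x i * (F x - G x))) +
        α * (F x - G x) := by
      ext x; simp only [hk, lin, mul_add, Finset.mul_sum]
      congr 1
      · exact Finset.sum_congr rfl fun i _ => by ring
      · ring
    rw [this, Ex_add (by fun_prop) (by fun_prop), Ex_sum (fun i => by fun_prop), Ex_const_mul, ← hα]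
    have : ∀ i, (Ex fun x : Euc n => e i * (x i * (F x - G x))) = 2 * e i ^ 2 := fun i => by
      rw [Ex_const_mul, ← hm]; simp only [he]; ring
    simp only [this, ← Finset.mul_sum]
    rw [hN]; ring
  set a := Ex fun x => max (k x) 0 ^ 2 with ha
  set b := Ex fun x => max (-k x) 0 ^ 2 with hb
  have ha0 : 0 ≤ a := Ex_nonneg fun x => sq_nonneg _
  have hb0 : 0 ≤ b := Ex_nonneg fun x => sq_nonneg _
  have hpos : ∀ t : ℝ, (0 ≤ t ∧ max t 0 = t ∧ max (-t) 0 = 0) ∨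
      (t ≤ 0 ∧ max t 0 = 0 ∧ max (-t) 0 = -t) := fun t => by
    rcases le_total 0 t with h | h
    · exact Or.inl ⟨h, max_eq_left h, max_eq_right (by linarith)⟩
    · exact Or.inr ⟨h, max_eq_right h, max_eq_left (by linarith)⟩
  have hadd : a + b = ∑ i, e i ^ 2 + α ^ 2 := by
    rw [← Ex_affine_sq, ha, hb, ← Ex_add (by fun_prop) (by fun_prop)]
    congr 1; ext x
    rcases hpos (k x) with ⟨_, h1, h2⟩ | ⟨_, h1, h2⟩ <;> rw [h1, h2] <;> simp only [hk] <;> ring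
  have hsub : a - b = Ex fun x => k x * |k x| := by
    rw [ha, hb, ← Ex_sub (by fun_prop) (by fun_prop)]
    congr 1; ext x
    rcases hpos (k x) with ⟨h0, h1, h2⟩ | ⟨h0, h1, h2⟩ <;> rw [h1, h2]
    · rw [abs_of_nonneg h0]; ring
    · rw [abs_of_nonpos h0]; ring
  have haff := affine_ineq e α
  have hs0 : 0 ≤ ∑ i, e i ^ 2 := Finset.sum_nonneg fun i _ => sq_nonneg _
  have hab : 2 * (√a * √b) ≤ ∑ i, e i ^ 2 := by
    refine abs_le_of_sq_le_sq' ?_ hs0 |>.2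
    rw [mul_pow, mul_pow, Real.sq_sqrt ha0, Real.sq_sqrt hb0]
    have : (a - b) ^ 2 = (Ex fun x => (lin e x + α) * |lin e x + α|) ^ 2 := by rw [hsub]
    nlinarith
  have hle : N ≤ √a + √b := by
    rw [← h1]
    have h2 : (Ex fun x => (F x - G x) * k x) ≤ Ex fun x => F x * max (k x) 0 + G x * max (-k x) 0 := by
      refine Ex_mono (by fun_prop) (by fun_prop) fun x => ?_
      have := F0 x; have := G0 x
      rcases hpos (k x) with ⟨h0, h1, h2⟩ | ⟨h0, h1, h2⟩ <;> rw [h1, h2] <;> nlinarith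
    refine h2.trans ?_
    rw [Ex_add (by fun_prop) (by fun_prop)]
    have h3 := Ex_abs_mul_le pF (g := fun x => max (k x) 0) (by fun_prop)
    have h4 := Ex_abs_mul_le pG (g := fun x => max (-k x) 0) (by fun_prop)
    have h5 : √(Ex fun x => F x ^ 2) ≤ 1 := Real.sqrt_le_one.2 hF
    have h6 : √(Ex fun x => G x ^ 2) ≤ 1 := Real.sqrt_le_one.2 hG
    exact add_le_add ((le_abs_self _).trans (h3.trans (mul_le_of_le_one_left (Real.sqrt_nonneg _) h5)))
      ((le_abs_self _).trans (h4.trans (mul_le_of_le_one_left (Real.sqrt_nonneg _) h6)))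
  have hN0 : 0 ≤ N := by positivity
  have hfin : N ^ 2 ≤ N := by
    have := pow_le_pow_left₀ hN0 hle 2
    have h7 : (√a + √b) ^ 2 = a + b + 2 * (√a * √b) := by
      rw [add_sq, Real.sq_sqrt ha0, Real.sq_sqrt hb0]; ring
    linarith
  nlinarith

/-- The Gaussian Friedland–Hayman inequality, in additive form. -/
lemma fh (sF : Sm F) (sG : Sm G) (pF : PG F) (pG : PG G) (pdF : ∀ i, PG (D i F))
    (pdG : ∀ i, PG (D i G)) (F0 : ∀ x, 0 ≤ F x) (G0 : ∀ x, 0 ≤ G x)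
    (hF : (Ex fun x => F x ^ 2) ≤ 1) (hG : (Ex fun x => G x ^ 2) ≤ 1) :
    2 * (Ex fun x => (F x - G x) ^ 2) - 2 ≤ ∑ i, Ex fun x => (D i F x - D i G x) ^ 2 := by
  have hD : ∀ i, D i (fun x => F x - G x) = fun x => D i F x - D i G x :=
    fun i => D_sub sF.diff sG.diff
  have hpd : ∀ i, PG (D i (fun x => F x - G x)) := fun i => by rw [hD]; exact (pdF i).sub (pdG i)
  have h1 := poincare (sF.sub sG) (pF.sub pG) hpd
  have h2 := fh_mean pF pG F0 G0 hF hG (m := fun i => Ex (D i fun x => F x - G x))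
    (fun i => ibp (Sm.one (sF.sub sG)) (pF.sub pG) i (hpd i))
  simp only [hD] at h1 h2
  linarith

end FH

/-! ### Truncated components and the almost monotonicity of the product -/

/-- The component `f` cut off smoothly outside `{f > g}`. -/
noncomputable def tr {n : ℕ} (f g : Euc n → ℝ) (x : Euc n) : ℝ := cut f g x * f x

section trunc

variable {n : ℕ} {C κ : ℝ} {f g : Euc n → ℝ}

lemma Sol.tr_sm (h : Sol κ f g) : Sm (tr f g) := h.cut_sm.mul h.sf

lemma Sol.tr_pg (h : Sol κ f g) : PG (tr f g) := h.PG_cut.mul h.pf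

lemma Sol.D_tr (h : Sol κ f g) (i : Fin n) :
    D i (tr f g) = fun x => D i (cut f g) x * f x + cut f g x * D i f x :=
  D_mul h.cut_sm.diff h.sf.diff

lemma GSol.tr_pd (h : GSol C κ f g) (i : Fin n) : PG (D i (tr f g)) := by
  rw [h.D_tr]
  exact ((PG_D_cut h i).mul h.pf).add (h.PG_cut.mul (h.pdf i))

lemma Sol.tr_nonneg (h : Sol κ f g) (x : Euc n) : 0 ≤ tr f g x :=
  mul_nonneg (cut_nonneg _ _ _) (h.fpos x).le

lemma Sol.tr_le (h : Sol κ f g) (x : Euc n) : tr f g x ≤ f x :=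
  mul_le_of_le_one_left (h.fpos x).le (cut_le_one _ _ _)

lemma GSol.tr_zero (h : GSol C κ f g) {x : Euc n} (hx : f x ≤ g x) :
    tr f g x = 0 ∧ ∀ i, D i (tr f g) x = 0 := by
  obtain ⟨C', hC', hc⟩ := cut_grad C
  have h0 := cut_zero (h.gpos x) hx
  refine ⟨by simp [tr, h0], fun i => ?_⟩
  rcases hc n κ f g h x with ⟨h1, _, _⟩ | h1
  · linarith
  · rw [h.D_tr]; simp [h0, h1]

/-- The two truncated components have disjoint supports, to first order. -/
lemma GSol.tr_disj (h : GSol C κ f g) (x : Euc n) :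
    tr f g x * tr g f x = 0 ∧ ∀ i j, D i (tr f g) x * D j (tr g f) x = 0 := by
  rcases le_total (f x) (g x) with hx | hx
  · have := h.tr_zero hx; simp [this.1, this.2]
  · have := h.symm.tr_zero hx; simp [this.1, this.2]

/-- Where `f` is truncated it is at most `2g`, so `f⁴ ≤ 4f²g²`, and the loss in `f²` is absorbed by the
interaction energy. -/
lemma Sol.tr_sq (h : Sol κ f g) (x : Euc n) :
    f x ^ 2 - tr f g x ^ 2 ≤ κ * (f x ^ 2 * g x ^ 2) + 4 / κ := by
  have hf := h.fpos x; have hg := h.gpos x; have hκ := h.κpos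
  by_cases hx : 2 * g x ≤ f x
  · rw [tr, cut_one hg hx]; simp; positivity
  · push Not at hx
    have : 0 ≤ tr f g x ^ 2 := sq_nonneg _
    rcases le_total 1 (κ * g x ^ 2) with h1 | h1
    · have : 0 ≤ 4 / κ := by positivity
      nlinarith [mul_nonneg (sq_nonneg (f x)) (sub_nonneg.2 h1)]
    · have h2 : g x ^ 2 ≤ 1 / κ := by rw [le_div_iff₀ hκ]; linarith
      have h3 : f x ^ 2 ≤ 4 * g x ^ 2 := by nlinarith
      have : 0 ≤ κ * (f x ^ 2 * g x ^ 2) := by positivity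
      have : 4 / κ = 4 * (1 / κ) := by ring
      linarith

/-- The gradient of the truncated component, up to the interaction density. -/
lemma tr_grad (C : ℝ) (hC : 0 < C) : ∃ K : ℝ, 0 < K ∧ ∀ (n : ℕ) (κ : ℝ) (f g : Euc n → ℝ),
    GSol C κ f g → ∀ x, ∑ i, (D i f x - D i (tr f g) x) ^ 2 ≤
      2 * (nG f x - nG (tr f g) x) + K * (κ * (f x ^ 2 * g x ^ 2)) := by
  obtain ⟨C', hC', hc⟩ := cut_grad C
  refine ⟨4 * (2 * C' + 2 * (81 * C)), by positivity, fun n κ f g h x => ?_⟩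
  have hf := h.fpos x; have hg := h.gpos x; have hκ := h.κpos
  have hχ0 := cut_nonneg f g x; have hχ1 := cut_le_one f g x
  rcases hc n κ f g h x with ⟨h1, h2, h3⟩ | h1
  · have hgf : nG f x ≤ 81 * C * (κ * (f x ^ 2 * g x ^ 2)) := by
      have e1 := h.gb x
      have e2 := nG_nonneg g x
      have e3 : (f x + g x) ^ 4 ≤ 81 * (f x ^ 2 * g x ^ 2) := by
        have : (f x + g x) ^ 2 ≤ 9 * (f x * g x) := by nlinarith
        nlinarith [mul_le_mul this this (by positivity) (by positivity)]
      nlinarith [mul_le_mul_of_nonneg_left e3 (by positivity : 0 ≤ C * κ)]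
    have hgF : nG (tr f g) x ≤ (2 * C' + 2 * (81 * C)) * (κ * (f x ^ 2 * g x ^ 2)) := by
      have e1 : nG (tr f g) x ≤ 2 * (f x ^ 2 * nG (cut f g) x) + 2 * nG f x := by
        simp only [nG, Finset.mul_sum, ← Finset.sum_add_distrib, h.D_tr]
        refine Finset.sum_le_sum fun i _ => ?_
        have e3 : (cut f g x * D i f x) ^ 2 ≤ D i f x ^ 2 := by
          rw [mul_pow]; exact mul_le_of_le_one_left (sq_nonneg _) (pow_le_one₀ hχ0 hχ1)
        nlinarith [sq_nonneg (D i (cut f g) x * f x - cut f g x * D i f x)]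
      have e2 := mul_le_mul_of_nonneg_left h3 (sq_nonneg (f x))
      nlinarith
    have e4 : ∑ i, (D i f x - D i (tr f g) x) ^ 2 ≤ 2 * nG f x + 2 * nG (tr f g) x := by
      simp only [nG, Finset.mul_sum, ← Finset.sum_add_distrib]
      refine Finset.sum_le_sum fun i _ => ?_
      nlinarith [sq_nonneg (D i f x + D i (tr f g) x)]
    linarith
  · have e1 : ∑ i, (D i f x - D i (tr f g) x) ^ 2 = (1 - cut f g x) ^ 2 * nG f x := by
      simp only [nG, Finset.mul_sum, h.D_tr, h1]
      exact Finset.sum_congr rfl fun i _ => by ring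
    have e2 : nG (tr f g) x = cut f g x ^ 2 * nG f x := by
      simp only [nG, Finset.mul_sum, h.D_tr, h1]
      exact Finset.sum_congr rfl fun i _ => by ring
    rw [e1, e2]
    have e3 := nG_nonneg f x
    have : (1 - cut f g x) ^ 2 * nG f x ≤ (2 - 2 * cut f g x ^ 2) * nG f x := by
      apply mul_le_mul_of_nonneg_right _ e3; nlinarith
    have : 0 ≤ 4 * (2 * C' + 2 * (81 * C)) * (κ * (f x ^ 2 * g x ^ 2)) := by positivity
    linarith

lemma Sol.Ex_tr_sq (h : Sol κ f g) : (Ex fun x => f x ^ 2) - (Ex fun x => tr f g x ^ 2) ≤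
    κ * (Ex fun x => f x ^ 2 * g x ^ 2) + 4 / κ := by
  have p1 := h.pf; have p2 := h.pg; have p3 := h.tr_pg
  rw [← Ex_sub (by fun_prop) (by fun_prop), ← Ex_const_mul, ← Ex_const (n := n) (4 / κ),
    ← Ex_add (by fun_prop) (by fun_prop)]
  exact Ex_mono (by fun_prop) (by fun_prop) h.tr_sq

lemma Ex_tr_grad (C : ℝ) (hC : 0 < C) : ∃ K : ℝ, 0 < K ∧ ∀ (n : ℕ) (κ : ℝ) (f g : Euc n → ℝ),
    GSol C κ f g → (Ex fun x => ∑ i, (D i f x - D i (tr f g) x) ^ 2) ≤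
      2 * (Ex (nG f) - Ex (nG (tr f g))) + K * (κ * Ex fun x => f x ^ 2 * g x ^ 2) := by
  obtain ⟨K, hK, hk⟩ := tr_grad C hC
  refine ⟨K, hK, fun n κ f g h => ?_⟩
  have p1 := h.pf; have p2 := h.pg; have p3 := PG_nG h.pdf; have p4 := PG_nG h.tr_pd
  have p5 := h.pdf; have p6 := h.tr_pd
  rw [← Ex_sub (by fun_prop) (by fun_prop), ← Ex_const_mul, ← Ex_const_mul, ← Ex_const_mul,
    ← Ex_add (by fun_prop) (by fun_prop)]
  exact Ex_mono (by fun_prop) (by fun_prop) (hk n κ f g h)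

/-- The truncated components almost satisfy the Friedland–Hayman inequality, and so do the
components themselves. -/
lemma acf_fixed (C : ℝ) (hC : 0 < C) : ∃ K : ℝ, 0 < K ∧ ∀ (n : ℕ) (κ : ℝ) (f g : Euc n → ℝ),
    GSol C κ f g → 2 - K * ((κ * Ex fun x => f x ^ 2 * g x ^ 2) + 1 / κ) *
      (1 / (Ex fun x => f x ^ 2) + 1 / Ex fun x => g x ^ 2) ≤
      Ex (nG f) / (Ex fun x => f x ^ 2) + Ex (nG g) / Ex fun x => g x ^ 2 := by
  obtain ⟨K, hK, hk⟩ := Ex_tr_grad C hC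
  refine ⟨K / 2 + 8, by positivity, fun n κ f g h => ?_⟩
  have h' := h.symm
  have p1 := h.pf; have p2 := h.pg
  set a := Ex fun x => f x ^ 2 with ha
  set b := Ex fun x => g x ^ 2 with hb
  have ha0 : 0 < a := Ex_pos (by fun_prop) fun x => pow_pos (h.fpos x) 2
  have hb0 : 0 < b := Ex_pos (by fun_prop) fun x => pow_pos (h.gpos x) 2
  have q1 := h.tr_pg; have q2 := h'.tr_pg; have q3 := h.tr_pd; have q4 := h'.tr_pd
  have sa : (√a)⁻¹ ^ 2 = 1 / a := by rw [inv_pow, Real.sq_sqrt ha0.le, one_div]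
  have sb : (√b)⁻¹ ^ 2 = 1 / b := by rw [inv_pow, Real.sq_sqrt hb0.le, one_div]
  have hFa : (Ex fun x => tr f g x ^ 2) ≤ a := Ex_mono (by fun_prop) (by fun_prop) fun x =>
    pow_le_pow_left₀ (h.tr_nonneg x) (h.tr_le x) 2
  have hGb : (Ex fun x => tr g f x ^ 2) ≤ b := Ex_mono (by fun_prop) (by fun_prop) fun x =>
    pow_le_pow_left₀ (h'.tr_nonneg x) (h'.tr_le x) 2
  have dF : ∀ i, D i (fun x => (√a)⁻¹ * tr f g x) = fun x => (√a)⁻¹ * D i (tr f g) x :=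
    fun i => D_const_mul _ h.tr_sm.diff
  have dG : ∀ i, D i (fun x => (√b)⁻¹ * tr g f x) = fun x => (√b)⁻¹ * D i (tr g f) x :=
    fun i => D_const_mul _ h'.tr_sm.diff
  have := fh (F := fun x => (√a)⁻¹ * tr f g x) (G := fun x => (√b)⁻¹ * tr g f x)
    (contDiff_const.mul h.tr_sm) (contDiff_const.mul h'.tr_sm) (by fun_prop) (by fun_prop)
    (fun i => by rw [dF]; have := q3 i; fun_prop) (fun i => by rw [dG]; have := q4 i; fun_prop)
    (fun x => mul_nonneg (by positivity) (h.tr_nonneg x))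
    (fun x => mul_nonneg (by positivity) (h'.tr_nonneg x))
    (by simp only [mul_pow, sa]; rw [Ex_const_mul, one_div, inv_mul_le_iff₀ ha0]; linarith)
    (by simp only [mul_pow, sb]; rw [Ex_const_mul, one_div, inv_mul_le_iff₀ hb0]; linarith)
  have e1 : (Ex fun x => ((√a)⁻¹ * tr f g x - (√b)⁻¹ * tr g f x) ^ 2) =
      1 / a * (Ex fun x => tr f g x ^ 2) + 1 / b * Ex fun x => tr g f x ^ 2 := by
    rw [← Ex_const_mul, ← Ex_const_mul, ← Ex_add (by fun_prop) (by fun_prop)]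
    congr 1; ext x
    rw [← sa, ← sb]
    linear_combination (-2 * (√a)⁻¹ * (√b)⁻¹) * (h.tr_disj x).1
  have e2 : ∑ i, (Ex fun x => (D i (fun x => (√a)⁻¹ * tr f g x) x -
      D i (fun x => (√b)⁻¹ * tr g f x) x) ^ 2) = 1 / a * Ex (nG (tr f g)) + 1 / b * Ex (nG (tr g f)) := by
    have p3 := PG_nG h.tr_pd; have p4 := PG_nG h'.tr_pd
    rw [← Ex_sum (fun i => by rw [dF, dG]; have := q3 i; have := q4 i; fun_prop), ← Ex_const_mul,
      ← Ex_const_mul, ← Ex_add (by fun_prop) (by fun_prop)]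
    congr 1; ext x
    simp only [nG, Finset.mul_sum, ← Finset.sum_add_distrib]
    refine Finset.sum_congr rfl fun i _ => ?_
    rw [dF, dG, ← sa, ← sb]
    linear_combination (-2 * (√a)⁻¹ * (√b)⁻¹) * (h.tr_disj x).2 i i
  rw [e1, e2] at this
  have k1 := hk n κ f g h
  have k2 := hk n κ g f h'
  have k1' : 0 ≤ Ex fun x => ∑ i, (D i f x - D i (tr f g) x) ^ 2 :=
    Ex_nonneg fun x => Finset.sum_nonneg fun i _ => sq_nonneg _
  have k2' : 0 ≤ Ex fun x => ∑ i, (D i g x - D i (tr g f) x) ^ 2 :=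
    Ex_nonneg fun x => Finset.sum_nonneg fun i _ => sq_nonneg _
  have m1 := h.Ex_tr_sq
  have m2 := h'.Ex_tr_sq
  have hcm : (fun x => g x ^ 2 * f x ^ 2) = fun x => f x ^ 2 * g x ^ 2 := by ext x; ring
  rw [hcm] at m2 k2
  set Φ := κ * Ex fun x => f x ^ 2 * g x ^ 2
  have hκ := h.κpos
  have hΦ : 0 ≤ Φ := mul_nonneg hκ.le (Ex_nonneg fun x => by positivity)
  have hi : 0 ≤ 1 / κ := by positivity
  have h4 : 4 / κ = 4 * (1 / κ) := by ring
  rw [h4] at m1 m2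
  have key : ∀ {a B Df DF : ℝ}, 0 < a → a - B ≤ Φ + 4 * (1 / κ) → DF ≤ Df + K / 2 * Φ →
      1 / a * DF - 2 * (1 / a * B) ≤ Df / a - 2 + (K / 2 + 8) * (Φ + 1 / κ) * (1 / a) := by
    intro a B Df DF ha h1 h2
    have : 1 / a * DF - 2 * (1 / a * B) = (DF - 2 * B) / a := by ring
    rw [this]
    have : Df / a - 2 + (K / 2 + 8) * (Φ + 1 / κ) * (1 / a) =
      (Df - 2 * a + (K / 2 + 8) * (Φ + 1 / κ)) / a := by field_simp
    rw [this]
    gcongr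
    nlinarith [mul_nonneg hK.le hi]
  have g1 := key (Df := Ex (nG f)) ha0 m1 (by linarith : Ex (nG (tr f g)) ≤ _)
  have g2 := key (Df := Ex (nG g)) hb0 m2 (by linarith : Ex (nG (tr g f)) ≤ _)
  rw [mul_add]
  linarith

end trunc

/-! ### Nondegeneracy at points of coincidence -/

section acf

variable {n : ℕ} {u v : Euc n → ℝ}

/-- The Friedland–Hayman inequality for `u` and `v` at centre `z` and scale `r`, up to errors. -/
lemma acf_ineq (n : ℕ) : ∃ K : ℝ, 0 < K ∧ ∀ u v : Euc n → ℝ, Ent u v → ∀ z r, 0 < r →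
    2 - K * (ph u v z r + 1 / r ^ 2) * (1 / av u z r + 1 / av v z r) ≤
      dr u z r / av u z r + dr v z r / av v z r := by
  obtain ⟨C, hC, hg⟩ := grad_bound n
  obtain ⟨K, hK, hk⟩ := acf_fixed C hC
  refine ⟨K, hK, fun u v h z r hr => ?_⟩
  have h1 := h.gsol (hg u v h) z one_pos hr
  simp only [one_mul, div_one] at h1
  have := hk n _ _ _ h1
  rwa [Ex_nG_affine h.sol.sf, Ex_nG_affine h.sol.sg] at this

/-- Alt–Caffarelli–Friedman almost monotonicity: beyond the scale `ρ`, the product of the normalised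
heights of `u` and `v` loses at most a fixed factor. The error terms of `acf_ineq` are integrable in
`dr/r`, because the interaction energy is controlled by the derivative of the frequency. -/
lemma log_prod_lower (n : ℕ) : ∃ K : ℝ, 1 ≤ K ∧ ∀ u v : Euc n → ℝ, Ent u v → ∀ y, u y = v y →
    ∃ ρ : ℝ, 0 < ρ ∧ 1 ≤ K * (ρ ^ 2 * HH u v y ρ) ∧ ρ ^ 2 * HH u v y ρ ≤ K ∧
      (HH u v y ρ ≤ K * av u y ρ ∧ HH u v y ρ ≤ K * av v y ρ) ∧ ∀ r, ρ ≤ r →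
      Real.log (av u y ρ) + Real.log (av v y ρ) - 4 * Real.log ρ - K ≤
      Real.log (av u y r) + Real.log (av v y r) - 4 * Real.log r := by
  obtain ⟨K, hK, hk⟩ := acf_ineq n
  obtain ⟨K2, hK2, hk2⟩ := comp_gamma n
  refine ⟨max K2 (2 * K * K2 + 2 * K * K2 ^ 2), hK2.trans (le_max_left _ _), fun u v h y hy => ?_⟩
  obtain ⟨ρ, hρ, h1, h2, h3⟩ := hk2 u v h y hy
  have hs := h.sol
  have hHρ := HH_pos hs y ρ
  have hle : K2 ≤ max K2 (2 * K * K2 + 2 * K * K2 ^ 2) := le_max_left _ _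
  have hK20 : 0 < K2 := by linarith
  refine ⟨ρ, hρ, h1.trans (by gcongr), h2.trans hle,
    ⟨(h3 ρ le_rfl).1.trans (mul_le_mul_of_nonneg_right hle (av_pos hs y ρ).le),
      (h3 ρ le_rfl).2.trans (mul_le_mul_of_nonneg_right hle (av_pos hs.symm y ρ).le)⟩, fun r hr => ?_⟩
  choose! N' hN using fun t (ht : 0 < t) => NN_hasDerivAt hs y ht
  have hder : ∀ t, ρ ≤ t → HasDerivAt (fun t => Real.log (av u y t) + Real.log (av v y t) -
      4 * Real.log t + 2 * K * K2 * (EE u v y t / HH u v y t) - 2 * K * K2 ^ 2 * ρ ^ 2 * (t ^ 2)⁻¹)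
      (2 * (dr u y t + ph u v y t) / t / av u y t + 2 * (dr v y t + ph v u y t) / t / av v y t -
        4 * t⁻¹ + 2 * K * K2 * N' t - 2 * K * K2 ^ 2 * ρ ^ 2 * (-(2 * t) / (t ^ 2) ^ 2)) t := by
    intro t ht
    have ht0 : 0 < t := hρ.trans_le ht
    refine (((((av_hasDerivAt hs y ht0).log (av_pos hs y t).ne').fun_add
      ((av_hasDerivAt hs.symm y ht0).log (av_pos hs.symm y t).ne')).fun_sub
      ((Real.hasDerivAt_log ht0.ne').const_mul 4)).fun_add ((hN t ht0).1.const_mul _)).fun_sub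
      (HasDerivAt.const_mul _ ?_)
    exact ((hasDerivAt_pow 2 t).fun_inv (by positivity)).congr_deriv (by norm_num)
  have hmono := mono_of_deriv hder (fun t ht => ?_) le_rfl hr
  · have n1 : EE u v y r / HH u v y r ≤ 1 :=
      (div_le_one (HH_pos hs y r)).2 (EE_le_HH h y (hρ.trans_le hr))
    have n2 : 0 ≤ EE u v y ρ / HH u v y ρ := div_nonneg (EE_nonneg _ _ _ _) hHρ.le
    have n3 : ρ ^ 2 * (ρ ^ 2)⁻¹ = 1 := mul_inv_cancel₀ (by positivity)
    have n4 : 0 ≤ ρ ^ 2 * (r ^ 2)⁻¹ := by positivity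
    have m1 := mul_le_mul_of_nonneg_left n1 (by positivity : 0 ≤ 2 * K * K2)
    have m2 := mul_nonneg (by positivity : 0 ≤ 2 * K * K2) n2
    have m4 := mul_nonneg (by positivity : 0 ≤ 2 * K * K2 ^ 2) n4
    have m3 : 2 * K * K2 ^ 2 * ρ ^ 2 * (ρ ^ 2)⁻¹ = 2 * K * K2 ^ 2 := by rw [mul_assoc, n3, mul_one]
    have := le_max_right K2 (2 * K * K2 + 2 * K * K2 ^ 2)
    linarith
  · have ht0 : 0 < t := hρ.trans_le ht
    set a := av u y t with ha
    set b := av v y t with hb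
    have ha0 : 0 < a := av_pos hs y t
    have hb0 : 0 < b := av_pos hs.symm y t
    set H := HH u v y t with hH
    have hH0 : 0 < H := HH_pos hs y t
    set Φ := ph u v y t
    have hΦ : 0 ≤ Φ := ph_nonneg _ _ _ _
    have c1 := hk u v h y t ht0
    have c2 := h3 t ht
    have d1 : 1 / a ≤ K2 / H := by rw [div_le_div_iff₀ ha0 hH0]; linarith [c2.1]
    have d2 : 1 / b ≤ K2 / H := by rw [div_le_div_iff₀ hb0 hH0]; linarith [c2.2]
    have d3 : 1 / H ≤ K2 * ρ ^ 2 := by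
      rw [div_le_iff₀ hH0]
      have := HH_mono hs y hρ ht
      have := mul_le_mul_of_nonneg_left this (by positivity : 0 ≤ K2 * ρ ^ 2)
      linarith
    have d4 : (Φ + 1 / t ^ 2) * (1 / a + 1 / b) ≤ 2 * K2 * (Φ / H) + 2 * K2 ^ 2 * ρ ^ 2 * (1 / t ^ 2) := by
      have e1 : (Φ + 1 / t ^ 2) * (1 / a + 1 / b) ≤ (Φ + 1 / t ^ 2) * (2 * (K2 / H)) := by
        gcongr; linarith
      have e2 : (Φ + 1 / t ^ 2) * (2 * (K2 / H)) = 2 * K2 * (Φ / H) + 2 * K2 * (1 / t ^ 2) * (1 / H) := by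
        ring
      have e3 := mul_le_mul_of_nonneg_left d3 (by positivity : 0 ≤ 2 * K2 * (1 / t ^ 2))
      nlinarith
    have d5 := mul_le_mul_of_nonneg_left d4 hK.le
    have d6 := (hN t ht0).2
    have d7 : K * (2 * K2 * (Φ / H)) * (2 / t) ≤ 2 * K * K2 * N' t := by
      have := mul_le_mul_of_nonneg_left d6 (by positivity : 0 ≤ 2 * K * K2)
      refine le_trans (le_of_eq ?_) this
      ring
    have hph : ph v u y t = Φ := ph_comm _ _ _ _
    rw [hph]
    have e5 : 2 * (dr u y t + Φ) / t / a + 2 * (dr v y t + Φ) / t / b - 4 * t⁻¹ =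
        (2 / t) * ((dr u y t / a + dr v y t / b - 2) + Φ * (1 / a + 1 / b)) := by
      field_simp; ring
    have e6 : 2 * K * K2 ^ 2 * ρ ^ 2 * (-(2 * t) / (t ^ 2) ^ 2) =
        -((2 / t) * (K * (2 * K2 ^ 2 * ρ ^ 2 * (1 / t ^ 2)))) := by field_simp
    rw [e5, e6]
    have e7 : 0 ≤ Φ * (1 / a + 1 / b) := by positivity
    have e8 : -(K * (2 * K2 * (Φ / H)) + K * (2 * K2 ^ 2 * ρ ^ 2 * (1 / t ^ 2))) ≤
        (dr u y t / a + dr v y t / b - 2) + Φ * (1 / a + 1 / b) := by linarith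
    have e9 := mul_le_mul_of_nonneg_left e8 (by positivity : 0 ≤ 2 / t)
    linarith

/-- Linear nondegeneracy and growth of both components from a point of `{u = v}`. -/
lemma acf_lower (n : ℕ) : ∃ c C : ℝ, 0 < c ∧ 0 < C ∧ ∀ u v : Euc n → ℝ, Ent u v → ∀ y, u y = v y →
    ∃ ρ : ℝ, 0 < ρ ∧ ∀ r, ρ ≤ r → c / ρ ^ 4 ≤ av u y r / r ^ 2 ∧ c / ρ ^ 4 ≤ av v y r / r ^ 2 ∧
      HH u v y r / r ^ 2 ≤ C / ρ ^ 4 := by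
  obtain ⟨K, hK, hk⟩ := log_prod_lower n
  have hK0 : 0 < K := by linarith
  set c0 := Real.exp (-K) / K ^ 4 with hc0
  have hc00 : 0 < c0 := by positivity
  refine ⟨c0 / (3 / 2 * K), 3 / 2 * K, by positivity, by positivity, fun u v h y hy => ?_⟩
  obtain ⟨ρ, hρ, h1, h2, h3, h4⟩ := hk u v h y hy
  refine ⟨ρ, hρ, fun r hr => ?_⟩
  have hr0 : 0 < r := hρ.trans_le hr
  have hs := h.sol
  have a0 := av_pos hs y r; have b0 := av_pos hs.symm y r
  have aρ := av_pos hs y ρ; have bρ := av_pos hs.symm y ρ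
  have hHr : HH u v y r / r ^ 2 ≤ 3 / 2 * K / ρ ^ 4 := by
    refine (HHr_le h y hρ hr).trans ?_
    rw [mul_div_assoc]
    gcongr 3 / 2 * ?_
    rw [div_le_div_iff₀ (by positivity) (by positivity)]
    nlinarith [mul_le_mul_of_nonneg_right h2 (by positivity : 0 ≤ ρ ^ 2)]
  have hprod : c0 / ρ ^ 8 ≤ (av u y r / r ^ 2) * (av v y r / r ^ 2) := by
    have e1 : Real.log ((av u y r / r ^ 2) * (av v y r / r ^ 2)) =
        Real.log (av u y r) + Real.log (av v y r) - 4 * Real.log r := by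
      rw [Real.log_mul (by positivity) (by positivity), Real.log_div a0.ne' (by positivity),
        Real.log_div b0.ne' (by positivity), Real.log_pow]
      push_cast; ring
    have e2 : Real.log (Real.exp (-K) * ((av u y ρ / ρ ^ 2) * (av v y ρ / ρ ^ 2))) =
        Real.log (av u y ρ) + Real.log (av v y ρ) - 4 * Real.log ρ - K := by
      rw [Real.log_mul (by positivity) (by positivity), Real.log_exp,
        Real.log_mul (by positivity) (by positivity), Real.log_div aρ.ne' (by positivity),
        Real.log_div bρ.ne' (by positivity), Real.log_pow]
      push_cast; ring
    have e3 := h4 r hr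
    rw [← e1, ← e2] at e3
    have e4 := (Real.log_le_log_iff (by positivity) (by positivity)).1 e3
    refine le_trans ?_ e4
    have f1 : 1 / (K ^ 2 * ρ ^ 4) ≤ av u y ρ / ρ ^ 2 := by
      rw [div_le_div_iff₀ (by positivity) (by positivity)]
      have := mul_le_mul_of_nonneg_left h3.1 (by positivity : 0 ≤ K * ρ ^ 2)
      nlinarith [mul_le_mul_of_nonneg_right (h1.trans (by linarith : _ ≤ K * ρ ^ 2 * (K * av u y ρ)))
        (by positivity : 0 ≤ ρ ^ 2)]
    have f2 : 1 / (K ^ 2 * ρ ^ 4) ≤ av v y ρ / ρ ^ 2 := by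
      rw [div_le_div_iff₀ (by positivity) (by positivity)]
      have := mul_le_mul_of_nonneg_left h3.2 (by positivity : 0 ≤ K * ρ ^ 2)
      nlinarith [mul_le_mul_of_nonneg_right (h1.trans (by linarith : _ ≤ K * ρ ^ 2 * (K * av v y ρ)))
        (by positivity : 0 ≤ ρ ^ 2)]
    have f3 : c0 / ρ ^ 8 = Real.exp (-K) * (1 / (K ^ 2 * ρ ^ 4) * (1 / (K ^ 2 * ρ ^ 4))) := by
      rw [hc0]; field_simp
    rw [f3]
    gcongr
  have key : ∀ {A B : ℝ}, 0 < A → c0 / ρ ^ 8 ≤ A * B → B ≤ 3 / 2 * K / ρ ^ 4 →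
      c0 / (3 / 2 * K) / ρ ^ 4 ≤ A := by
    intro A B hA p1 p2
    have p3 := p1.trans (mul_le_mul_of_nonneg_left p2 hA.le)
    rw [mul_div_assoc', div_le_div_iff₀ (by positivity) (by positivity)] at p3
    rw [div_div, div_le_iff₀ (by positivity)]
    have p4 : 0 < ρ ^ 4 := by positivity
    have : ρ ^ 8 = ρ ^ 4 * ρ ^ 4 := by ring
    rw [this] at p3
    nlinarith
  refine ⟨key (by positivity) hprod (le_trans ?_ hHr), key (by positivity)
    (hprod.trans (le_of_eq (mul_comm _ _))) (le_trans ?_ hHr), hHr⟩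
  · rw [HH]; gcongr; linarith
  · rw [HH]; gcongr; linarith

end acf

section unif

variable {n : ℕ} {u v : Euc n → ℝ}

/-- Normalised heights at two centres are comparable, up to a change of scale. -/
lemma HH_shift (h : Ent u v) (y z : Euc n) {r : ℝ} (hr : 0 < r) (hd : ‖y - z‖ ≤ r) :
    HH u v y r / r ^ 2 ≤ 9 * (3 ^ n * Real.exp (1 / 16)) * (HH u v z (3 * r) / (3 * r) ^ 2) := by
  have hξ : ‖r⁻¹ • (y - z)‖ ≤ 1 := by
    rw [norm_smul, Real.norm_eq_abs, abs_of_pos (by positivity), inv_mul_le_iff₀ hr]; simpa using hd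
  have hy : z + r • (r⁻¹ • (y - z)) = y := by
    rw [smul_smul, mul_inv_cancel₀ hr.ne', one_smul, add_sub_cancel]
  have key : ∀ F : Euc n → ℝ, PG F → av F y r ≤ 3 ^ n * Real.exp (1 / 16) * av F z (3 * r) := by
    intro F hF
    have h1 := Mn_shift_le (hF.pow 2) (fun x => sq_nonneg _) z (r⁻¹ • (y - z)) r
    rw [hy] at h1
    refine h1.trans ?_
    have h0 : 0 ≤ Mn (fun x => F x ^ 2) z (3 * r) := Ex_nonneg fun _ => sq_nonneg _
    rw [av]
    gcongr
    nlinarith [norm_nonneg (r⁻¹ • (y - z))]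
  have k1 := key u h.sol.pf
  have k2 := key v h.sol.pg
  rw [show 9 * (3 ^ n * Real.exp (1 / 16)) * (HH u v z (3 * r) / (3 * r) ^ 2) =
    (3 ^ n * Real.exp (1 / 16) * HH u v z (3 * r)) / r ^ 2 by field_simp; ring]
  rw [HH, HH]
  gcongr
  linarith

/-- Nondegeneracy and linear growth hold at all large scales, with constants and scales that do not
depend on the centre `y` in `{u = v}`. -/
lemma uniform_bounds (h : Ent u v) : ∃ ρ c C : ℝ, 0 < ρ ∧ 0 < c ∧ 0 < C ∧ ∀ y, u y = v y →
    ∀ r, ρ ≤ r → c ≤ av u y r / r ^ 2 ∧ c ≤ av v y r / r ^ 2 ∧ HH u v y r / r ^ 2 ≤ C := by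
  obtain ⟨c, C, hc, hC, hac⟩ := acf_lower n
  by_cases hne : ∃ y, u y = v y
  swap
  · push Not at hne
    exact ⟨1, 1, 1, one_pos, one_pos, one_pos, fun y hy => absurd hy (hne y)⟩
  obtain ⟨y₀, hy₀⟩ := hne
  obtain ⟨ρ₀, hρ₀, h₀⟩ := hac u v h y₀ hy₀
  set S := 9 * (3 ^ n * Real.exp (1 / 16)) with hS
  have hS0 : 0 < S := by positivity
  set T := S * C / (c * ρ₀ ^ 4) with hT
  set T' := c / (S * C * ρ₀ ^ 4) with hT'
  have hT0 : 0 < T := by positivity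
  have hT'0 : 0 < T' := by positivity
  refine ⟨max 1 (1 / T'), c * T', C * T, by positivity, by positivity, by positivity, ?_⟩
  intro y hy r hr
  obtain ⟨ρ, hρ, h1⟩ := hac u v h y hy
  -- a scale at which both centres see each other
  set s := max (max ρ ρ₀) ‖y - y₀‖ with hs
  have s1 : ρ ≤ s := (le_max_left _ _).trans (le_max_left _ _)
  have s2 : ρ₀ ≤ s := (le_max_right _ _).trans (le_max_left _ _)
  have s3 : ‖y - y₀‖ ≤ s := le_max_right _ _
  have s0 : 0 < s := hρ.trans_le s1
  have e1 := HH_shift h y y₀ s0 s3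
  have e2 := HH_shift h y₀ y s0 (by rwa [norm_sub_rev])
  rw [← hS] at e1 e2
  have a1 := h1 s s1
  have a2 := h₀ s s2
  have b1 := (h1 (3 * s) (by linarith)).2.2
  have b2 := (h₀ (3 * s) (by linarith)).2.2
  have low : ∀ z, av u z s / s ^ 2 ≤ HH u v z s / s ^ 2 := fun z => by
    have := av_pos h.sol.symm z s
    rw [HH]; gcongr; linarith
  have i1 : c / ρ ^ 4 ≤ S * (C / ρ₀ ^ 4) :=
    a1.1.trans ((low y).trans (e1.trans (mul_le_mul_of_nonneg_left b2 hS0.le)))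
  have i2 : c / ρ₀ ^ 4 ≤ S * (C / ρ ^ 4) :=
    a2.1.trans ((low y₀).trans (e2.trans (mul_le_mul_of_nonneg_left b1 hS0.le)))
  have j1 : 1 / ρ ^ 4 ≤ T := by
    rw [hT]
    calc 1 / ρ ^ 4 = (c / ρ ^ 4) / c := by field_simp
      _ ≤ (S * (C / ρ₀ ^ 4)) / c := by gcongr
      _ = _ := by field_simp
  have j2 : T' ≤ 1 / ρ ^ 4 := by
    rw [hT']
    calc c / (S * C * ρ₀ ^ 4) = (c / ρ₀ ^ 4) / (S * C) := by field_simp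
      _ ≤ (S * (C / ρ ^ 4)) / (S * C) := by gcongr
      _ = _ := by field_simp
  have j3 : ρ ≤ max 1 (1 / T') := by
    rcases le_total ρ 1 with hle | hle
    · exact hle.trans (le_max_left _ _)
    · refine (le_self_pow₀ hle (by norm_num : (4 : ℕ) ≠ 0)).trans (le_trans ?_ (le_max_right _ _))
      rw [le_div_iff₀ hT'0]
      rw [le_div_iff₀ (by positivity)] at j2
      linarith
  obtain ⟨r1, r2, r3⟩ := h1 r (j3.trans hr)
  have k1 : c * T' ≤ c / ρ ^ 4 := by
    rw [div_eq_mul_one_div]; gcongr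
  have k2 : C / ρ ^ 4 ≤ C * T := by
    rw [div_eq_mul_one_div]; gcongr
  exact ⟨k1.trans r1, k1.trans r2, r3.trans k2⟩

end unif

/-! ### Almost homogeneous, almost segregated solutions -/

/-- Solutions that are close, with error `τ`, to one-homogeneous segregated ones. -/
structure Near {n : ℕ} (C M τ κ : ℝ) (f g : Euc n → ℝ) : Prop extends GSol C κ f g where
  C0 : 0 < C
  τ0 : 0 < τ
  small : 6 * M * τ ≤ 1
  M1 : 1 ≤ M
  fle : (Ex fun x => f x ^ 2) ≤ M
  gle : (Ex fun x => g x ^ 2) ≤ M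
  fge : 1 ≤ M * Ex f
  gge : 1 ≤ M * Ex g
  hf : (Ex fun x => (xD f x - f x) ^ 2) ≤ τ ^ 4
  hg : (Ex fun x => (xD g x - g x) ^ 2) ≤ τ ^ 4
  phi : (κ * Ex fun x => f x ^ 2 * g x ^ 2) ≤ τ ^ 4
  kap : 1 / κ ≤ τ ^ 4

namespace Near

variable {n : ℕ} {C M τ κ : ℝ} {f g : Euc n → ℝ}

lemma symm (h : Near C M τ κ f g) : Near C M τ κ g f :=
  ⟨h.toGSol.symm, h.C0, h.τ0, h.small, h.M1, h.gle, h.fle, h.gge, h.fge, h.hg, h.hf, by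
    simpa only [mul_comm] using h.phi, h.kap⟩

lemma τ1 (h : Near C M τ κ f g) : τ ≤ 1 / 6 := by
  have := h.M1; have := h.small; have := h.τ0; nlinarith

lemma τ4 (h : Near C M τ κ f g) : τ ^ 4 ≤ τ ^ 2 := by
  have := h.τ1; have := h.τ0
  exact pow_le_pow_of_le_one h.τ0.le (by linarith) (by norm_num)

lemma phi0 (h : Near C M τ κ f g) : 0 ≤ κ * Ex fun x => f x ^ 2 * g x ^ 2 :=
  mul_nonneg h.κpos.le (Ex_nonneg fun _ => by positivity)

lemma xD_mean (h : Near C M τ κ f g) : |Ex (xD f) - Ex f| ≤ τ ^ 2 := by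
  have p1 := h.pf; have p2 := PG_xD h.pdf
  rw [← Ex_sub (by fun_prop) (by fun_prop)]
  refine abs_le_of_sq_le_sq ?_ (by positivity)
  refine (Ex_sq_le (by fun_prop)).trans (h.hf.trans (by rw [← pow_mul]))

lemma energy_near (h : Near C M τ κ f g) :
    |Ex (nG f) - Ex fun x => f x ^ 2| ≤ (M + 1) * τ ^ 2 := by
  have p1 := h.pf; have p2 := PG_xD h.pdf
  have e := h.energy
  have e2 : (Ex fun x => f x * xD f x) - (Ex fun x => f x ^ 2) =
      Ex fun x => f x * (xD f x - f x) := by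
    rw [← Ex_sub (by fun_prop) (by fun_prop)]; congr 1; ext x; ring
  have e3 : |Ex fun x => f x * (xD f x - f x)| ≤ M * τ ^ 2 := by
    refine abs_le_of_sq_le_sq ?_ (by have := h.M1; positivity)
    refine (Ex_cs (by fun_prop) (by fun_prop)).trans ?_
    calc _ ≤ M * τ ^ 4 := mul_le_mul h.fle h.hf (Ex_nonneg fun _ => sq_nonneg _) (by linarith [h.M1])
      _ ≤ M ^ 2 * τ ^ 4 := by gcongr; nlinarith [h.M1]
      _ = _ := by ring
  have := h.phi; have := h.phi0; have := h.τ4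
  rw [abs_le] at e3 ⊢
  constructor <;> nlinarith

lemma tr_sq_ge (h : Near C M τ κ f g) :
    (Ex fun x => f x ^ 2) - 5 * τ ^ 4 ≤ Ex fun x => tr f g x ^ 2 := by
  have := h.Ex_tr_sq; have := h.phi; have := h.kap
  have : 4 / κ = 4 * (1 / κ) := by ring
  linarith

lemma tr_sq_le (h : Near C M τ κ f g) : (Ex fun x => tr f g x ^ 2) ≤ Ex fun x => f x ^ 2 :=
  Ex_mono (h.tr_pg.pow 2) (h.pf.pow 2) fun x => by
    have := h.tr_nonneg x; have := h.tr_le x; gcongr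

lemma tr_mean (h : Near C M τ κ f g) : |Ex f - Ex (tr f g)| ≤ 3 * τ ^ 2 := by
  have p1 := h.pf; have p2 := h.tr_pg
  rw [← Ex_sub (by fun_prop) (by fun_prop)]
  refine abs_le_of_sq_le_sq ?_ (by positivity)
  refine (Ex_sq_le (by fun_prop)).trans ?_
  have : (Ex fun x => (f x - tr f g x) ^ 2) ≤ Ex fun x => f x ^ 2 - tr f g x ^ 2 :=
    Ex_mono (by fun_prop) (by fun_prop) fun x => by
      nlinarith [h.tr_nonneg x, h.tr_le x]
  rw [Ex_sub (by fun_prop) (by fun_prop)] at this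
  have := h.tr_sq_ge
  nlinarith [pow_pos h.τ0 4]

lemma tr_mean_ge (h : Near C M τ κ f g) : 1 ≤ 2 * M * Ex (tr f g) := by
  have h1 := (abs_le.1 h.tr_mean).2
  have h2 := h.fge; have h3 := h.M1; have h4 := h.small; have h5 := h.τ0; have h6 := h.τ1
  have h7 : M * (3 * τ ^ 2) ≤ 1 / 2 := by nlinarith
  nlinarith [mul_le_mul_of_nonneg_left h1 (by linarith : 0 ≤ M)]

lemma tr_mean_pos (h : Near C M τ κ f g) : 0 < Ex (tr f g) := by
  have := h.tr_mean_ge; have := h.M1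
  by_contra! hc
  nlinarith

lemma tr_mean_sq_le (h : Near C M τ κ f g) : Ex (tr f g) ^ 2 ≤ M :=
  (Ex_sq_le h.tr_pg).trans (h.tr_sq_le.trans h.fle)

/-- The truncation normalised to have Gaussian mean one. -/
noncomputable def nt (f g : Euc n → ℝ) (x : Euc n) : ℝ := (Ex (tr f g))⁻¹ * tr f g x

lemma nt_sm (h : Near C M τ κ f g) : Sm (nt f g) := contDiff_const.mul h.tr_sm

lemma nt_pg (h : Near C M τ κ f g) : PG (nt f g) := (PG.const _).mul h.tr_pg

lemma D_nt (h : Near C M τ κ f g) (i : Fin n) :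
    D i (nt f g) = fun x => (Ex (tr f g))⁻¹ * D i (tr f g) x := D_const_mul _ h.tr_sm.diff

lemma nt_pd (h : Near C M τ κ f g) (i : Fin n) : PG (D i (nt f g)) := by
  rw [h.D_nt]; exact (PG.const _).mul (h.tr_pd i)

lemma Ex_nt (h : Near C M τ κ f g) : Ex (nt f g) = 1 := by
  unfold nt; rw [Ex_const_mul, inv_mul_cancel₀ h.tr_mean_pos.ne']

lemma nt_disj (h : Near C M τ κ f g) (x : Euc n) :
    nt f g x * nt g f x = 0 ∧ ∀ i j, D i (nt f g) x * D j (nt g f) x = 0 := by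
  obtain ⟨h1, h2⟩ := h.tr_disj x
  constructor
  · unfold nt; linear_combination (Ex (tr f g))⁻¹ * (Ex (tr g f))⁻¹ * h1
  · intro i j
    rw [h.D_nt, h.symm.D_nt]; linear_combination (Ex (tr f g))⁻¹ * (Ex (tr g f))⁻¹ * h2 i j

lemma nG_nt (h : Near C M τ κ f g) (x : Euc n) :
    nG (nt f g) x = ((Ex (tr f g))⁻¹) ^ 2 * nG (tr f g) x := by
  simp only [nG, h.D_nt, mul_pow, Finset.mul_sum]

lemma inv_mean_le (h : Near C M τ κ f g) : ((Ex (tr f g))⁻¹) ^ 2 ≤ 4 * M ^ 2 := by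
  have h1 := h.tr_mean_ge; have h2 := h.tr_mean_pos
  have : (Ex (tr f g))⁻¹ ≤ 2 * M := by rw [inv_le_iff_one_le_mul₀ h2]; linarith
  calc _ ≤ (2 * M) ^ 2 := by gcongr
    _ = _ := by ring

lemma Ex_nt_sq (f g : Euc n → ℝ) :
    (Ex fun x => nt f g x ^ 2) = ((Ex (tr f g))⁻¹) ^ 2 * Ex fun x => tr f g x ^ 2 := by
  rw [← Ex_const_mul]; simp only [nt, mul_pow]

lemma Ex_nG_nt (h : Near C M τ κ f g) :
    Ex (nG (nt f g)) = ((Ex (tr f g))⁻¹) ^ 2 * Ex (nG (tr f g)) := by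
  rw [funext h.nG_nt, Ex_const_mul]

lemma one_le_nt_sq (h : Near C M τ κ f g) : 1 ≤ Ex fun x => nt f g x ^ 2 := by
  have := Ex_sq_le h.nt_pg; rwa [h.Ex_nt, one_pow] at this

end Near

set_option maxHeartbeats 1000000 in
open Near in
/-- The normalised difference of the two truncations almost attains equality in the Gaussian
Poincaré inequality, so its gradient is almost constant; moreover the truncations are close to the
functions in energy. -/
lemma near_gradient (C M : ℝ) (hC : 0 < C) (hM : 1 ≤ M) : ∃ K : ℝ, 0 < K ∧
    ∀ (n : ℕ) (τ κ : ℝ) (f g : Euc n → ℝ), Near C M τ κ f g → ∃ k : Euc n,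
      (Ex fun x => ∑ i, (D i (nt f g) x - D i (nt g f) x - k i) ^ 2) ≤ K * τ ^ 2 ∧
      (∑ i, k i ^ 2) ≤ K ∧ 2 - K * τ ^ 2 ≤ ∑ i, k i ^ 2 ∧
      Ex (nG (nt f g)) ≤ K ∧ Ex (nG (nt g f)) ≤ K ∧
      (Ex fun x => ∑ i, (D i f x - D i (tr f g) x) ^ 2) ≤ K * τ ^ 2 ∧
      (Ex fun x => ∑ i, (D i g x - D i (tr g f) x) ^ 2) ≤ K * τ ^ 2 := by
  obtain ⟨K₀, hK₀, htr⟩ := Ex_tr_grad C hC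
  set L := 4 * M ^ 2 * (M + 6 + K₀) with hL
  have hL0 : 0 < L := by positivity
  refine ⟨8 * M ^ 3 + 4 * L + 2 * (M + 6 + L * M) + K₀, by positivity, fun n τ κ f g h => ?_⟩
  have hτ2 : τ ^ 2 ≤ 1 := by have := h.τ1; have := h.τ0; nlinarith
  have hτ0 : 0 ≤ τ ^ 2 := sq_nonneg _
  -- the gap `E|∇p|² - E p²` of a normalised truncation `p` is at most `L τ²`
  have gap0 : ∀ {f g : Euc n → ℝ}, Near C M τ κ f g →
      Ex (nG (tr f g)) - (Ex fun x => tr f g x ^ 2) ≤ (M + 6 + K₀) * τ ^ 2 := by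
    intro f g h
    have h1 := htr n κ f g h.toGSol
    have h2 : 0 ≤ Ex fun x => ∑ i, (D i f x - D i (tr f g) x) ^ 2 :=
      Ex_nonneg fun x => Finset.sum_nonneg fun _ _ => sq_nonneg _
    have h3 := (abs_le.1 h.energy_near).2
    have h4 := h.tr_sq_ge; have h5 := h.phi; have h6 := h.τ4; have h7 := h.phi0
    have h8 := mul_le_mul_of_nonneg_left (h5.trans h6) hK₀.le
    nlinarith
  have gap : ∀ {f g : Euc n → ℝ}, Near C M τ κ f g →
      Ex (nG (nt f g)) - (Ex fun x => nt f g x ^ 2) ≤ L * τ ^ 2 := by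
    intro f g h
    rw [h.Ex_nG_nt, Ex_nt_sq, ← mul_sub]
    refine (mul_le_mul_of_nonneg_left (gap0 h) (sq_nonneg _)).trans ?_
    rw [hL, mul_assoc (4 * M ^ 2)]
    exact mul_le_mul_of_nonneg_right h.inv_mean_le (by positivity)
  have h' := h.symm
  have p1 := h.nt_pg; have p2 := h'.nt_pg; have d1 := h.nt_pd; have d2 := h'.nt_pd
  have hDφ : ∀ i, D i (fun x => nt f g x - nt g f x) =
      fun x => D i (nt f g) x - D i (nt g f) x := fun i => D_sub h.nt_sm.diff h'.nt_sm.diff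
  set k : Euc n := WithLp.toLp 2 fun i => Ex fun x => D i (nt f g) x - D i (nt g f) x with hk
  have hki : ∀ i, k i = Ex fun x => D i (nt f g) x - D i (nt g f) x := fun i => rfl
  have hP := poincare (f := fun x => nt f g x - nt g f x) (h.nt_sm.sub h'.nt_sm) (by fun_prop)
    (fun i => by rw [hDφ]; fun_prop)
  simp only [hDφ, ← hki] at hP
  have m0 : (Ex fun x => nt f g x - nt g f x) = 0 := by
    rw [Ex_sub p1 p2, h.Ex_nt, h'.Ex_nt, sub_self]
  have m1 : (Ex fun x => (nt f g x - nt g f x) ^ 2) =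
      (Ex fun x => nt f g x ^ 2) + Ex fun x => nt g f x ^ 2 := by
    rw [← Ex_add (by fun_prop) (by fun_prop)]
    congr 1; ext x
    linear_combination -2 * (h.nt_disj x).1
  have m2 : ∑ i, (Ex fun x => (D i (nt f g) x - D i (nt g f) x) ^ 2) =
      Ex (nG (nt f g)) + Ex (nG (nt g f)) := by
    rw [← Ex_sum (fun i => by fun_prop), ← Ex_add (PG_nG d1) (PG_nG d2)]
    congr 1; ext x
    simp only [nG, ← Finset.sum_add_distrib]
    refine Finset.sum_congr rfl fun i _ => ?_
    linear_combination -2 * (h.nt_disj x).2 i i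
  have m3 : (Ex fun x => ∑ i, (D i (nt f g) x - D i (nt g f) x - k i) ^ 2) =
      (Ex (nG (nt f g)) + Ex (nG (nt g f))) - ∑ i, k i ^ 2 := by
    rw [Ex_sum (fun i => by fun_prop), ← m2, ← Finset.sum_sub_distrib]
    refine Finset.sum_congr rfl fun i _ => ?_
    have : (fun x => (D i (nt f g) x - D i (nt g f) x - k i) ^ 2) = fun x =>
        (D i (nt f g) x - D i (nt g f) x) ^ 2 - 2 * k i * (D i (nt f g) x - D i (nt g f) x)
          + k i ^ 2 := by ext x; ring
    rw [this, Ex_add (by fun_prop) (by fun_prop), Ex_sub (by fun_prop) (by fun_prop), Ex_const_mul,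
      Ex_const, ← hki]
    ring
  have m4 : 0 ≤ Ex fun x => ∑ i, (D i (nt f g) x - D i (nt g f) x - k i) ^ 2 :=
    Ex_nonneg fun x => Finset.sum_nonneg fun _ _ => sq_nonneg _
  rw [m0, m1, m2] at hP
  have g1 := gap h; have g2 := gap h'
  have o1 := h.one_le_nt_sq; have o2 := h'.one_le_nt_sq
  have up : ∀ {f g : Euc n → ℝ}, Near C M τ κ f g → (Ex fun x => nt f g x ^ 2) ≤ 4 * M ^ 3 := by
    intro f g h
    rw [Ex_nt_sq]
    calc _ ≤ 4 * M ^ 2 * M := mul_le_mul h.inv_mean_le (h.tr_sq_le.trans h.fle)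
          (Ex_nonneg fun _ => sq_nonneg _) (by positivity)
      _ = _ := by ring
  have u1 := up h; have u2 := up h'
  have n1 : 0 ≤ Ex (nG (nt f g)) := Ex_nonneg fun x => nG_nonneg _ x
  have n2 : 0 ≤ Ex (nG (nt g f)) := Ex_nonneg fun x => nG_nonneg _ x
  have hLM : 0 ≤ L * M := by positivity
  have hM3 : 0 ≤ M ^ 3 := by positivity
  have hLτ : L * τ ^ 2 ≤ L := by nlinarith
  have t1 : 0 ≤ L * τ ^ 2 := by positivity
  have t2 : 0 ≤ M ^ 3 * τ ^ 2 := by positivity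
  have t3 : 0 ≤ L * M * τ ^ 2 := by positivity
  have t4 : 0 ≤ K₀ * τ ^ 2 := by positivity
  have t5 : 0 ≤ M * τ ^ 2 := by positivity
  have low : ∀ {f g : Euc n → ℝ}, Near C M τ κ f g →
      -(L * τ ^ 2) ≤ Ex (nG (nt f g)) - (Ex fun x => nt f g x ^ 2) →
      (Ex fun x => ∑ i, (D i f x - D i (tr f g) x) ^ 2) ≤
        (2 * (M + 6 + L * M) + K₀) * τ ^ 2 := by
    intro f g h hl
    have h1 := htr n κ f g h.toGSol
    have h3 := (abs_le.1 h.energy_near).2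
    have h4 := h.tr_sq_ge; have h5 := h.phi; have h6 := h.τ4
    have h8 := mul_le_mul_of_nonneg_left (h5.trans h6) hK₀.le
    rw [h.Ex_nG_nt, Ex_nt_sq, ← mul_sub] at hl
    have hA := h.tr_mean_pos
    have h9 : -(L * τ ^ 2) * Ex (tr f g) ^ 2 ≤
        Ex (nG (tr f g)) - Ex fun x => tr f g x ^ 2 := by
      have := mul_le_mul_of_nonneg_right hl (sq_nonneg (Ex (tr f g)))
      refine this.trans (le_of_eq ?_)
      field_simp
    have h10 : L * τ ^ 2 * Ex (tr f g) ^ 2 ≤ L * τ ^ 2 * M :=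
      mul_le_mul_of_nonneg_left h.tr_mean_sq_le (by positivity)
    nlinarith
  have l1 := low h (by linarith)
  have l2 := low h' (by linarith)
  refine ⟨k, ?_, ?_, ?_, ?_, ?_, ?_, ?_⟩ <;> nlinarith

section pointwise

variable {V : Type*} [NormedAddCommGroup V] [InnerProductSpace ℝ V]

lemma abs_inner_mul_le (a b c d : V) : |⟪a, b⟫ * ⟪c, d⟫| ≤ ‖a‖ * ‖b‖ * (‖c‖ * ‖d‖) := by
  rw [abs_mul]
  exact mul_le_mul (abs_real_inner_le_norm _ _) (abs_real_inner_le_norm _ _) (abs_nonneg _)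
    (by positivity)

lemma quad_diff (x k a b : V) :
    ((⟪x, k⟫ * ‖a‖ ^ 2 - 2 * ⟪k, a⟫ * ⟪x, a⟫) - (⟪x, k⟫ * ‖b‖ ^ 2 - 2 * ⟪k, b⟫ * ⟪x, b⟫)) ^ 2 ≤
      ‖x‖ ^ 2 * (9 * ‖k‖ ^ 2 * ‖a + b‖ ^ 2) * ‖a - b‖ ^ 2 := by
  have e : (⟪x, k⟫ * ‖a‖ ^ 2 - 2 * ⟪k, a⟫ * ⟪x, a⟫) - (⟪x, k⟫ * ‖b‖ ^ 2 - 2 * ⟪k, b⟫ * ⟪x, b⟫) =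
      ⟪x, k⟫ * ⟪a + b, a - b⟫ - ⟪x, a - b⟫ * ⟪k, a + b⟫ - ⟪x, a + b⟫ * ⟪k, a - b⟫ := by
    simp only [inner_add_left, inner_add_right, inner_sub_right, real_inner_self_eq_norm_sq,
      real_inner_comm a b]
    ring
  rw [e, show ‖x‖ ^ 2 * (9 * ‖k‖ ^ 2 * ‖a + b‖ ^ 2) * ‖a - b‖ ^ 2 =
    (3 * (‖x‖ * ‖k‖ * ‖a + b‖ * ‖a - b‖)) ^ 2 by ring]
  have h1 := abs_le.1 (abs_inner_mul_le x k (a + b) (a - b))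
  have h2 := abs_le.1 (abs_inner_mul_le x (a - b) k (a + b))
  have h3 := abs_le.1 (abs_inner_mul_le x (a + b) k (a - b))
  refine sq_le_sq' ?_ ?_ <;> nlinarith

/-- For the gradients `P`, `N` of functions with disjoint supports such that `P - N` is close to
`k`, the stress `⟪x, k⟫ |P|² - 2 ⟪k, P⟫ ⟪x, P⟫` is close to `-|k|² ⟪x, P⟫`. -/
lemma quad_disj (x k P N : V) (h : ∀ y z : V, ⟪y, P⟫ * ⟪z, N⟫ = 0) (h0 : ⟪P, N⟫ = 0) :
    ((⟪x, k⟫ * ‖P‖ ^ 2 - 2 * ⟪k, P⟫ * ⟪x, P⟫) + ‖k‖ ^ 2 * ⟪x, P⟫) ^ 2 ≤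
      ‖x‖ ^ 2 * (9 * ‖k‖ ^ 2 * ‖P‖ ^ 2) * ‖P - N - k‖ ^ 2 := by
  set d := P - N - k with hd
  have e : (⟪x, k⟫ * ‖P‖ ^ 2 - 2 * ⟪k, P⟫ * ⟪x, P⟫) + ‖k‖ ^ 2 * ⟪x, P⟫ =
      ⟪x, k⟫ * ⟪P, d⟫ - ⟪x, d⟫ * ⟪k, P⟫ - ⟪x, P⟫ * ⟪k, d⟫ := by
    have h1 := h x k
    have h2 := h k x
    simp only [hd, inner_sub_right, real_inner_self_eq_norm_sq, h0, real_inner_comm k P]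
    linear_combination - h1 - h2
  rw [e, show ‖x‖ ^ 2 * (9 * ‖k‖ ^ 2 * ‖P‖ ^ 2) * ‖d‖ ^ 2 =
    (3 * (‖x‖ * ‖k‖ * ‖P‖ * ‖d‖)) ^ 2 by ring]
  have h1 := abs_le.1 (abs_inner_mul_le x k P d)
  have h2 := abs_le.1 (abs_inner_mul_le x d k P)
  have h3 := abs_le.1 (abs_inner_mul_le x P k d)
  refine sq_le_sq' ?_ ?_ <;> nlinarith

end pointwise

section weighted

variable {n : ℕ}

/-- The gradient, as a vector. -/
noncomputable def gv (f : Euc n → ℝ) (x : Euc n) : Euc n := WithLp.toLp 2 fun i => D i f x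

lemma inner_eq (x y : Euc n) : ⟪x, y⟫ = ∑ i, x i * y i := by
  simp [PiLp.inner_apply, mul_comm]

lemma inner_gv (k : Euc n) (f : Euc n → ℝ) (x : Euc n) : ⟪k, gv f x⟫ = ∑ i, k i * D i f x :=
  inner_eq _ _

lemma xD_eq (f : Euc n → ℝ) (x : Euc n) : xD f x = ⟪x, gv f x⟫ := (inner_gv _ _ _).symm

lemma nG_eq (f : Euc n → ℝ) (x : Euc n) : nG f x = ‖gv f x‖ ^ 2 := by
  rw [norm_sq_eq]; rfl

/-- Weighted Cauchy–Schwarz inequality, in the form in which small errors are absorbed. -/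
lemma weighted_cs {T S₁ S₂ : Euc n → ℝ} (hT : PG T) (h₁ : PG S₁) (h₂ : PG S₂) (n1 : ∀ x, 0 ≤ S₁ x)
    (n2 : ∀ x, 0 ≤ S₂ x)
    (h : ∀ x, T x ^ 2 ≤ ‖x‖ ^ 2 * S₁ x * S₂ x) {τ M₁ M₂ : ℝ} (hτ : 0 < τ)
    (b₁ : (Ex fun x => ‖x‖ ^ 2 * S₁ x) ≤ M₁) (b₂ : Ex S₂ ≤ M₂ * τ ^ 2) :
    |Ex T| ≤ (M₁ + M₂) * τ := by
  have p : PG fun x => ‖x‖ ^ 2 * S₁ x := by fun_prop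
  have key : |Ex T| ≤ Ex fun x => τ * (‖x‖ ^ 2 * S₁ x) + τ⁻¹ * S₂ x := by
    refine Ex_abs_le hT (by fun_prop) fun x => abs_le_of_sq_le_sq ?_ ?_
    · refine (h x).trans ?_
      have e : τ * τ⁻¹ = 1 := mul_inv_cancel₀ hτ.ne'
      have a1 : 0 ≤ τ * (‖x‖ ^ 2 * S₁ x) := mul_nonneg hτ.le (mul_nonneg (by positivity) (n1 x))
      have a2 : 0 ≤ τ⁻¹ * S₂ x := mul_nonneg (by positivity) (n2 x)
      have e2 : ‖x‖ ^ 2 * S₁ x * S₂ x = (τ * (‖x‖ ^ 2 * S₁ x)) * (τ⁻¹ * S₂ x) := by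
        linear_combination -(‖x‖ ^ 2 * S₁ x * S₂ x) * e
      rw [e2]; nlinarith
    · have := n1 x; have := n2 x; positivity
  rw [Ex_add (by fun_prop) (by fun_prop), Ex_const_mul, Ex_const_mul] at key
  refine key.trans ?_
  have e3 : τ⁻¹ * Ex S₂ ≤ M₂ * τ := by
    rw [inv_mul_le_iff₀ hτ]; nlinarith
  nlinarith

end weighted

namespace Near

variable {n : ℕ} {C M τ κ : ℝ} {f g : Euc n → ℝ}

/-- Second-moment bound for the energy density, from the Pohozaev identity. -/
lemma weighted_energy (h : Near C M τ κ f g) :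
    (Ex fun x => ‖x‖ ^ 2 * Sol.ed κ f g x) ≤ 2 * (n + 8) * (2 * M + 3) := by
  have hp := h.pohozaev
  have p0 := h.PG_ed; have p1 := PG_xD h.pdf; have p2 := PG_xD h.pdg; have p3 := PG_nG h.pdf
  have p4 := PG_nG h.pdg; have p5 := h.pf; have p6 := h.pg
  have e1 : (Ex fun x => Sol.ed κ f g x * (‖x‖ ^ 2 - n)) =
      (Ex fun x => ‖x‖ ^ 2 * Sol.ed κ f g x) - n * Ex (Sol.ed κ f g) := by
    rw [← Ex_const_mul, ← Ex_sub (by fun_prop) (by fun_prop)]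
    congr 1; ext x; ring
  have e2 : Ex (Sol.ed κ f g) = Ex (nG f) + Ex (nG g) + κ * Ex fun x => f x ^ 2 * g x ^ 2 := by
    unfold Sol.ed
    rw [Ex_add (by fun_prop) (by fun_prop), Ex_add p3 p4, Ex_const_mul]
  have hx : ∀ {f g : Euc n → ℝ}, Near C M τ κ f g → (Ex fun x => xD f x ^ 2) ≤ 2 * M + 2 := by
    intro f g h
    have p1 := PG_xD h.pdf; have p5 := h.pf
    have : (Ex fun x => xD f x ^ 2) ≤ Ex fun x => 2 * (xD f x - f x) ^ 2 + 2 * f x ^ 2 :=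
      Ex_mono (by fun_prop) (by fun_prop) fun x => by nlinarith [sq_nonneg (xD f x - 2 * f x)]
    rw [Ex_add (by fun_prop) (by fun_prop), Ex_const_mul, Ex_const_mul] at this
    have := h.hf; have := h.fle; have := h.τ4
    have : τ ^ 2 ≤ 1 := by have := h.τ1; have := h.τ0; nlinarith
    linarith
  have hd : ∀ {f g : Euc n → ℝ}, Near C M τ κ f g → Ex (nG f) ≤ 2 * M + 1 := by
    intro f g h
    have h1 := (abs_le.1 h.energy_near).2
    have := h.fle; have := h.M1
    have : τ ^ 2 ≤ 1 := by have := h.τ1; have := h.τ0; nlinarith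
    nlinarith
  have a1 := hx h; have a2 := hx h.symm; have a3 := hd h; have a4 := hd h.symm
  have n3 : 0 ≤ Ex (nG f) := Ex_nonneg fun x => nG_nonneg _ x
  have n4 : 0 ≤ Ex (nG g) := Ex_nonneg fun x => nG_nonneg _ x
  have h5 := h.phi; have h6 := h.τ4
  have h7 : τ ^ 2 ≤ 1 := by have := h.τ1; have := h.τ0; nlinarith
  have hn : (0 : ℝ) ≤ n := Nat.cast_nonneg n
  have := mul_le_mul_of_nonneg_left (a := (n : ℝ)) (b := Ex (Sol.ed κ f g)) (c := 2 * (2 * M + 3))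
    (by rw [e2]; linarith) hn
  have := h.M1
  nlinarith

end Near

namespace Near

variable {n : ℕ} {C M τ κ : ℝ} {f g : Euc n → ℝ}

/-- Contribution of `f` to the stress in direction `k`, contracted with the position `x`. -/
noncomputable def str (k : Euc n) (f : Euc n → ℝ) (x : Euc n) : ℝ :=
  (∑ i, x i * k i) * nG f x - 2 * (∑ j, k j * D j f x) * xD f x

lemma str_eq (k : Euc n) (f : Euc n → ℝ) (x : Euc n) :
    str k f x = ⟪x, k⟫ * ‖gv f x‖ ^ 2 - 2 * ⟪k, gv f x⟫ * ⟪x, gv f x⟫ := by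
  rw [str, inner_gv, ← xD_eq, ← nG_eq, inner_eq]

lemma str_pg (k : Euc n) (h : ∀ i, PG (D i f)) : PG (str k f) := by
  have := PG_nG h; have := PG_xD h
  unfold str; fun_prop

lemma str_neg (k : Euc n) (f : Euc n → ℝ) (x : Euc n) : str (-k) f x = - str k f x := by
  simp [str, Finset.sum_neg_distrib]; ring

lemma Ex_weight_le (h : Near C M τ κ f g) {S : Euc n → ℝ} (hS : PG S) {L : ℝ} (hL : 0 ≤ L)
    (hle : ∀ x, S x ≤ L * Sol.ed κ f g x) :
    (Ex fun x => ‖x‖ ^ 2 * S x) ≤ L * (2 * (n + 8) * (2 * M + 3)) := by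
  have p0 := h.PG_ed
  refine (Ex_mono (g := fun x => L * (‖x‖ ^ 2 * Sol.ed κ f g x)) (by fun_prop) (by fun_prop)
    fun x => ?_).trans ?_
  · have := mul_le_mul_of_nonneg_left (hle x) (sq_nonneg ‖x‖); linarith
  · rw [Ex_const_mul]; exact mul_le_mul_of_nonneg_left h.weighted_energy hL

end Near

open Near

set_option maxHeartbeats 1000000 in
/-- The Gaussian average of the stress of one component is determined, up to `O(τ)`, by the mean of
that component. -/
lemma near_stress (n : ℕ) (C M K : ℝ) (hC : 0 < C) (hM : 1 ≤ M) (hK : 0 < K) :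
    ∃ K' : ℝ, 0 < K' ∧ ∀ (τ κ : ℝ) (f g : Euc n → ℝ) (k : Euc n), Near C M τ κ f g →
      (Ex fun x => ∑ i, (D i (nt f g) x - D i (nt g f) x - k i) ^ 2) ≤ K * τ ^ 2 →
      (∑ i, k i ^ 2) ≤ K →
      (Ex fun x => ∑ i, (D i f x - D i (tr f g) x) ^ 2) ≤ K * τ ^ 2 →
      |Ex (str k f) + Ex (tr f g) ^ 2 * ∑ i, k i ^ 2| ≤ K' * τ := by
  obtain ⟨K₀, hK₀, htr⟩ := tr_grad C hC
  set W : ℝ := 2 * (n + 8) * (2 * M + 3) with hW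
  have hW0 : 0 < W := by positivity
  have hX : 0 ≤ Ex fun x : Euc n => ‖x‖ ^ 2 * 1 := Ex_nonneg fun x => by positivity
  set X := Ex fun x : Euc n => ‖x‖ ^ 2 * 1 with hXd
  set L₁ := 9 * K * (4 + 2 * K₀) * W with hL₁
  set L₂ := 9 * K * (4 * M ^ 2 * (1 + K₀)) * W with hL₂
  have hL₁0 : 0 < L₁ := by positivity
  have hL₂0 : 0 < L₂ := by positivity
  refine ⟨(L₁ + K) + M * (L₂ + K) + M * K * (X + K + 4), by positivity, fun τ κ f g k h hY hk hd => ?_⟩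
  have h' := h.symm
  have hτ := h.τ0
  have q1 := h.pdf; have q2 := h.tr_pd; have q3 := h.nt_pd; have q4 := h'.nt_pd
  have q5 := PG_nG h.pdf; have q6 := PG_nG h.tr_pd; have q7 := PG_nG h.nt_pd
  have q8 := str_pg k h.pdf; have q9 := str_pg k h.tr_pd; have q10 := str_pg k h.nt_pd
  have q11 := PG_xD h.pdf; have q12 := PG_xD h.tr_pd; have q13 := PG_xD h.nt_pd
  have q14 := h.pf
  set A := Ex (tr f g) with hA
  have hA0 : 0 < A := h.tr_mean_pos
  have hA2 : A ^ 2 ≤ M := h.tr_mean_sq_le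
  have hA1 : A ≤ M := by nlinarith
  have hksq : ∑ i, k i ^ 2 = ‖k‖ ^ 2 := (norm_sq_eq k).symm
  rw [hksq] at hk ⊢
  have hed : ∀ x, nG f x + κ * (f x ^ 2 * g x ^ 2) ≤ Sol.ed κ f g x := fun x => by
    rw [Sol.ed]; linarith [nG_nonneg g x]
  have hedκ : ∀ x, 0 ≤ κ * (f x ^ 2 * g x ^ 2) := fun x => by
    have := h.κpos; positivity
  have hF : ∀ x, nG (tr f g) x ≤ (1 + K₀) * Sol.ed κ f g x := fun x => by
    have h1 := htr n κ f g h.toGSol x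
    have h2 : 0 ≤ ∑ i, (D i f x - D i (tr f g) x) ^ 2 := Finset.sum_nonneg fun _ _ => sq_nonneg _
    have h3 := hed x; have h4 := hedκ x; have h5 := nG_nonneg f x
    have h6 : K₀ * (κ * (f x ^ 2 * g x ^ 2)) ≤ K₀ * Sol.ed κ f g x :=
      mul_le_mul_of_nonneg_left (by linarith) hK₀.le
    have : 0 ≤ K₀ * (κ * (f x ^ 2 * g x ^ 2)) := mul_nonneg hK₀.le h4
    linarith
  have hdv : ∀ (a b : Euc n → ℝ) x, ∑ i, (D i a x - D i b x) ^ 2 = ‖gv a x - gv b x‖ ^ 2 :=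
    fun a b x => (norm_sq_eq (gv a x - gv b x)).symm
  have hsv : ∀ (a b : Euc n → ℝ) x, ∑ i, (D i a x + D i b x) ^ 2 = ‖gv a x + gv b x‖ ^ 2 :=
    fun a b x => (norm_sq_eq (gv a x + gv b x)).symm
  -- replacing `f` by its truncation
  have e1 : |Ex fun x => str k f x - str k (tr f g) x| ≤ (L₁ + K) * τ := by
    refine weighted_cs (S₁ := fun x => 9 * ‖k‖ ^ 2 * ∑ i, (D i f x + D i (tr f g) x) ^ 2)
      (S₂ := fun x => ∑ i, (D i f x - D i (tr f g) x) ^ 2) (by fun_prop) (by fun_prop)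
      (by fun_prop) (fun x => by positivity) (fun x => by positivity) (fun x => ?_) hτ ?_ hd
    · simp only [hdv, hsv, str_eq]; exact quad_diff _ _ _ _
    · rw [hL₁]
      refine h.Ex_weight_le (by fun_prop) (by positivity) fun x => ?_
      have h1 : ∑ i, (D i f x + D i (tr f g) x) ^ 2 ≤ 2 * nG f x + 2 * nG (tr f g) x := by
        rw [nG, nG, Finset.mul_sum, Finset.mul_sum, ← Finset.sum_add_distrib]
        exact Finset.sum_le_sum fun i _ => by nlinarith [sq_nonneg (D i f x - D i (tr f g) x)]
      have h2 : ∑ i, (D i f x + D i (tr f g) x) ^ 2 ≤ (4 + 2 * K₀) * Sol.ed κ f g x := by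
        linarith [hF x, hed x, hedκ x]
      rw [mul_assoc (9 * K)]
      exact mul_le_mul (by linarith) h2 (by positivity) (by positivity)
  -- the stress of the normalised truncation
  have e2 : |Ex fun x => str k (nt f g) x + ‖k‖ ^ 2 * xD (nt f g) x| ≤ (L₂ + K) * τ := by
    refine weighted_cs (S₁ := fun x => 9 * ‖k‖ ^ 2 * nG (nt f g) x)
      (S₂ := fun x => ∑ i, (D i (nt f g) x - D i (nt g f) x - k i) ^ 2) (by fun_prop) (by fun_prop)
      (by fun_prop) (fun x => mul_nonneg (by positivity) (nG_nonneg _ _)) (fun x => by positivity)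
      (fun x => ?_) hτ ?_ hY
    · have e : ∑ i, (D i (nt f g) x - D i (nt g f) x - k i) ^ 2 =
          ‖gv (nt f g) x - gv (nt g f) x - k‖ ^ 2 :=
        (norm_sq_eq (gv (nt f g) x - gv (nt g f) x - k)).symm
      rw [e, str_eq, xD_eq, nG_eq]
      refine quad_disj _ _ _ _ (fun y z => ?_) ?_
      · rw [inner_gv, inner_gv, Finset.sum_mul_sum]
        refine Finset.sum_eq_zero fun i _ => Finset.sum_eq_zero fun j _ => ?_
        linear_combination y i * z j * (h.nt_disj x).2 i j
      · rw [inner_gv]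
        exact Finset.sum_eq_zero fun i _ => (h.nt_disj x).2 i i
    · rw [hL₂]
      refine h.Ex_weight_le (by fun_prop) (by positivity) fun x => ?_
      rw [mul_assoc (9 * K), h.nG_nt]
      refine mul_le_mul (by linarith) ?_ (mul_nonneg (sq_nonneg _) (nG_nonneg _ _)) (by positivity)
      rw [mul_assoc (4 * M ^ 2)]
      exact mul_le_mul h.inv_mean_le (hF x) (nG_nonneg _ _) (by positivity)
  have e3 : |Ex fun x => xD f x - xD (tr f g) x| ≤ (X + K) * τ := by
    refine weighted_cs (S₁ := fun _ => 1) (S₂ := fun x => ∑ i, (D i f x - D i (tr f g) x) ^ 2)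
      (by fun_prop) (by fun_prop)
      (by fun_prop) (fun x => by positivity) (fun x => by positivity) (fun x => ?_) hτ le_rfl hd
    rw [hdv, xD_eq, xD_eq, ← inner_sub_right, mul_one, ← mul_pow]
    exact sq_le_sq.2 ((abs_real_inner_le_norm _ _).trans (le_abs_self _))
  have s1 : str k (tr f g) = fun x => A ^ 2 * str k (nt f g) x := by
    ext x
    simp only [str, h.nG_nt, xD, h.D_nt, ← hA]
    have c1 : ∑ i, x i * (A⁻¹ * D i (tr f g) x) = A⁻¹ * ∑ i, x i * D i (tr f g) x := by
      rw [Finset.mul_sum]; exact Finset.sum_congr rfl fun i _ => by ring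
    have c2 : ∑ i, k i * (A⁻¹ * D i (tr f g) x) = A⁻¹ * ∑ i, k i * D i (tr f g) x := by
      rw [Finset.mul_sum]; exact Finset.sum_congr rfl fun i _ => by ring
    rw [c1, c2]; field_simp
  have s2 : xD (tr f g) = fun x => A * xD (nt f g) x := by
    ext x
    simp only [xD, h.D_nt, ← hA, Finset.mul_sum]
    exact Finset.sum_congr rfl fun i _ => by field_simp
  rw [Ex_sub q8 q9, s1, Ex_const_mul] at e1
  rw [Ex_add q10 (by fun_prop), Ex_const_mul] at e2
  rw [Ex_sub q11 q12, s2, Ex_const_mul] at e3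
  have e4 := h.xD_mean; have e5 := h.tr_mean
  have hτ2 : τ ^ 2 ≤ τ := by have := h.τ1; nlinarith
  have e6 : |A * Ex (xD (nt f g)) - A| ≤ (X + K + 4) * τ := by
    rw [abs_le] at *
    constructor <;> linarith
  have e7 : |A ^ 2 * (Ex (str k (nt f g)) + ‖k‖ ^ 2 * Ex (xD (nt f g)))| ≤ M * ((L₂ + K) * τ) := by
    rw [abs_mul, abs_of_nonneg (sq_nonneg A)]
    exact mul_le_mul hA2 e2 (abs_nonneg _) (by linarith)
  have e8 : |(A * ‖k‖ ^ 2) * (A * Ex (xD (nt f g)) - A)| ≤ (M * K) * ((X + K + 4) * τ) := by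
    rw [abs_mul, abs_of_nonneg (by positivity)]
    exact mul_le_mul (by gcongr) e6 (abs_nonneg _) (by positivity)
  rw [abs_le] at *
  constructor <;> linarith

set_option maxHeartbeats 1000000 in
/-- Flatness of almost homogeneous, almost segregated solutions. -/
lemma near_flat (n : ℕ) (C M : ℝ) (hC : 0 < C) (hM : 1 ≤ M) : ∃ K : ℝ, 0 < K ∧
    ∀ (τ κ : ℝ) (f g : Euc n → ℝ), Near C M τ κ f g → K * τ ≤ 1 → ∃ e : Euc n,
      (Ex fun x => ∑ i, (D i f x - D i g x - e i) ^ 2) ≤ K * τ ^ 2 ∧ 1 ≤ 4 * M ^ 2 * ‖e‖ ^ 2 := by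
  obtain ⟨K, hK, hgr⟩ := near_gradient C M hC hM
  obtain ⟨K', hK', hst⟩ := near_stress n C M K hC hM hK
  set W : ℝ := 2 * (n + 8) * (2 * M + 3) with hW
  have hW0 : 0 < W := by positivity
  set Q := 2 * M * (2 * K' + (K * W + 1)) with hQ
  have hQ0 : 0 < Q := by positivity
  refine ⟨4 * (2 * K + M * K + Q ^ 2 * K) + K, by positivity, fun τ κ f g h hsm => ?_⟩
  obtain ⟨k, g1, g2, g3, -, g5, g6, g7⟩ := hgr n τ κ f g h
  have h' := h.symm
  have hτ := h.τ0
  have hτ1 := h.τ1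
  have s1 := hst τ κ f g k h g1 g2 g6
  have s2 := hst τ κ g f (-k) h' (by
    refine le_trans (le_of_eq ?_) g1
    congr 1; ext x
    exact Finset.sum_congr rfl fun i _ => by simp only [PiLp.neg_apply]; ring) (by simpa using g2) g7
  have q1 := h.pdf; have q2 := h'.pdf; have q3 := h.pf; have q4 := h'.pf
  have q5 := str_pg k h.pdf; have q6 := str_pg k h'.pdf
  have q7 := h.tr_pd; have q8 := h'.tr_pd; have q9 := h.nt_pd; have q10 := h'.nt_pd
  have e2 : Ex (str (-k) g) = - Ex (str k g) := by rw [funext (str_neg k g), Ex_neg]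
  have e2' : ∑ i, (-k) i ^ 2 = ∑ i, k i ^ 2 := by simp
  rw [e2, e2'] at s2
  have hk1 : 1 ≤ ∑ i, k i ^ 2 := by
    have : K * τ ≤ 1 := by
      refine le_trans ?_ hsm
      gcongr
      have : 0 < 4 * (2 * K + M * K + Q ^ 2 * K) := by positivity
      linarith
    nlinarith
  set A := Ex (tr f g) with hA
  set B := Ex (tr g f) with hB
  have hA0 : 0 < A := h.tr_mean_pos
  have hB0 : 0 < B := h'.tr_mean_pos
  have hA2 : A ^ 2 ≤ M := h.tr_mean_sq_le
  have hAM : 1 ≤ 2 * M * A := h.tr_mean_ge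
  -- the means of the two components almost agree
  have hT : |Ex fun x => (∑ i, x i * k i) * (κ * (f x ^ 2 * g x ^ 2))| ≤ (K * W + 1) * τ := by
    have hκ := h.κpos
    have nn : ∀ x, 0 ≤ κ * (f x ^ 2 * g x ^ 2) := fun x => by positivity
    refine weighted_cs (S₁ := fun x => (∑ i, k i ^ 2) * (κ * (f x ^ 2 * g x ^ 2)))
      (S₂ := fun x => κ * (f x ^ 2 * g x ^ 2)) (by fun_prop) (by fun_prop)
      (by fun_prop) (fun x => by positivity) (fun x => by positivity) (fun x => ?_) hτ ?_ ?_
    · have hcs : (∑ i, x i * k i) ^ 2 ≤ ‖x‖ ^ 2 * ∑ i, k i ^ 2 := by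
        rw [norm_sq_eq]; exact Finset.sum_mul_sq_le_sq_mul_sq _ _ _
      have := mul_le_mul_of_nonneg_right hcs (sq_nonneg (κ * (f x ^ 2 * g x ^ 2)))
      nlinarith
    · refine h.Ex_weight_le (by fun_prop) hK.le fun x => ?_
      refine mul_le_mul g2 ?_ (nn x) hK.le
      rw [Sol.ed]; linarith [nG_nonneg f x, nG_nonneg g x]
    · rw [Ex_const_mul]
      linarith [h.phi, h.τ4]
  have hbal : Ex (str k f) + Ex (str k g) +
      (Ex fun x => (∑ i, x i * k i) * (κ * (f x ^ 2 * g x ^ 2))) = 0 := by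
    have := h.stress k 0
    rw [zero_mul] at this
    rw [← this, ← Ex_add q5 q6, ← Ex_add (by fun_prop) (by fun_prop)]
    congr 1; ext x
    simp only [str, Sol.ed, zero_mul, add_zero]
    ring
  have hAB : |A - B| ≤ Q * τ := by
    have b1 : |(A ^ 2 - B ^ 2) * ∑ i, k i ^ 2| ≤ (2 * K' + (K * W + 1)) * τ := by
      rw [abs_le] at *
      constructor <;> linarith
    have b2 : |A - B| * (A + B) ≤ (2 * K' + (K * W + 1)) * τ := by
      refine le_trans ?_ b1
      rw [abs_mul, abs_of_nonneg (by linarith : 0 ≤ ∑ i, k i ^ 2),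
        show A ^ 2 - B ^ 2 = (A - B) * (A + B) by ring, abs_mul, abs_of_pos (by linarith : 0 < A + B)]
      exact le_mul_of_one_le_right (by positivity) hk1
    have b3 : |A - B| ≤ |A - B| * (2 * M * (A + B)) := by
      refine le_mul_of_one_le_right (abs_nonneg _) ?_
      nlinarith [mul_pos (by linarith : 0 < M) hB0]
    calc |A - B| ≤ 2 * M * (|A - B| * (A + B)) := by linarith
      _ ≤ 2 * M * ((2 * K' + (K * W + 1)) * τ) := by gcongr
      _ = _ := by rw [hQ]; ring
  refine ⟨A • k, ?_, ?_⟩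
  · have hp : ∀ x i, D i f x - D i g x - (A • k) i = (D i f x - D i (tr f g) x) -
        (D i g x - D i (tr g f) x) + A * (D i (nt f g) x - D i (nt g f) x - k i) +
        (A - B) * D i (nt g f) x := by
      intro x i
      rw [h.D_nt, h'.D_nt]
      simp only [PiLp.smul_apply, smul_eq_mul, ← hA, ← hB]
      field_simp
      ring
    have hle : (Ex fun x => ∑ i, (D i f x - D i g x - (A • k) i) ^ 2) ≤
        Ex fun x => 4 * (∑ i, (D i f x - D i (tr f g) x) ^ 2) +
          4 * (∑ i, (D i g x - D i (tr g f) x) ^ 2) +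
          4 * A ^ 2 * (∑ i, (D i (nt f g) x - D i (nt g f) x - k i) ^ 2) +
          4 * (A - B) ^ 2 * nG (nt g f) x := by
      have := PG_nG h'.nt_pd
      refine Ex_mono (by fun_prop) (by fun_prop) fun x => ?_
      simp only [hp, nG, Finset.mul_sum, ← Finset.sum_add_distrib]
      refine Finset.sum_le_sum fun i _ => ?_
      have key : ∀ a b c d : ℝ, (a - b + c + d) ^ 2 ≤ 4 * a ^ 2 + 4 * b ^ 2 + 4 * c ^ 2 + 4 * d ^ 2 :=
        fun a b c d => by
          nlinarith [sq_nonneg (a + b), sq_nonneg (a - c), sq_nonneg (a - d), sq_nonneg (b + c),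
            sq_nonneg (b + d), sq_nonneg (c - d)]
      refine (key _ _ _ _).trans (le_of_eq ?_)
      ring
    have r0 := PG_nG h'.nt_pd
    rw [Ex_add (by fun_prop) (by fun_prop), Ex_add (by fun_prop) (by fun_prop),
      Ex_add (by fun_prop) (by fun_prop), Ex_const_mul, Ex_const_mul, Ex_const_mul, Ex_const_mul] at hle
    have r1 : 4 * A ^ 2 * (Ex fun x => ∑ i, (D i (nt f g) x - D i (nt g f) x - k i) ^ 2) ≤
        4 * M * (K * τ ^ 2) := mul_le_mul (by linarith) g1
          (Ex_nonneg fun x => Finset.sum_nonneg fun _ _ => sq_nonneg _) (by positivity)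
    have r2 : (A - B) ^ 2 ≤ (Q * τ) ^ 2 := sq_le_sq' (by linarith [(abs_le.1 hAB).1]) (abs_le.1 hAB).2
    have r3 : 4 * (A - B) ^ 2 * Ex (nG (nt g f)) ≤ 4 * (Q * τ) ^ 2 * K :=
      mul_le_mul (by linarith) g5 (Ex_nonneg fun x => nG_nonneg _ _) (by positivity)
    have : 0 ≤ K * τ ^ 2 := by positivity
    linarith
  · rw [norm_smul, mul_pow, Real.norm_eq_abs, sq_abs, norm_sq_eq]
    have : 1 ≤ (2 * M * A) ^ 2 := one_le_pow₀ hAM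
    calc (1 : ℝ) ≤ (2 * M * A) ^ 2 * 1 := by linarith
      _ ≤ (2 * M * A) ^ 2 * ∑ i, k i ^ 2 := by gcongr
      _ = _ := by ring

/-! ### Selection of good scales -/

section scales

variable {n : ℕ} {u v : Euc n → ℝ}

/-- Mean value theorem for the monotone quantity `om`, in logarithmic scale. -/
lemma om_mean_value (h : Ent u v) (y : Euc n) {s t : ℝ} (hs : 0 < s) (hst : s < t) :
    ∃ r ∈ Ioo s t, (Real.log t - Real.log s) * (2 * al u v y r + 4 * (ph u v y r / r ^ 2)) ≤
      om u v y s := by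
  have hpos : ∀ x ∈ Icc s t, 0 < x := fun x hx => hs.trans_le hx.1
  obtain ⟨r, hr, hreq⟩ := exists_ratio_hasDerivAt_eq_ratio_slope (om u v y)
    (fun r => -(2 * al u v y r + 4 * (ph u v y r / r ^ 2)) / r) hst
    (fun x hx => (om_hasDerivAt h.sol y (hpos x hx)).continuousAt.continuousWithinAt)
    (fun x hx => om_hasDerivAt h.sol y (hpos x (Ioo_subset_Icc_self hx)))
    Real.log (fun r => r⁻¹)
    (fun x hx => (Real.hasDerivAt_log (hpos x hx).ne').continuousAt.continuousWithinAt)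
    (fun x hx => Real.hasDerivAt_log (hpos x (Ioo_subset_Icc_self hx)).ne')
  have hr0 := hpos r (Ioo_subset_Icc_self hr)
  refine ⟨r, hr, ?_⟩
  have h2 : (Real.log t - Real.log s) * (2 * al u v y r + 4 * (ph u v y r / r ^ 2)) =
      om u v y s - om u v y t := by
    rw [div_eq_mul_inv, ← mul_assoc] at hreq
    have := mul_right_cancel₀ (inv_ne_zero hr0.ne') hreq
    linarith
  rw [h2]
  linarith [om_nonneg h y (hs.trans hst)]

/-- The monotone quantity `om` tends to zero, uniformly over centres in `{u = v}`. -/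
lemma om_small (h : Ent u v) {ρ C : ℝ} (hρ : 0 < ρ) (hC : 0 < C)
    (hH : ∀ y, u y = v y → ∀ r, ρ ≤ r → HH u v y r / r ^ 2 ≤ C) {η : ℝ} (hη : 0 < η) :
    ∃ R : ℝ, ρ ≤ R ∧ ∀ y, u y = v y → ∀ r, R ≤ r → om u v y r ≤ η := by
  -- `√(C δ) + δ ≤ η`
  set δ := min (η / 2) (η ^ 2 / (4 * C)) with hδ
  have hδ0 : 0 < δ := by positivity
  have hδ1 : δ ≤ η / 2 := min_le_left _ _
  have hδ2 : C * δ ≤ (η / 2) ^ 2 := by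
    have : δ ≤ η ^ 2 / (4 * C) := min_le_right _ _
    rw [le_div_iff₀ (by positivity)] at this
    nlinarith
  refine ⟨ρ * Real.exp (C / δ), le_mul_of_one_le_right hρ.le (Real.one_le_exp (by positivity)), ?_⟩
  intro y hy r hr
  have hlt : ρ < ρ * Real.exp (C / δ) := by
    have : 1 < Real.exp (C / δ) := Real.one_lt_exp_iff.2 (by positivity)
    nlinarith
  obtain ⟨s, hs, hle⟩ := om_mean_value h y hρ hlt
  have hs0 : 0 < s := hρ.trans hs.1
  rw [Real.log_mul hρ.ne' (Real.exp_pos _).ne', Real.log_exp, add_sub_cancel_left] at hle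
  have h1 : om u v y ρ ≤ C := by
    refine le_trans ?_ (hH y hy ρ le_rfl)
    rw [om]; gcongr
    linarith [EE_nonneg u v y ρ]
  have h2 : 2 * al u v y s + 4 * (ph u v y s / s ^ 2) ≤ δ := by
    have := hle.trans h1
    rw [div_mul_eq_mul_div, div_le_iff₀ hδ0] at this
    exact le_of_mul_le_mul_left this hC
  have h3 := al_nonneg h.sol y hs0
  have h4 : 0 ≤ ph u v y s / s ^ 2 := div_nonneg (ph_nonneg _ _ _ _) (sq_nonneg _)
  have h5 : √(HH u v y s / s ^ 2 * al u v y s) ≤ η / 2 := by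
    refine Real.sqrt_le_iff.2 ⟨by positivity, le_trans ?_ hδ2⟩
    exact mul_le_mul (hH y hy s hs.1.le) (by linarith) h3 hC.le
  have h6 := om_le h.sol y hs0
  have h7 := om_anti h.sol y hs0 (hs.2.le.trans hr)
  linarith

/-- Every dyadic range of large scales contains one at which the solution is almost homogeneous
and almost segregated. -/
lemma good_scale (h : Ent u v) {ρ C : ℝ} (hρ : 0 < ρ) (hC : 0 < C)
    (hH : ∀ y, u y = v y → ∀ r, ρ ≤ r → HH u v y r / r ^ 2 ≤ C) {η : ℝ} (hη : 0 < η) :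
    ∃ R₁ : ℝ, ρ ≤ R₁ ∧ ∀ y, u y = v y → ∀ R, R₁ ≤ R → ∃ r, R ≤ r ∧ r ≤ 2 * R ∧
      al u v y r ≤ η ∧ ph u v y r / r ^ 2 ≤ η := by
  have hl : 0 < Real.log 2 := Real.log_pos (by norm_num)
  obtain ⟨R₁, hR₁, hom⟩ := om_small h hρ hC hH (mul_pos hl hη)
  refine ⟨R₁, hR₁, fun y hy R hR => ?_⟩
  have hR0 : 0 < R := hρ.trans_le (hR₁.trans hR)
  obtain ⟨r, hr, hle⟩ := om_mean_value h y hR0 (by linarith : R < 2 * R)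
  have hr0 : 0 < r := hR0.trans hr.1
  rw [Real.log_mul (by norm_num) hR0.ne', add_sub_cancel_right] at hle
  have h1 := le_of_mul_le_mul_left (hle.trans (hom y hy R hR)) hl
  have h3 := al_nonneg h.sol y hr0
  have h4 : 0 ≤ ph u v y r / r ^ 2 := div_nonneg (ph_nonneg _ _ _ _) (sq_nonneg _)
  exact ⟨r, hr.1.le, hr.2.le, by linarith, by linarith⟩

/-- Gaussian averages control averages over balls of comparable radius. -/
lemma ball_le_Ex (n : ℕ) : ∃ C : ℝ, 0 < C ∧ ∀ F : Euc n → ℝ, PG F → (∀ x, 0 ≤ F x) →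
    ∀ l : ℝ, 1 / 2 ≤ l → l ≤ 1 → ∫ x in ball (0 : Euc n) 1, F (l • x) ≤ C * Ex F := by
  obtain ⟨x₀, hx₀, hmin⟩ := (isCompact_closedBall (0 : Euc n) 1).exists_isMinOn
    ⟨0, by simp⟩ (gd_continuous (n := n)).continuousOn
  have hm : 0 < gd x₀ := gd_pos x₀
  refine ⟨(gd x₀)⁻¹ * 2 ^ n, by positivity, fun F hF h0 l hl hl' => ?_⟩
  have hl0 : 0 < l := by linarith
  have hInt : Integrable fun x => F x * gd x := integrable_gam_iff.1 hF.integrable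
  have hIntScaled : Integrable fun x => F (l • x) * gd (l • x) := hInt.comp_smul hl0.ne'
  have hFc : Continuous fun x => F (l • x) := hF.continuous.comp (by fun_prop)
  have s1 : ∫ x in ball (0 : Euc n) 1, F (l • x) ≤
      ∫ x in ball (0 : Euc n) 1, (gd x₀)⁻¹ * (F (l • x) * gd (l • x)) := by
    refine setIntegral_mono_on ?_ (hIntScaled.const_mul _).integrableOn measurableSet_ball fun x hx => ?_
    · exact (hFc.continuousOn.integrableOn_compact (isCompact_closedBall (0 : Euc n) 1)).mono_set
        ball_subset_closedBall
    · have : gd x₀ ≤ gd (l • x) := hmin (by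
        simp only [mem_closedBall, dist_zero_right, norm_smul, Real.norm_eq_abs, abs_of_pos hl0]
        rw [mem_ball_zero_iff] at hx
        nlinarith [norm_nonneg x])
      rw [← mul_assoc, mul_comm _ (F _), mul_assoc]
      refine le_mul_of_one_le_right (h0 _) ?_
      rwa [inv_mul_eq_div, one_le_div hm]
  have s2 : ∫ x in ball (0 : Euc n) 1, (gd x₀)⁻¹ * (F (l • x) * gd (l • x)) ≤
      ∫ x, (gd x₀)⁻¹ * (F (l • x) * gd (l • x)) :=
    setIntegral_le_integral (hIntScaled.const_mul _) (.of_forall fun x =>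
      mul_nonneg (by positivity) (mul_nonneg (h0 _) (gd_pos _).le))
  refine s1.trans (s2.trans ?_)
  rw [integral_const_mul, mul_assoc, Measure.integral_comp_smul volume (fun x => F x * gd x) l,
    ← Ex_eq, finrank_euclideanSpace_fin, smul_eq_mul]
  gcongr
  · exact Ex_nonneg h0
  · rw [abs_of_pos (by positivity), ← inv_pow]
    gcongr
    rw [inv_le_comm₀ hl0 (by norm_num)]
    linarith

lemma gradient_apply_eq (f : Euc n → ℝ) (x : Euc n) (i : Fin n) :
    gradient f x i = D i f x := by
  have h1 : ∀ w : Euc n, w i = ⟪w, EuclideanSpace.single i 1⟫ := fun w => by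
    simp [EuclideanSpace.inner_single_right]
  rw [h1 (gradient f x), gradient, InnerProductSpace.toDual_symm_apply, D]

lemma D_resc {f : Euc n → ℝ} (hf : Sm f) (y : Euc n) {R : ℝ} (hR : 0 < R) (i : Fin n) :
    D i (fun x => R⁻¹ * f (y + R • x)) = fun x => D i f (y + R • x) := by
  rw [D_const_mul _ (hf.affine y R).diff, D_affine y R hf.diff]
  ext x; field_simp

/-- Solutions of linear growth have polynomially bounded first derivatives. -/
lemma Ent.mk' (hu : Sm u) (hv : Sm v) (hu0 : ∀ x, 0 < u x) (hv0 : ∀ x, 0 < v x)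
    (hlu : ∀ x, lap u x = u x * v x ^ 2) (hlv : ∀ x, lap v x = v x * u x ^ 2) {C : ℝ} (hC : 0 < C)
    (hgr : ∀ x, u x + v x ≤ C * (1 + ‖x‖)) : Ent u v := by
  have hest : ∀ z i, |D i u z| ≤ 1 + 2 * (2 * (C * (2 + ‖z‖)) ^ 2 + 17 + 2 * n) * (C * (2 + ‖z‖)) ^ 2 ∧
      |D i v z| ≤ 1 + 2 * (2 * (C * (2 + ‖z‖)) ^ 2 + 17 + 2 * n) * (C * (2 + ‖z‖)) ^ 2 := by
    intro z i
    have key := grad_estimate (κ := 1) (B := C * (2 + ‖z‖)) zero_le_one (hu.affine z 1)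
      (hv.affine z 1) (fun x => (hu0 _).le) (fun x => (hv0 _).le)
      (fun x => by simp only [lap_affine z 1 hu, hlu]; ring) (fun x => by simp only [lap_affine z 1 hv, hlv]; ring)
      (fun x hx => by
        have h1 := hgr (z + (1 : ℝ) • x)
        have h2 : ‖z + (1 : ℝ) • x‖ ≤ ‖z‖ + 1 := by
          rw [one_smul]
          refine (norm_add_le _ _).trans ?_
          rw [mem_closedBall_zero_iff] at hx; linarith
        have h3 : C * (1 + ‖z + (1 : ℝ) • x‖) ≤ C * (2 + ‖z‖) :=
          mul_le_mul_of_nonneg_left (by linarith) hC.le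
        have h4 := hu0 (z + (1 : ℝ) • x); have h5 := hv0 (z + (1 : ℝ) • x)
        constructor <;> linarith)
    simp only [D_affine z 1 hu.diff, D_affine z 1 hv.diff, smul_zero, add_zero, one_mul,
      mul_one] at key
    have n1 : D i u z ^ 2 ≤ ∑ i, D i u z ^ 2 :=
      Finset.single_le_sum (fun i _ => sq_nonneg (D i u z)) (Finset.mem_univ i)
    have n2 : D i v z ^ 2 ≤ ∑ i, D i v z ^ 2 :=
      Finset.single_le_sum (fun i _ => sq_nonneg (D i v z)) (Finset.mem_univ i)
    have n3 := sq_nonneg (D i u z); have n4 := sq_nonneg (D i v z)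
    have ab : ∀ t : ℝ, |t| ≤ 1 + t ^ 2 := fun t => by
      nlinarith [sq_abs t, sq_nonneg (|t| - 1), abs_nonneg t]
    constructor
    · exact (ab _).trans (by linarith)
    · exact (ab _).trans (by linarith)
  have hp : PG fun z : Euc n =>
      1 + 2 * (2 * (C * (2 + ‖z‖)) ^ 2 + 17 + 2 * n) * (C * (2 + ‖z‖)) ^ 2 := by fun_prop
  have hg : PG fun z : Euc n => C * (1 + ‖z‖) := by fun_prop
  refine ⟨⟨one_pos, hu, hv, hu0, hv0, fun x => by rw [hlu, one_mul], fun x => by rw [hlv, one_mul],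
    .of_le hu.continuous hg fun x => ?_, .of_le hv.continuous hg fun x => ?_,
    fun i => .of_le (D_smooth hu i).continuous hp fun x => (hest x i).1,
    fun i => .of_le (D_smooth hv i).continuous hp fun x => (hest x i).2⟩, C, hC, hgr⟩
  · rw [abs_of_pos (hu0 x)]; linarith [hgr x, hv0 x]
  · rw [abs_of_pos (hv0 x)]; linarith [hgr x, hu0 x]

end scales

/-! ### Flatness -/

section rescaled

variable {n : ℕ} {u v : Euc n → ℝ}

lemma xD_resc (hu : Sm u) (y : Euc n) {r : ℝ} (x : Euc n) :
    xD (fun x => r⁻¹ * u (y + r • x)) x = r⁻¹ * xD (fun x => u (y + r • x)) x := by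
  unfold xD
  rw [Finset.mul_sum]
  refine Finset.sum_congr rfl fun i _ => ?_
  rw [D_const_mul _ (hu.affine y r).diff]; ring

/-- Lower bound for the first moment of the rescaled solution, from the lower bound for its second
moment at a third of the scale. -/
lemma first_moment_ge {c A M : ℝ} (hs : Sol 1 u v) (hA : 0 < A) (hM : 1 ≤ M)
    (hMc : 9 * A ≤ M * c)
    (hrev : ∀ (z : Euc n) (r : ℝ), 0 ≤ r → Mn (fun x => u x ^ 2) z r ≤ A * (Mn u z (3 * r)) ^ 2)
    (y : Euc n) {r : ℝ} (hr : 0 < r) (hlow : c ≤ av u y (r / 3) / (r / 3) ^ 2) :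
    1 ≤ M * Ex fun x => r⁻¹ * u (y + r • x) := by
  have h1 := hrev y (r / 3) (by positivity)
  rw [show 3 * (r / 3) = r by ring] at h1
  rw [le_div_iff₀ (by positivity)] at hlow
  have h2 : c * (r / 3) ^ 2 ≤ A * Mn u y r ^ 2 := hlow.trans h1
  have h0 : 0 ≤ Mn u y r := Ex_nonneg fun x => (hs.fpos _).le
  have e1 : (Ex fun x => r⁻¹ * u (y + r • x)) = r⁻¹ * Mn u y r := Ex_const_mul _ _
  rw [e1, ← mul_assoc, mul_comm M, mul_assoc, inv_mul_eq_div, one_le_div hr]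
  refine le_of_sq_le_sq ?_ (by positivity)
  have h3 : 9 * A * r ^ 2 ≤ M * c * r ^ 2 := by gcongr
  have h4 : M * (c * (r / 3) ^ 2) ≤ M * (A * Mn u y r ^ 2) := by gcongr
  have h5 : A * r ^ 2 ≤ A * (M * Mn u y r ^ 2) := by nlinarith
  have h6 : r ^ 2 ≤ M * Mn u y r ^ 2 := le_of_mul_le_mul_left h5 hA
  refine h6.trans ?_
  rw [mul_pow]
  gcongr
  nlinarith

end rescaled

theorem flatness_of_rescalings (n : ℕ) (hn : 2 ≤ n)
    (u v : Euc n → ℝ)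
    (hu : ContDiff ℝ (⊤ : ℕ∞) u) (hv : ContDiff ℝ (⊤ : ℕ∞) v)
    (hupos : ∀ x, 0 < u x) (hvpos : ∀ x, 0 < v x)
    (hequ : ∀ x, lap u x = u x * v x ^ 2)
    (heqv : ∀ x, lap v x = v x * u x ^ 2)
    (C₀ : ℝ) (hC₀ : 0 < C₀)
    (hgrowth : ∀ x, u x + v x ≤ C₀ * (1 + ‖x‖)) :
    ∃ c₀ > (0 : ℝ), ∀ ε > (0 : ℝ), ∃ R₀ > (0 : ℝ), ∀ R ≥ R₀,
      ∀ x₀ : Euc n, u x₀ = v x₀ →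
        ∃ e : Euc n, c₀ ≤ ‖e‖ ∧
          ∫ x in ball (0 : Euc n) 1,
            ‖gradient (resc u x₀ R) x - gradient (resc v x₀ R) x - e‖ ^ 2 ≤ ε ^ 2 := by
  have h : Ent u v := Ent.mk' hu hv hupos hvpos hequ heqv hC₀ hgrowth
  obtain ⟨C, hC, hgrad⟩ := grad_bound n
  obtain ⟨ρ, c, C₁, hρ, hc, hC₁, hub⟩ := uniform_bounds h
  obtain ⟨A, hA, hrev⟩ := reverse_holder n 2 (by norm_num)
  set M := 1 + C₁ + 9 * A / c with hMdef
  have hMA : 0 < 9 * A / c := by positivity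
  have hM : 1 ≤ M := by linarith
  have hMc : 9 * A ≤ M * c := by
    have : 9 * A = 9 * A / c * c := by field_simp
    rw [this]; gcongr; linarith
  obtain ⟨K, hK, hflat⟩ := near_flat n C M hC hM
  obtain ⟨B, hB, hball⟩ := ball_le_Ex n
  refine ⟨1 / (2 * M), by positivity, fun ε hε => ?_⟩
  obtain ⟨τ, hτ, hτM, hτK, hτε⟩ : ∃ τ : ℝ, 0 < τ ∧ 6 * M * τ ≤ 1 ∧ K * τ ≤ 1 ∧
      B * (K * τ ^ 2) ≤ ε ^ 2 := by
    refine ⟨min (1 / (6 * M)) (min (1 / K) (ε ^ 2 / B)), by positivity, ?_, ?_, ?_⟩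
    · rw [← le_div_iff₀' (by positivity)]; exact min_le_left _ _
    · rw [← le_div_iff₀' (by positivity)]; exact (min_le_right _ _).trans (min_le_left _ _)
    · set τ := min (1 / (6 * M)) (min (1 / K) (ε ^ 2 / B))
      have t0 : 0 < τ := by positivity
      have t1 : K * τ ≤ 1 := by
        rw [← le_div_iff₀' (by positivity)]; exact (min_le_right _ _).trans (min_le_left _ _)
      have t2 : B * τ ≤ ε ^ 2 := by
        rw [← le_div_iff₀' (by positivity)]; exact (min_le_right _ _).trans (min_le_right _ _)
      have : B * (K * τ ^ 2) = (K * τ) * (B * τ) := by ring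
      nlinarith [mul_pos hB t0]
  obtain ⟨R₁, hR₁, hgood⟩ := good_scale h hρ hC₁ (fun y hy r hr => (hub y hy r hr).2.2)
    (η := τ ^ 4) (by positivity)
  refine ⟨max R₁ (max (3 * ρ) (1 / τ)), lt_max_of_lt_right (lt_max_of_lt_right (by positivity)),
    fun R hR y hy => ?_⟩
  have hRR₁ : R₁ ≤ R := (le_max_left _ _).trans hR
  have hRρ : 3 * ρ ≤ R := (le_max_left _ _).trans ((le_max_right _ _).trans hR)
  have hRτ : 1 / τ ≤ R := (le_max_right _ _).trans ((le_max_right _ _).trans hR)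
  have hR0 : 0 < R := by linarith
  obtain ⟨r, hRr, hr2, hal, hph⟩ := hgood y hy R hRR₁
  have hr : 0 < r := by linarith
  have hg := h.gsol (hgrad u v h) y (inv_pos.2 hr) hr
  have hκ : (r / r⁻¹) ^ 2 = r ^ 4 := by field_simp
  rw [hκ] at hg
  obtain ⟨_, _, hHH⟩ := hub y hy r (by linarith)
  obtain ⟨hlu, hlv, _⟩ := hub y hy (r / 3) (by linarith)
  have sq_av : ∀ w : Euc n → ℝ, (Ex fun x => (r⁻¹ * w (y + r • x)) ^ 2) = av w y r / r ^ 2 := by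
    intro w
    simp only [mul_pow, Ex_const_mul]
    rw [inv_pow, inv_mul_eq_div]; rfl
  have hav : ∀ w : Euc n → ℝ, 0 ≤ av w y r / r ^ 2 := fun w =>
    div_nonneg (Ex_nonneg fun _ => sq_nonneg _) (sq_nonneg _)
  rw [HH, add_div] at hHH
  have sq_dev : ∀ w : Euc n → ℝ, Sm w →
      (Ex fun x => (xD (fun x => r⁻¹ * w (y + r • x)) x - r⁻¹ * w (y + r • x)) ^ 2) =
        (Ex fun x => (xD (fun x => w (y + r • x)) x - w (y + r • x)) ^ 2) / r ^ 2 := by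
    intro w hw
    simp only [xD_resc hw, ← mul_sub, mul_pow, Ex_const_mul]
    rw [inv_pow, inv_mul_eq_div]
  have hdev : ∀ w : Euc n → ℝ,
      0 ≤ (Ex fun x => (xD (fun x => w (y + r • x)) x - w (y + r • x)) ^ 2) / r ^ 2 := fun w =>
    div_nonneg (Ex_nonneg fun _ => sq_nonneg _) (sq_nonneg _)
  rw [al_eq h.sol y hr, add_div] at hal
  have near : Near C M τ (r ^ 4) (fun x => r⁻¹ * u (y + r • x)) (fun x => r⁻¹ * v (y + r • x)) := by
    refine ⟨hg, hC, hτ, hτM, hM, ?_, ?_, ?_, ?_, ?_, ?_, ?_, ?_⟩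
    · rw [sq_av]; linarith [hav v]
    · rw [sq_av]; linarith [hav u]
    · exact first_moment_ge h.sol hA hM hMc (hrev u h.sol.sf h.sol.pf h.sol.pdf h.sol.plf
        (fun x => by rw [h.sol.lf]; have := hupos x; positivity) fun x => (hupos x).le) y hr hlu
    · exact first_moment_ge h.sol.symm hA hM hMc (hrev v h.sol.sg h.sol.pg h.sol.pdg h.sol.plg
        (fun x => by rw [h.sol.lg]; have := hvpos x; positivity) fun x => (hvpos x).le) y hr hlv
    · rw [sq_dev u hu]; linarith [hdev v]
    · rw [sq_dev v hv]; linarith [hdev u]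
    · refine le_of_eq_of_le ?_ hph
      have : (fun x => (r⁻¹ * u (y + r • x)) ^ 2 * (r⁻¹ * v (y + r • x)) ^ 2) =
          fun x => (r⁻¹) ^ 4 * (u (y + r • x) ^ 2 * v (y + r • x) ^ 2) := by ext x; ring
      rw [this, Ex_const_mul, ph, Mn]
      field_simp
    · have : 1 / r ≤ τ := by
        rw [div_le_iff₀ hr]
        rw [div_le_iff₀ hτ] at hRτ
        nlinarith
      calc 1 / r ^ 4 = (1 / r) ^ 4 := by rw [div_pow, one_pow]
        _ ≤ τ ^ 4 := by gcongr
  obtain ⟨e, he, he0⟩ := hflat τ _ _ _ near hτK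
  refine ⟨e, ?_, ?_⟩
  · rw [div_le_iff₀ (by positivity)]
    have : 0 ≤ ‖e‖ * (2 * M) := by positivity
    nlinarith
  · have hF : PG fun x => ∑ i, (D i (fun x => r⁻¹ * u (y + r • x)) x -
        D i (fun x => r⁻¹ * v (y + r • x)) x - e i) ^ 2 := by
      have d1 := hg.pdf; have d2 := hg.pdg
      fun_prop
    have key := hball _ hF (fun x => Finset.sum_nonneg fun _ _ => sq_nonneg _) (R / r)
      (by rw [le_div_iff₀ hr]; linarith) (by rw [div_le_one hr]; exact hRr)
    refine le_trans (le_of_eq ?_) (key.trans ((mul_le_mul_of_nonneg_left he hB.le).trans hτε))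
    refine integral_congr_ae (.of_forall fun x => ?_)
    have hx : r • (R / r) • x = R • x := by rw [smul_smul, mul_div_cancel₀ _ hr.ne']
    simp only [D_resc hu y hr, D_resc hv y hr, hx]
    rw [norm_sq_eq]
    refine Finset.sum_congr rfl fun i _ => ?_
    have g1 : gradient (resc u y R) x i = D i u (y + R • x) := by
      rw [gradient_apply_eq]; exact congrFun (D_resc hu y hR0 i) x
    have g2 : gradient (resc v y R) x i = D i v (y + R • x) := by
      rw [gradient_apply_eq]; exact congrFun (D_resc hv y hR0 i) x
    simp only [PiLp.sub_apply, g1, g2]
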